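/- arXiv:1605.02323 — 2 statements merged into one kernel-verified Lean document; each statement's English description precedes it below -/
import Mathlib

section
/- For every integer n ≥ 1, there is a group isomorphism from the presented group with generators s_1, …, s_{n−1}, r_1, …, r_{n−1}, t_1, …, t_n and relations: s_i s_j = s_j s_i for |i−j| > 1; s_i s_{i+1} s_i = s_{i+1} s_i s_{i+1}; r_i r_j = r_j r_i for |i−j| > 1; r_i r_{i+1} r_i = r_{i+1} r_i r_{i+1}; r_i² = 1; r_i s_j = s_j r_i for |i−j| > 1; r_{i+1} r_i s_{i+1} = s_i r_{i+1} r_i; s_{i+1} s_i r_{i+1} = r_i s_{i+1} s_i; t_i t_j = t_j t_i for i ≠ j; t_i² = 1; s_i t_j = t_j s_i for |i−j| > 1; r_i t_j = t_j r_i for |i−j| > 1; t_i r_i = r_i t_{i+1}; t_i s_i = s_i t_{i+1}; t_{i+1} s_i = r_i s_i⁻¹ r_i t_i, onto the subgroup PC*_n of Aut(F_n) consisting of all automorphisms α such that α(x_i) = w_i⁻¹ x_{π(i)}^{ε_i} w_i for all i, for some permutation π, signs ε_i ∈ {1, −1}, and words w_i ∈ F_n; this isomorphism sends s_i to σ_i,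 r_i to ρ_i, and t_i to τ_i. -/
/-!
Write `PC*` for the group of automorphisms of a free group that permute the generators up to
inversion and conjugation. Both injectivity and surjectivity of the homomorphism from the presented
group `G` are proved by peak reduction (`peak_reduction`), in the style of Collins and McCool.

*Generators.* In `G` the `r_k` generate a copy of the symmetric group: since the `r_k` satisfy
Coxeter's relations and map to the adjacent transpositions, there is a section `sec` of the
projection to permutations (`exists_sec`). Conjugating `s_k r_k`, which acts as conjugation of `x_k`
by `x_{k+1}`, by `sec p` gives elements `a i j` (`i ≠ j`) acting as conjugation of `x_i` by `x_j`
alone. They are well defined because the mixed relations show that `s_k r_k` depends only on the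
pair of indices (`Rels.exists_a`), and they satisfy McCool's relations: `a i j` commutes with
`a k l` and with `a k j`, and `a i j * a k j` commutes with `a i k` (`Rels.a_comm`,
`Rels.a_comm'`). The `t_i` commute with the `a i j`, except that `t_j` inverts `a i j`
(`Rels.t_a`). So `G` is generated by the `a i j` and the subgroup of signed permutations, which
normalizes the set of the `a i j` and their inverses.

*Peaks.* The complexity `nu` of an element of `PC*` is the total length of the images of the
generators. Multiplying on the right by `a i j` or its inverse conjugates the `i`-th image by the
`j`-th or its inverse, and this always changes the length: writing the images as conjugates
`w_k⁻¹ c_k w_k` of letters in normal form, it shortens exactly when `w_i` ends in a cancelling letter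
followed by `w_j` (`NF.lt_iff`). If no such move shortens, all images are letters
(`reducing_or_letters`), since otherwise they would not generate the free group; so the automorphism
is a signed permutation. This gives surjectivity (`WeldedAction.surjective`). If two moves shorten
the same tuple, comparing the suffixes involved shows that they either have independent indices, or
form a chain `i, j, l` in which `w_i` ends in `w_j` and `w_j` in `w_l`; in both cases McCool's
relations join the two moves by a path staying below the peak (`WeldedAction.join`). Hence every
product of generators acting trivially can be lowered, inside `G`, to a signed permutation acting
trivially, which is `1` (`WeldedAction.faithful`).
-/


namespace LoopBraidGroups

/-- The `i`-th generator `x_i` of the free group of rank `n`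
(with junk value `1` when `i ≥ n`); indices are `0`-based. -/
def xg (n i : ℕ) : FreeGroup (Fin n) :=
  if h : i < n then FreeGroup.of (⟨i, h⟩ : Fin n) else 1

/-- `IsSigma n i s` : `s` is the automorphism `σ_i` of the free group of rank `n`. -/
def IsSigma (n i : ℕ) (s : MulAut (FreeGroup (Fin n))) : Prop :=
  s (xg n i) = xg n (i + 1) ∧
    s (xg n (i + 1)) = (xg n (i + 1))⁻¹ * xg n i * xg n (i + 1) ∧
    ∀ j, j < n → j ≠ i → j ≠ i + 1 → s (xg n j) = xg n j

/-- `IsRho n i r` : `r` is the automorphism `ρ_i`. -/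
def IsRho (n i : ℕ) (r : MulAut (FreeGroup (Fin n))) : Prop :=
  r (xg n i) = xg n (i + 1) ∧ r (xg n (i + 1)) = xg n i ∧
    ∀ j, j < n → j ≠ i → j ≠ i + 1 → r (xg n j) = xg n j

/-- `IsTau n i t` : `t` is the automorphism `τ_i`. -/
def IsTau (n i : ℕ) (t : MulAut (FreeGroup (Fin n))) : Prop :=
  t (xg n i) = (xg n i)⁻¹ ∧ ∀ j, j < n → j ≠ i → t (xg n j) = xg n j

/-- The set `PC*_n` of automorphisms `α` with `α(x_i) = w_i⁻¹ x_{π(i)}^{ε_i} w_i`. -/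
def PCStarSet (n : ℕ) : Set (MulAut (FreeGroup (Fin n))) :=
  {α | ∃ (π : Equiv.Perm (Fin n)) (ε : Fin n → ℤ) (w : Fin n → FreeGroup (Fin n)),
      (∀ i, ε i = 1 ∨ ε i = -1) ∧
      ∀ i : Fin n, α (FreeGroup.of i) = (w i)⁻¹ * FreeGroup.of (π i) ^ ε i * w i}

/-- The abstract generator `s_i` of the extended welded braid group presentation. -/
def eS (n : ℕ) (i : Fin (n - 1)) : FreeGroup (Fin (n - 1) ⊕ Fin (n - 1) ⊕ Fin n) :=
  FreeGroup.of (Sum.inl i)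

/-- The abstract generator `r_i` of the extended welded braid group presentation. -/
def eR (n : ℕ) (i : Fin (n - 1)) : FreeGroup (Fin (n - 1) ⊕ Fin (n - 1) ⊕ Fin n) :=
  FreeGroup.of (Sum.inr (Sum.inl i))

/-- The abstract generator `t_i` of the extended welded braid group presentation. -/
def eT (n : ℕ) (i : Fin n) : FreeGroup (Fin (n - 1) ⊕ Fin (n - 1) ⊕ Fin n) :=
  FreeGroup.of (Sum.inr (Sum.inr i))

/-- The relators of the extended welded braid group presentation (relators written as
`LHS * RHS⁻¹`; indices `0`-based: `s_i`, `r_i` for `0 ≤ i ≤ n - 2` and `t_i` for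
`0 ≤ i ≤ n - 1`). -/
def extWeldedRels (n : ℕ) : Set (FreeGroup (Fin (n - 1) ⊕ Fin (n - 1) ⊕ Fin n)) :=
  {z | (∃ i j : Fin (n - 1), ((i : ℕ) + 1 < (j : ℕ) ∨ (j : ℕ) + 1 < (i : ℕ)) ∧
          z = eS n i * eS n j * (eS n j * eS n i)⁻¹) ∨
       (∃ i j : Fin (n - 1), (j : ℕ) = (i : ℕ) + 1 ∧
          z = eS n i * eS n j * eS n i * (eS n j * eS n i * eS n j)⁻¹) ∨
       (∃ i j : Fin (n - 1), ((i : ℕ) + 1 < (j : ℕ) ∨ (j : ℕ) + 1 < (i : ℕ)) ∧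
          z = eR n i * eR n j * (eR n j * eR n i)⁻¹) ∨
       (∃ i j : Fin (n - 1), (j : ℕ) = (i : ℕ) + 1 ∧
          z = eR n i * eR n j * eR n i * (eR n j * eR n i * eR n j)⁻¹) ∨
       (∃ i : Fin (n - 1), z = eR n i * eR n i) ∨
       (∃ i j : Fin (n - 1), ((i : ℕ) + 1 < (j : ℕ) ∨ (j : ℕ) + 1 < (i : ℕ)) ∧
          z = eR n i * eS n j * (eS n j * eR n i)⁻¹) ∨
       (∃ i j : Fin (n - 1), (j : ℕ) = (i : ℕ) + 1 ∧
          z = eR n j * eR n i * eS n j * (eS n i * eR n j * eR n i)⁻¹) ∨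
       (∃ i j : Fin (n - 1), (j : ℕ) = (i : ℕ) + 1 ∧
          z = eS n j * eS n i * eR n j * (eR n i * eS n j * eS n i)⁻¹) ∨
       (∃ a b : Fin n, a ≠ b ∧ z = eT n a * eT n b * (eT n b * eT n a)⁻¹) ∨
       (∃ a : Fin n, z = eT n a * eT n a) ∨
       (∃ (i : Fin (n - 1)) (a : Fin n), ((i : ℕ) + 1 < (a : ℕ) ∨ (a : ℕ) + 1 < (i : ℕ)) ∧
          z = eS n i * eT n a * (eT n a * eS n i)⁻¹) ∨
       (∃ (i : Fin (n - 1)) (a : Fin n), ((i : ℕ) + 1 < (a : ℕ) ∨ (a : ℕ) + 1 < (i : ℕ)) ∧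
          z = eR n i * eT n a * (eT n a * eR n i)⁻¹) ∨
       (∃ (i : Fin (n - 1)) (a b : Fin n), (a : ℕ) = (i : ℕ) ∧ (b : ℕ) = (i : ℕ) + 1 ∧
          z = eT n a * eR n i * (eR n i * eT n b)⁻¹) ∨
       (∃ (i : Fin (n - 1)) (a b : Fin n), (a : ℕ) = (i : ℕ) ∧ (b : ℕ) = (i : ℕ) + 1 ∧
          z = eT n a * eS n i * (eS n i * eT n b)⁻¹) ∨
       (∃ (i : Fin (n - 1)) (a b : Fin n), (a : ℕ) = (i : ℕ) ∧ (b : ℕ) = (i : ℕ) + 1 ∧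
          z = eT n b * eS n i * (eR n i * (eS n i)⁻¹ * eR n i * eT n a)⁻¹)}

/-! ### Peak reduction -/

section PeakReduction

variable {G A : Type*} [Group G] [Group A]

/-- `Desc φ μ M B g`: right multiplication by finitely many elements of `M`, each of which strictly
lowers the complexity `μ ∘ φ`, brings `g` into the subgroup `B`. -/
inductive Desc (φ : G →* A) (μ : A → ℕ) (M : Set G) (B : Subgroup G) : G → Prop
  | base {b : G} : b ∈ B → Desc φ μ M B b
  | step {g m : G} : m ∈ M → μ (φ (g * m)) < μ (φ g) → Desc φ μ M B (g * m) → Desc φ μ M B g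

/-- One move by an element of `M`, both ends having complexity less than `N`. -/
def LowStep (φ : G →* A) (μ : A → ℕ) (M : Set G) (N : ℕ) (x y : G) : Prop :=
  ∃ m ∈ M, y = x * m ∧ μ (φ x) < N ∧ μ (φ y) < N

/-- Peak reduction: if any two complexity-lowering moves from the same element can be joined by
moves below the peak, then a homomorphism that is injective on the subgroup `B` of elements of
minimal complexity is injective on everything generated by `B` and the moves. -/
theorem peak_reduction (φ : G →* A) (μ : A → ℕ) (M : Set G) (B : Subgroup G)
    (hinv : ∀ m ∈ M, m⁻¹ ∈ M)
    (hne : ∀ g, ∀ m ∈ M, μ (φ (g * m)) ≠ μ (φ g))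
    (hconj : ∀ b ∈ B, ∀ m ∈ M, b⁻¹ * m * b ∈ M)
    (hμB : ∀ g, ∀ b ∈ B, μ (φ (g * b)) = μ (φ g))
    (hred : ∀ g, (∃ m ∈ M, μ (φ (g * m)) < μ (φ g)) ∨ ∃ b ∈ B, φ g = φ b)
    (hB : ∀ b ∈ B, ∀ m ∈ M, ¬ μ (φ (b * m)) < μ (φ b))
    (hdia : ∀ g, ∀ m ∈ M, ∀ m' ∈ M, μ (φ (g * m)) < μ (φ g) → μ (φ (g * m')) < μ (φ g) →
      ∃ z, Relation.ReflTransGen (LowStep φ μ M (μ (φ g))) (g * m) z ∧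
        Relation.ReflTransGen (LowStep φ μ M (μ (φ g))) (g * m') z)
    (hinj : ∀ b ∈ B, φ b = 1 → b = 1) :
    ∀ g ∈ Subgroup.closure (M ∪ B), φ g = 1 → g = 1 := by
  have hex : ∀ N g, μ (φ g) = N → ∃ h, φ h = φ g ∧ Desc φ μ M B h := by
    intro N
    induction N using Nat.strong_induction_on with
    | _ N ih =>
      intro g hg
      rcases hred g with ⟨m, hm, hlt⟩ | ⟨b, hb, hgb⟩
      · obtain ⟨h, hh, hd⟩ := ih _ (hg ▸ hlt) (g * m) rfl
        have e : φ (h * m⁻¹) = φ g := by rw [map_mul, hh]; simp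
        refine ⟨h * m⁻¹, e, Desc.step hm ?_ (by simpa using hd)⟩
        rw [e]; simpa [hh] using hlt
      · exact ⟨b, hgb.symm, Desc.base hb⟩
  -- multiplying by a single move preserves `Desc` as soon as uniqueness is known at that level
  have hstep : ∀ g m, m ∈ M → Desc φ μ M B g →
      (∀ h, φ h = φ g → Desc φ μ M B h → h = g) → Desc φ μ M B (g * m) := by
    intro g m hm hd hu
    rcases lt_or_gt_of_ne (hne g m hm) with hlt | hgt
    · obtain ⟨h, hh, hd'⟩ := hex _ (g * m) rfl
      have e : φ (h * m⁻¹) = φ g := by rw [map_mul, hh]; simp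
      have : h * m⁻¹ = g := hu _ e (Desc.step hm (by rw [e]; simpa [hh] using hlt)
        (by simpa using hd'))
      rw [← this]; simpa using hd'
    · exact Desc.step (hinv m hm) (by simpa using hgt) (by simpa using hd)
  have huniq : ∀ N g g', μ (φ g) = N → φ g = φ g' → Desc φ μ M B g → Desc φ μ M B g' →
      g = g' := by
    intro N
    induction N using Nat.strong_induction_on with
    | _ N ih =>
      have hpath : ∀ x z, Relation.ReflTransGen (LowStep φ μ M N) x z →
          ∀ y, Desc φ μ M B y → φ y = φ x → Desc φ μ M B (y * x⁻¹ * z) := by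
        intro x z h
        induction h with
        | refl => intro y hy _; simpa using hy
        | tail _ hs ihp =>
          intro y hy hyx
          obtain ⟨m, hm, rfl, hlt, _⟩ := hs
          have h1 := ihp y hy hyx
          rw [← mul_assoc]
          refine hstep _ m hm h1 fun h hh hd => ih _ ?_ h _ rfl hh hd h1
          rw [hh, map_mul, map_mul, map_inv, hyx]; simpa using hlt
      intro g g' hN hφ hd hd'
      cases hd with
      | base hb =>
        cases hd' with
        | base hb' =>
          have := hinj (g⁻¹ * g') (B.mul_mem (B.inv_mem hb) hb') (by simp [hφ])
          exact inv_mul_eq_one.mp this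
        | @step _ m hm hlt _ =>
          refine absurd ?_ (hB g hb m hm)
          simpa [hφ] using hlt
      | @step _ m hm hlt hdm =>
        cases hd' with
        | base hb' =>
          refine absurd ?_ (hB g' hb' m hm)
          simpa [hφ] using hlt
        | @step _ m' hm' hlt' hdm' =>
          obtain ⟨z, hz, hz'⟩ := hdia g m hm m' hm' hlt (by simpa [hφ] using hlt')
          rw [hN] at hz hz'
          have hzN : μ (φ z) < N := by
            rcases Relation.ReflTransGen.cases_tail hz with h | ⟨c, _, _, _, _, _, h⟩
            · rw [h, ← hN]; exact hlt
            · exact h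
          have h1 := hpath _ _ hz (g * m) hdm rfl
          have h2 := hpath _ _ hz' (g' * m') hdm' (by simp [hφ])
          have h3 := ih _ hzN z (g' * m' * (g * m')⁻¹ * z) rfl (by simp [hφ])
            (by simpa using h1) h2
          have h4 : g' * m' * (g * m')⁻¹ = 1 := by
            have := congrArg (· * z⁻¹) h3
            simpa [mul_assoc] using this.symm
          have h5 : g' * g⁻¹ = 1 := by rw [← h4]; group
          exact (mul_inv_eq_one.mp h5).symm
  have hmM : ∀ g m, m ∈ M → Desc φ μ M B g → Desc φ μ M B (g * m) := fun g m hm hd =>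
    hstep g m hm hd fun h hh hd' => huniq _ h g rfl hh hd' hd
  have hmB : ∀ b ∈ B, ∀ g, Desc φ μ M B g → Desc φ μ M B (g * b) := by
    intro b hb g hd
    induction hd with
    | base h => exact Desc.base (B.mul_mem h hb)
    | @step g m hm hlt _ ih =>
      have e : g * b * (b⁻¹ * m * b) = g * m * b := by group
      refine Desc.step (hconj b hb m hm) ?_ (by rw [e]; exact ih)
      rw [e, hμB _ b hb, hμB _ b hb]; exact hlt
  intro g hg h1
  have key : ∀ g ∈ Subgroup.closure (M ∪ B), ∀ h, Desc φ μ M B h → Desc φ μ M B (h * g) := by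
    intro g hg
    induction hg using Subgroup.closure_induction'' with
    | one => intro h hd; simpa using hd
    | mem x hx =>
      intro h hd
      rcases hx with hx | hx
      · exact hmM h x hx hd
      · exact hmB x hx h hd
    | inv_mem x hx =>
      intro h hd
      rcases hx with hx | hx
      · exact hmM h _ (hinv x hx) hd
      · exact hmB _ (B.inv_mem hx) h hd
    | mul x y _ _ hx hy => intro h hd; rw [← mul_assoc]; exact hy _ (hx _ hd)
  have hd1 : Desc φ μ M B 1 := Desc.base B.one_mem
  exact huniq _ g 1 rfl (by simpa using h1) (by simpa using key g hg 1 hd1) hd1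

end PeakReduction

/-! ### The relations, and the symmetric group inside a group satisfying them -/

/-- The relations of the presentation, for elements `s i`, `r i`, `t a` of an arbitrary group; the
rank of the free group is written `m + 1`. The last relation, `t_{i+1} s_i = r_i s_i⁻¹ r_i t_i`, is
stated in an equivalent form without inverses. -/
structure Rels {m : ℕ} {G : Type*} [Group G] (s r : Fin m → G) (t : Fin (m + 1) → G) : Prop where
  ss : ∀ i j : Fin m, ((i : ℕ) + 1 < j ∨ (j : ℕ) + 1 < i) → s i * s j = s j * s i
  sss : ∀ i j : Fin m, (j : ℕ) = i + 1 → s i * s j * s i = s j * s i * s j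
  rr : ∀ i j : Fin m, ((i : ℕ) + 1 < j ∨ (j : ℕ) + 1 < i) → r i * r j = r j * r i
  rrr : ∀ i j : Fin m, (j : ℕ) = i + 1 → r i * r j * r i = r j * r i * r j
  r2 : ∀ i, r i * r i = 1
  rs : ∀ i j : Fin m, ((i : ℕ) + 1 < j ∨ (j : ℕ) + 1 < i) → r i * s j = s j * r i
  rrs : ∀ i j : Fin m, (j : ℕ) = i + 1 → r j * r i * s j = s i * r j * r i
  ssr : ∀ i j : Fin m, (j : ℕ) = i + 1 → s j * s i * r j = r i * s j * s i
  tt : ∀ a b, a ≠ b → t a * t b = t b * t a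
  t2 : ∀ a, t a * t a = 1
  st : ∀ (i : Fin m) (a : Fin (m + 1)), ((i : ℕ) + 1 < a ∨ (a : ℕ) + 1 < i) →
    s i * t a = t a * s i
  rt : ∀ (i : Fin m) (a : Fin (m + 1)), ((i : ℕ) + 1 < a ∨ (a : ℕ) + 1 < i) →
    r i * t a = t a * r i
  tr : ∀ i : Fin m, t i.castSucc * r i = r i * t i.succ
  ts : ∀ i : Fin m, t i.castSucc * s i = s i * t i.succ
  tsr : ∀ i : Fin m, s i * r i * t i.succ * s i = r i * t i.castSucc

/-- The adjacent transposition `(k, k + 1)`. -/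
def adj {m : ℕ} (k : Fin m) : Equiv.Perm (Fin (m + 1)) := Equiv.swap k.castSucc k.succ

lemma adj_castSucc {m : ℕ} (k : Fin m) : adj k k.castSucc = k.succ := Equiv.swap_apply_left _ _

lemma adj_succ {m : ℕ} (k : Fin m) : adj k k.succ = k.castSucc := Equiv.swap_apply_right _ _

lemma adj_of_ne {m : ℕ} {k : Fin m} {a : Fin (m + 1)} (h : a ≠ k.castSucc) (h' : a ≠ k.succ) :
    adj k a = a := Equiv.swap_apply_of_ne_of_ne h h'

lemma adj_adj {m : ℕ} (k : Fin m) (a : Fin (m + 1)) : adj k (adj k a) = a :=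
  Equiv.swap_apply_self _ _ _

lemma adj_mul_adj {m : ℕ} (k : Fin m) : adj k * adj k = 1 := Equiv.swap_mul_self _ _

lemma adj_val {m : ℕ} (k : Fin m) (a : Fin (m + 1)) :
    ((adj k a : Fin (m + 1)) : ℕ) = if (a : ℕ) = k then (k : ℕ) + 1 else
      if (a : ℕ) = k + 1 then (k : ℕ) else a := by
  unfold adj
  rw [Equiv.swap_apply_def]
  simp only [Fin.ext_iff, Fin.val_castSucc, Fin.val_succ]
  split_ifs <;> simp

/-- The symmetric group satisfies the relations, with `s_i` and `r_i` both the `i`-th adjacent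
transposition and `t_i` trivial. -/
lemma rels_perm (m : ℕ) : Rels (m := m) adj adj (fun _ => (1 : Equiv.Perm (Fin (m + 1)))) := by
  have far : ∀ i j : Fin m, ((i : ℕ) + 1 < j ∨ (j : ℕ) + 1 < i) → adj i * adj j = adj j * adj i := by
    intro i j h
    ext a
    simp only [Equiv.Perm.mul_apply, adj_val]
    grind
  have near : ∀ i j : Fin m, (j : ℕ) = i + 1 → adj i * adj j * adj i = adj j * adj i * adj j := by
    intro i j h
    ext a
    simp only [Equiv.Perm.mul_apply, adj_val]
    grind
  refine ⟨far, near, far, near, adj_mul_adj, far, ?_, ?_, by simp, by simp, by simp, by simp,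
    by simp, by simp, ?_⟩
  · intro i j h; exact (near i j h).symm
  · intro i j h; exact (near i j h).symm
  · intro i; simp [adj_mul_adj]

/-- A complexity for permutations, minimal at the identity, that goes down when a descent is
removed. -/
def permW {m : ℕ} (π : Equiv.Perm (Fin (m + 1))) : ℕ :=
  ∑ i : Fin (m + 1), (i : ℕ) * ((π i).rev : ℕ)

lemma permW_adj {m : ℕ} (π : Equiv.Perm (Fin (m + 1))) (k : Fin m) :
    (permW (π * adj k) : ℤ) = permW π + (π k.succ : ℕ) - (π k.castSucc : ℕ) := by
  have h1 : permW (π * adj k) = ∑ i : Fin (m + 1), (adj k i : ℕ) * ((π i).rev : ℕ) := by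
    unfold permW
    rw [← Equiv.sum_comp (adj k)]
    simp [adj_adj]
  have h2 : ∀ i : Fin (m + 1), ((adj k i : ℕ) : ℤ) * ((π i).rev : ℕ) =
      (i : ℕ) * ((π i).rev : ℕ) + ((if i = k.castSucc then (((π i).rev : ℕ) : ℤ) else 0)
        - (if i = k.succ then (((π i).rev : ℕ) : ℤ) else 0)) := by
    intro i
    rw [adj_val]
    simp only [Fin.ext_iff, Fin.val_castSucc, Fin.val_succ]
    split_ifs with h h' h'
    · omega
    · rw [h]; push_cast; ring
    · rw [h']; push_cast; ring
    · ring
  rw [h1]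
  push_cast
  rw [Finset.sum_congr rfl fun i _ => h2 i, Finset.sum_add_distrib, Finset.sum_sub_distrib]
  simp only [Finset.sum_ite_eq', Finset.mem_univ, if_true, Fin.val_rev]
  unfold permW
  push_cast [Fin.val_rev]
  have := (π k.castSucc).isLt
  have := (π k.succ).isLt
  omega

lemma permW_adj_lt {m : ℕ} {π : Equiv.Perm (Fin (m + 1))} {k : Fin m} :
    permW (π * adj k) < permW π ↔ π k.succ < π k.castSucc := by
  have := permW_adj π k
  rw [Fin.lt_def]
  omega

lemma permW_adj_ne {m : ℕ} (π : Equiv.Perm (Fin (m + 1))) (k : Fin m) :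
    permW (π * adj k) ≠ permW π := by
  have := permW_adj π k
  have h : (π k.succ : ℕ) ≠ (π k.castSucc : ℕ) := by
    rw [Ne, ← Fin.ext_iff, π.injective.eq_iff, Fin.ext_iff]
    simp
  omega

lemma exists_descent {m : ℕ} {π : Equiv.Perm (Fin (m + 1))} (h : π ≠ 1) :
    ∃ k : Fin m, π k.succ < π k.castSucc := by
  by_contra! hk
  apply h
  have hm : StrictMono π := Fin.strictMono_iff_lt_succ.2 fun k =>
    lt_of_le_of_ne (hk k) fun e => by
      have := π.injective e
      simp [Fin.ext_iff] at this
  ext a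
  have := StrictMono.range_inj (f := π) (g := id) hm strictMono_id
  simp only [Equiv.range_eq_univ, Set.range_id, true_iff] at this
  simp [this]

lemma perm_induction {m : ℕ} {p : Equiv.Perm (Fin (m + 1)) → Prop} (one : p 1)
    (mul : ∀ k π, p π → p (adj k * π)) (π : Equiv.Perm (Fin (m + 1))) : p π := by
  have h : π ∈ Submonoid.closure (Set.range fun i : Fin m => Equiv.swap i.castSucc i.succ) := by
    rw [Equiv.Perm.mclosure_swap_castSucc_succ]; trivial
  induction h using Submonoid.closure_induction_left with
  | one => exact one
  | mul_left x hx y _ ih => obtain ⟨k, rfl⟩ := hx; exact mul k _ ih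

section Sym

variable {m : ℕ} {G : Type*} [Group G] {s r : Fin m → G} {t : Fin (m + 1) → G}

/-- The elements `r_i` generate a copy of the symmetric group: peak reduction along descents. -/
lemma perm_inj (H : Rels s r t) (P : G →* Equiv.Perm (Fin (m + 1))) (hP : ∀ k, P (r k) = adj k) :
    ∀ g ∈ Subgroup.closure (Set.range r), P g = 1 → g = 1 := by
  have hrinv : ∀ k, (r k)⁻¹ = r k := fun k => inv_eq_of_mul_eq_one_left (H.r2 k)
  have main := peak_reduction P permW (Set.range r) ⊥ ?_ ?_ ?_ ?_ ?_ ?_ ?_ ?_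
  · intro g hg
    exact main g (Subgroup.closure_mono Set.subset_union_left hg)
  · rintro _ ⟨k, rfl⟩; exact ⟨k, (hrinv k).symm⟩
  · rintro g _ ⟨k, rfl⟩
    rw [map_mul, hP]; exact permW_adj_ne _ _
  · rintro b hb x hx
    rw [Subgroup.mem_bot] at hb
    simpa [hb] using hx
  · rintro g b hb
    rw [Subgroup.mem_bot] at hb
    simp [hb]
  · intro g
    by_cases h : P g = 1
    · exact Or.inr ⟨1, rfl, by simpa using h⟩
    · obtain ⟨k, hk⟩ := exists_descent h
      exact Or.inl ⟨_, ⟨k, rfl⟩, by rw [map_mul, hP]; exact permW_adj_lt.2 hk⟩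
  · rintro b hb _ ⟨k, rfl⟩
    rw [Subgroup.mem_bot] at hb
    rw [map_mul, hP, permW_adj_lt, hb]
    simp [Fin.lt_def]
  · -- the diamond, for `i < j` in either order
    have key : ∀ g (i j : Fin m), (i : ℕ) < j → P g i.succ < P g i.castSucc →
        P g j.succ < P g j.castSucc →
        ∃ z, Relation.ReflTransGen (LowStep P permW (Set.range r) (permW (P g))) (g * r i) z ∧
          Relation.ReflTransGen (LowStep P permW (Set.range r) (permW (P g))) (g * r j) z := by
      intro g i j hij hi hj
      rcases Nat.lt_or_ge (i + 1) j with hlt | hge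
      · have c1 : permW (P (g * r i)) < permW (P g) := by
          rw [map_mul, hP]; exact permW_adj_lt.2 hi
        have c2 : permW (P (g * r j)) < permW (P g) := by
          rw [map_mul, hP]; exact permW_adj_lt.2 hj
        have c3 : permW (P (g * r i * r j)) < permW (P (g * r i)) := by
          rw [map_mul _ _ (r j), map_mul, hP, hP, permW_adj_lt, Equiv.Perm.mul_apply,
            Equiv.Perm.mul_apply, adj_of_ne, adj_of_ne] <;>
          first
          | exact hj
          | (simp [Fin.ext_iff]; omega)
        have e : g * r j * r i = g * r i * r j := by
          rw [mul_assoc, mul_assoc, H.rr i j (Or.inl hlt)]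
        refine ⟨g * r i * r j, .single ⟨r j, ⟨j, rfl⟩, rfl, c1, c3.trans c1⟩,
          .single ⟨r i, ⟨i, rfl⟩, e.symm, c2, c3.trans c1⟩⟩
      · have hj' : (j : ℕ) = i + 1 := by omega
        have hjc : j.castSucc = i.succ := by ext; simp [hj']
        have a1 : adj i j.succ = j.succ := adj_of_ne (by simp [Fin.ext_iff]; omega)
          (by simp [Fin.ext_iff]; omega)
        have a2 : adj j i.castSucc = i.castSucc := adj_of_ne (by simp [Fin.ext_iff]; omega)
          (by simp [Fin.ext_iff]; omega)
        have a3 : adj i j.castSucc = i.castSucc := by rw [hjc, adj_succ]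
        have a4 : adj j i.succ = j.succ := by rw [← hjc, adj_castSucc]
        rw [hjc] at hj
        have c1 : permW (P (g * r i)) < permW (P g) := by
          rw [map_mul, hP]; exact permW_adj_lt.2 hi
        have c2 : permW (P (g * r j)) < permW (P g) := by
          rw [map_mul, hP]; exact permW_adj_lt.2 (hjc ▸ hj)
        have d1 : permW (P (g * r i * r j)) < permW (P (g * r i)) := by
          rw [map_mul _ _ (r j), hP, permW_adj_lt, map_mul, hP]
          simp only [Equiv.Perm.mul_apply, a1, a3]
          exact hj.trans hi
        have d2 : permW (P (g * r i * r j * r i)) < permW (P (g * r i * r j)) := by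
          rw [map_mul _ _ (r i), hP, permW_adj_lt, map_mul, map_mul, hP, hP]
          simp only [Equiv.Perm.mul_apply, a4, a1, a2, adj_castSucc]
          exact hj
        have d3 : permW (P (g * r j * r i)) < permW (P (g * r j)) := by
          rw [map_mul _ _ (r i), hP, permW_adj_lt, map_mul, hP]
          simp only [Equiv.Perm.mul_apply, a4, a2]
          exact hj.trans hi
        have e : g * r j * r i * r j = g * r i * r j * r i := by
          simp only [mul_assoc]; rw [← mul_assoc (r j), ← H.rrr i j hj', mul_assoc]
        refine ⟨g * r i * r j * r i,
          .tail (.single ⟨r j, ⟨j, rfl⟩, rfl, c1, d1.trans c1⟩)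
            ⟨r i, ⟨i, rfl⟩, rfl, d1.trans c1, (d2.trans d1).trans c1⟩,
          .tail (.single ⟨r i, ⟨i, rfl⟩, rfl, c2, d3.trans c2⟩)
            ⟨r j, ⟨j, rfl⟩, e.symm, d3.trans c2, (d2.trans d1).trans c1⟩⟩
    rintro g _ ⟨i, rfl⟩ _ ⟨j, rfl⟩ hi hj
    have hi' := hi
    have hj' := hj
    rw [map_mul, hP, permW_adj_lt] at hi' hj'
    rcases lt_trichotomy (i : ℕ) j with h | h | h
    · exact key g i j h hi' hj'
    · rw [Fin.ext h]; exact ⟨_, .refl, .refl⟩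
    · obtain ⟨z, h1, h2⟩ := key g j i h hj' hi'
      exact ⟨z, h2, h1⟩
  · intro b hb _
    exact hb

/-- The section of `P` over the symmetric group: a homomorphism taking adjacent transpositions
to the `r_k`. -/
lemma exists_sec (H : Rels s r t) (P : G →* Equiv.Perm (Fin (m + 1)))
    (hP : ∀ k, P (r k) = adj k) : ∃ sec : Equiv.Perm (Fin (m + 1)) →* G, ∀ k, sec (adj k) = r k := by
  set R := Subgroup.closure (Set.range r)
  let f : R →* Equiv.Perm (Fin (m + 1)) := P.comp R.subtype
  have hr : ∀ k, r k ∈ R := fun k => Subgroup.subset_closure ⟨k, rfl⟩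
  have hf : Function.Bijective f := by
    constructor
    · rw [injective_iff_map_eq_one]
      rintro ⟨g, hg⟩ h
      exact Subtype.ext (perm_inj H P hP g hg h)
    · intro π
      induction π using perm_induction with
      | one => exact ⟨1, map_one _⟩
      | mul k π ih =>
        obtain ⟨g, rfl⟩ := ih
        exact ⟨⟨r k, hr k⟩ * g, by rw [map_mul]; congr 1; exact hP k⟩
  let e := MulEquiv.ofBijective f hf
  refine ⟨R.subtype.comp e.symm.toMonoidHom, fun k => ?_⟩
  have : e.symm (adj k) = ⟨r k, hr k⟩ := by
    rw [MulEquiv.symm_apply_eq]; exact (hP k).symm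
  simp [this]

end Sym

/-! ### The basis-conjugating generators and McCool's relations -/

lemma exists_perm_extending {m d : ℕ} (f : Fin d → Fin (m + 1)) (hf : Function.Injective f) :
    d ≤ m + 1 ∧ ∃ p : Equiv.Perm (Fin (m + 1)), ∀ (x : Fin d) (h : (x : ℕ) < m + 1),
      p ⟨x, h⟩ = f x := by
  have hd : d ≤ m + 1 := by simpa using Fintype.card_le_of_injective f hf
  refine ⟨hd, ?_⟩
  obtain ⟨p, hp⟩ := (Equiv.Perm.isMultiplyPretransitive (Fin (m + 1)) d).exists_smul_eq
    (Fin.castLEEmb hd) ⟨f, hf⟩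
  exact ⟨p, fun x h => congrArg (fun e : Fin d ↪ Fin (m + 1) => e x) hp⟩

section McCool

variable {m : ℕ} {G : Type*} [Group G] {s r : Fin m → G} {t : Fin (m + 1) → G}

lemma Rels.r_inv (H : Rels s r t) (k : Fin m) : (r k)⁻¹ = r k :=
  inv_eq_of_mul_eq_one_left (H.r2 k)

/-- The relations omit `r_k t_{k-1} = t_{k-1} r_k` and `s_k t_{k-1} = t_{k-1} s_k`; these follow by
conjugating `t_{k-1}` to `t_{k+1}`. -/
lemma Rels.comm_pred (H : Rels s r t) (k : Fin m) (a : Fin (m + 1)) (h : (a : ℕ) + 1 = k) :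
    r k * t a = t a * r k ∧ s k * t a = t a * s k := by
  obtain ⟨l, hl⟩ : ∃ l : Fin m, (l : ℕ) = a := ⟨⟨a, by omega⟩, rfl⟩
  have hlk : (k : ℕ) = l + 1 := by omega
  have ha : a = l.castSucc := by ext; simp [hl]
  have hkl : k.castSucc = l.succ := by ext; simp [hlk]
  have e : t a = (r l * r k) * t k.succ * (r l * r k)⁻¹ := by
    have h1 := H.tr k
    have h2 := H.tr l
    rw [hkl] at h1
    rw [mul_inv_rev, H.r_inv, H.r_inv, ha]
    calc t l.castSucc = t l.castSucc * r l * r l := by rw [mul_assoc, H.r2, mul_one]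
      _ = r l * (t l.succ * r k * r k) * r l := by
        rw [h2, mul_assoc (t _), H.r2, mul_one]
      _ = _ := by rw [h1]; group
  have gen : ∀ y y' x T : G, y * x = x * y' → y' * T = T * y' →
      y * (x * T * x⁻¹) = x * T * x⁻¹ * y := by
    intro y y' x T h1 h2
    have h3 : y = x * y' * x⁻¹ := by rw [← h1]; group
    calc y * (x * T * x⁻¹) = x * (y' * T) * x⁻¹ := by rw [h3]; group
      _ = _ := by rw [h2, h3]; group
  have far : (l : ℕ) + 1 < (k.succ : ℕ) ∨ (k.succ : ℕ) + 1 < l := by left; simp; omega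
  rw [e]
  refine ⟨gen _ (r l) _ _ ?_ (H.rt l _ far), gen _ (s l) _ _ ?_ (H.st l _ far)⟩
  · rw [← mul_assoc, ← H.rrr l k hlk, mul_assoc]
  · have h1 := H.rrs l k hlk
    have h2 : s k = r l * r k * (s l * r k * r l) := by
      rw [← h1]
      calc s k = r l * (r k * r k) * r l * s k := by rw [H.r2, mul_one, H.r2, one_mul]
        _ = _ := by group
    calc s k * (r l * r k) = r l * r k * s l * (r k * (r l * r l) * r k) := by rw [h2]; group
      _ = r l * r k * s l := by rw [H.r2, mul_one, H.r2, mul_one]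

lemma Rels.r_t (H : Rels s r t) (k : Fin m) (a : Fin (m + 1)) :
    r k * t a = t (adj k a) * r k := by
  by_cases h1 : a = k.castSucc
  · subst h1
    rw [adj_castSucc]
    calc r k * t k.castSucc = r k * (t k.castSucc * r k) * r k := by
          rw [mul_assoc, mul_assoc, H.r2, mul_one]
      _ = r k * r k * t k.succ * r k := by rw [H.tr]; group
      _ = _ := by rw [H.r2, one_mul]
  by_cases h2 : a = k.succ
  · subst h2; rw [adj_succ, H.tr]
  rw [adj_of_ne h1 h2]
  simp only [Fin.ext_iff, Fin.val_castSucc, Fin.val_succ] at h1 h2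
  by_cases h3 : (a : ℕ) + 1 = k
  · exact (H.comm_pred k a h3).1
  · exact H.rt k a (by omega)

variable {sec : Equiv.Perm (Fin (m + 1)) →* G}

lemma Rels.sec_t (H : Rels s r t) (hsec : ∀ k, sec (adj k) = r k) (p : Equiv.Perm (Fin (m + 1)))
    (a : Fin (m + 1)) : sec p * t a = t (p a) * sec p := by
  induction p using perm_induction generalizing a with
  | one => simp
  | mul k p ih =>
    rw [map_mul, mul_assoc, ih, ← mul_assoc, hsec, H.r_t, mul_assoc]; rfl

/-- A permutation fixing `0` and `1` is a product of adjacent transpositions away from them, so it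
commutes with `s_0 r_0`. -/
lemma Rels.sec_comm (H : Rels s r t) (hsec : ∀ k, sec (adj k) = r k) (k : Fin m) (hk : (k : ℕ) = 0)
    (q : Equiv.Perm (Fin (m + 1))) (h0 : q k.castSucc = k.castSucc) (h1 : q k.succ = k.succ) :
    Commute (sec q) (s k * r k) := by
  induction hN : permW q using Nat.strong_induction_on generalizing q with
  | _ N ih =>
    by_cases hq : q = 1
    · rw [hq, map_one]; exact Commute.one_left _
    obtain ⟨l, hl⟩ := exists_descent hq
    have hl2 : (k : ℕ) + 1 < l := by
      by_contra hcon
      rcases Nat.lt_or_ge (l : ℕ) 1 with h | h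
      · have : l = k := by ext; omega
        rw [this, h0, h1] at hl
        simp [Fin.lt_def] at hl
      · have : l.castSucc = k.succ := by ext; simp; omega
        rw [this, h1, Fin.lt_def] at hl
        have e : q l.succ = q k.castSucc := by rw [h0]; ext; simp at hl ⊢; omega
        have := q.injective e
        simp [Fin.ext_iff] at this
        omega
    have hc := ih _ (hN ▸ permW_adj_lt.2 hl) (q * adj l)
      (by rw [Equiv.Perm.mul_apply, adj_of_ne, h0] <;> simp [Fin.ext_iff] <;> omega)
      (by rw [Equiv.Perm.mul_apply, adj_of_ne, h1] <;> simp [Fin.ext_iff] <;> omega) rfl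
    have hrl : Commute (r l) (s k * r k) :=
      Commute.mul_right (H.rs l k (Or.inr hl2)) (H.rr l k (Or.inr hl2))
    have e : sec q = sec (q * adj l) * r l := by
      rw [map_mul, hsec, mul_assoc, H.r2, mul_one]
    rw [e]
    exact hc.mul_left hrl

/-- All `s_k r_k` are conjugate under the symmetric group. -/
lemma Rels.exists_conj (H : Rels s r t) (hsec : ∀ k, sec (adj k) = r k) (k₀ : Fin m)
    (hk₀ : (k₀ : ℕ) = 0) (k : Fin m) : ∃ q : Equiv.Perm (Fin (m + 1)),
      q k₀.castSucc = k.castSucc ∧ q k₀.succ = k.succ ∧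
      s k * r k = sec q * (s k₀ * r k₀) * (sec q)⁻¹ := by
  induction hN : (k : ℕ) generalizing k with
  | zero =>
    have : k = k₀ := by ext; omega
    exact ⟨1, by simp [this]⟩
  | succ N ih =>
    obtain ⟨l, hl⟩ : ∃ l : Fin m, (l : ℕ) = N := ⟨⟨N, by omega⟩, rfl⟩
    obtain ⟨q, h0, h1, hq⟩ := ih l hl
    have hlk : (k : ℕ) = l + 1 := by omega
    have hkl : k.castSucc = l.succ := by ext; simp [hlk]
    refine ⟨adj l * adj k * q, ?_, ?_, ?_⟩
    · rw [Equiv.Perm.mul_apply, h0, Equiv.Perm.mul_apply, adj_of_ne (k := k), adj_castSucc,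
        hkl] <;>
      simp [Fin.ext_iff] <;> omega
    · rw [Equiv.Perm.mul_apply, h1, Equiv.Perm.mul_apply, ← hkl, adj_castSucc, adj_of_ne] <;>
      simp [Fin.ext_iff] <;> omega
    · have hr : r k * (r l * r k) = (r l * r k) * r l := by
        rw [← mul_assoc, ← H.rrr l k hlk]
      have hs : s k * (r l * r k) = (r l * r k) * s l := by
        have h1 := H.rrs l k hlk
        have h2 : s k = r l * r k * (s l * r k * r l) := by
          rw [← h1]
          calc s k = r l * (r k * r k) * r l * s k := by rw [H.r2, mul_one, H.r2, one_mul]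
            _ = _ := by group
        calc s k * (r l * r k) = r l * r k * s l * (r k * (r l * r l) * r k) := by rw [h2]; group
          _ = _ := by rw [H.r2, mul_one, H.r2, mul_one]
      rw [map_mul, map_mul, hsec, hsec]
      have h3 : s k * r k * (r l * r k) = (r l * r k) * (s l * r l) := by
        rw [mul_assoc, hr, ← mul_assoc, hs, mul_assoc]
      calc s k * r k = s k * r k * (r l * r k) * (r l * r k)⁻¹ := by group
        _ = _ := by rw [h3, hq]; group

/-- The generators `a i j`, `i ≠ j`, of the basis-conjugating part: `a k (k+1) = s_k r_k`, and the
symmetric group permutes them through their indices. Under the map to `Aut(F_n)`, `a i j`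
conjugates `x_i` by `x_j` and fixes the other generators. -/
lemma Rels.exists_a (H : Rels s r t) (hsec : ∀ k, sec (adj k) = r k) :
    ∃ a : Fin (m + 1) → Fin (m + 1) → G,
      (∀ k : Fin m, a k.castSucc k.succ = s k * r k) ∧
      ∀ p i j, i ≠ j → sec p * a i j = a (p i) (p j) * sec p := by
  classical
  have hwd : ∀ (k : Fin m), (k : ℕ) = 0 → ∀ p q : Equiv.Perm (Fin (m + 1)),
      p k.castSucc = q k.castSucc → p k.succ = q k.succ →
      sec p * (s k * r k) * (sec p)⁻¹ = sec q * (s k * r k) * (sec q)⁻¹ := by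
    intro k hk p q h0 h1
    have hc := H.sec_comm hsec k hk (q⁻¹ * p) (by simp [h0]) (by simp [h1])
    have hc' : sec (q⁻¹ * p) * (s k * r k) = (s k * r k) * sec (q⁻¹ * p) := hc
    rw [map_mul, map_inv] at hc'
    have : sec p * (s k * r k) = sec q * (s k * r k) * (sec q)⁻¹ * sec p := by
      calc sec p * (s k * r k) = sec q * ((sec q)⁻¹ * sec p * (s k * r k)) := by group
        _ = _ := by rw [hc']; group
    rw [this]; group
  let Q : Fin (m + 1) → Fin (m + 1) → G → Prop := fun i j g =>
    ∃ (p : Equiv.Perm (Fin (m + 1))) (k : Fin m), (k : ℕ) = 0 ∧ p k.castSucc = i ∧ p k.succ = j ∧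
      g = sec p * (s k * r k) * (sec p)⁻¹
  have huniq : ∀ i j g g', Q i j g → Q i j g' → g = g' := by
    rintro i j _ _ ⟨p, k, hk, rfl, rfl, rfl⟩ ⟨q, k', hk', h0, h1, rfl⟩
    have : k' = k := by ext; omega
    subst this
    exact hwd k' hk p q h0.symm h1.symm
  have hex : ∀ i j, i ≠ j → ∃ g, Q i j g := by
    intro i j hij
    obtain ⟨hd, p, hp⟩ := exists_perm_extending (m := m) ![i, j] (by
      intro x y h
      fin_cases x <;> fin_cases y <;> simp_all)
    refine ⟨_, p, ⟨0, by omega⟩, rfl, hp 0 (by simp), hp 1 (by simp; omega), rfl⟩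
  let a : Fin (m + 1) → Fin (m + 1) → G := fun i j =>
    if h : ∃ g, Q i j g then h.choose else 1
  have ha : ∀ i j g, Q i j g → a i j = g := by
    intro i j g hg
    have h : ∃ g, Q i j g := ⟨g, hg⟩
    have : a i j = h.choose := dif_pos h
    rw [this]
    exact huniq _ _ _ _ h.choose_spec hg
  refine ⟨a, fun k => ?_, fun p i j hij => ?_⟩
  · obtain ⟨q, h0, h1, hq⟩ := H.exists_conj hsec ⟨0, k.pos⟩ rfl k
    exact ha _ _ _ ⟨q, _, rfl, h0, h1, hq⟩
  · obtain ⟨g, q, k, hk, h0, h1, hq⟩ := hex i j hij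
    rw [ha i j g ⟨q, k, hk, h0, h1, hq⟩, ha (p i) (p j) (sec p * g * (sec p)⁻¹)
      ⟨p * q, k, hk, by simp [h0], by simp [h1], by rw [hq, map_mul]; group⟩]
    group

variable {a : Fin (m + 1) → Fin (m + 1) → G}

lemma Rels.t_a (H : Rels s r t) (hsec : ∀ k, sec (adj k) = r k)
    (ha : ∀ k : Fin m, a k.castSucc k.succ = s k * r k)
    (hp : ∀ p i j, i ≠ j → sec p * a i j = a (p i) (p j) * sec p)
    (c i j : Fin (m + 1)) (hij : i ≠ j) :
    t c * a i j = (if c = j then (a i j)⁻¹ else a i j) * t c := by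
  obtain ⟨hd, p, hpe⟩ := exists_perm_extending (m := m) ![i, j] (by
    intro x y h
    fin_cases x <;> fin_cases y <;> simp_all)
  obtain ⟨k, hk⟩ : ∃ k : Fin m, (k : ℕ) = 0 := ⟨⟨0, by omega⟩, rfl⟩
  have h0 := hpe 0 (by simp)
  have h1 := hpe 1 (by simp; omega)
  simp at h0 h1
  have hi : p k.castSucc = i := by rw [← h0]; congr 1; ext; simp [hk]
  have hj : p k.succ = j := by rw [← h1]; congr 1; ext; simp [hk]
  obtain ⟨c, rfl⟩ := p.surjective c
  have hne : k.castSucc ≠ k.succ := by simp [Fin.ext_iff]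
  have base : t c * (s k * r k) = (if c = k.succ then (s k * r k)⁻¹ else s k * r k) * t c := by
    by_cases h1 : c = k.succ
    · subst h1
      rw [if_pos rfl]
      have e := H.tsr k
      have e2 : s k * r k * (t k.succ * (s k * r k)) = t k.succ := by
        calc s k * r k * (t k.succ * (s k * r k)) = s k * r k * t k.succ * s k * r k := by group
          _ = r k * (t k.castSucc * r k) := by rw [e]; group
          _ = r k * r k * t k.succ := by rw [H.tr]; group
          _ = _ := by rw [H.r2, one_mul]
      rw [eq_inv_mul_iff_mul_eq]; exact e2
    rw [if_neg h1]
    by_cases h0 : c = k.castSucc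
    · subst h0
      rw [← mul_assoc, H.ts, mul_assoc, mul_assoc, H.r_t, adj_castSucc]
    · simp only [Fin.ext_iff, Fin.val_castSucc, Fin.val_succ] at h0 h1
      have hf : (k : ℕ) + 1 < c ∨ (c : ℕ) + 1 < k := by omega
      rw [← mul_assoc, ← H.st k c hf, mul_assoc, ← H.rt k c hf, mul_assoc]
  have e1 : t (p c) = sec p * t c * (sec p)⁻¹ := by rw [H.sec_t hsec]; group
  have e2 : a i j = sec p * (s k * r k) * (sec p)⁻¹ := by
    rw [← ha, hp p _ _ hne, hi, hj]; group
  have e3 : (p c = j) = (c = k.succ) := by rw [← hj, p.injective.eq_iff]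
  rw [e1, e2]
  simp only [e3]
  calc _ = sec p * (t c * (s k * r k)) * (sec p)⁻¹ := by group
    _ = _ := by rw [base]; split_ifs <;> group

/-- McCool's relations between generators acting in disjoint places. -/
lemma Rels.a_comm (H : Rels s r t)
    (ha : ∀ k : Fin m, a k.castSucc k.succ = s k * r k)
    (hp : ∀ p i j, i ≠ j → sec p * a i j = a (p i) (p j) * sec p)
    (i j k l : Fin (m + 1)) (hij : i ≠ j) (hik : i ≠ k) (hil : i ≠ l) (hjk : j ≠ k) (hjl : j ≠ l)
    (hkl : k ≠ l) : Commute (a i j) (a k l) := by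
  obtain ⟨hd, p, hpe⟩ := exists_perm_extending (m := m) ![i, j, k, l] (by
    intro x y h
    fin_cases x <;> fin_cases y <;> simp_all)
  have h0 := hpe 0 (by simp)
  have h1 := hpe 1 (by simp; omega)
  have h2 := hpe 2 (by simp; omega)
  have h3 := hpe 3 (by simp; omega)
  simp at h0 h1 h2 h3
  have key : ∀ q : Fin m, a (p q.castSucc) (p q.succ) = sec p * (s q * r q) * (sec p)⁻¹ := by
    intro q
    rw [← ha, hp p _ _ (by simp [Fin.ext_iff])]; group
  have k0 := key ⟨0, by omega⟩
  have k2 := key ⟨2, by omega⟩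
  simp [h0, h1, h2, h3] at k0 k2
  rw [k0, k2]
  apply Commute.conj_iff _ |>.2
  apply Commute.mul_left <;> apply Commute.mul_right
  · exact H.ss _ _ (by simp)
  · exact (H.rs _ _ (by simp)).symm
  · exact H.rs _ _ (by simp)
  · exact H.rr _ _ (by simp)

/-- McCool's relations involving three indices. -/
lemma Rels.a_comm' (H : Rels s r t) (hsec : ∀ k, sec (adj k) = r k)
    (ha : ∀ k : Fin m, a k.castSucc k.succ = s k * r k)
    (hp : ∀ p i j, i ≠ j → sec p * a i j = a (p i) (p j) * sec p)
    (i j k : Fin (m + 1)) (hij : i ≠ j) (hik : i ≠ k) (hjk : j ≠ k) :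
    Commute (a i j) (a k j) ∧ Commute (a i j * a k j) (a i k) := by
  obtain ⟨hd, p, hpe⟩ := exists_perm_extending (m := m) ![i, k, j] (by
    intro x y h
    fin_cases x <;> fin_cases y <;> simp_all)
  have h0 := hpe 0 (by simp)
  have h1 := hpe 1 (by simp; omega)
  have h2 := hpe 2 (by simp; omega)
  simp at h0 h1 h2
  obtain ⟨u, hu⟩ : ∃ u : Fin m, (u : ℕ) = 0 := ⟨⟨0, by omega⟩, rfl⟩
  obtain ⟨v, hv⟩ : ∃ v : Fin m, (v : ℕ) = 1 := ⟨⟨1, by omega⟩, rfl⟩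
  have huv : (v : ℕ) = u + 1 := by omega
  have hvu : v.castSucc = u.succ := by ext; simp [huv]
  set x0 := u.castSucc with hx0
  set x1 := u.succ with hx1
  set x2 := v.succ with hx2
  have n01 : x0 ≠ x1 := by simp [hx0, hx1, Fin.ext_iff]
  have n02 : x0 ≠ x2 := by simp [hx0, hx2, Fin.ext_iff]; omega
  have n12 : x1 ≠ x2 := by simp [hx1, hx2, Fin.ext_iff]; omega
  have p0 : p x0 = i := by rw [← h0]; congr 1; ext; simp [hx0, hu]
  have p1 : p x1 = k := by rw [← h1]; congr 1; ext; simp [hx1, hu]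
  have p2 : p x2 = j := by rw [← h2]; congr 1; ext; simp [hx2, hv]
  have u0 : adj u x0 = x1 := adj_castSucc u
  have u1 : adj u x1 = x0 := adj_succ u
  have u2 : adj u x2 = x2 := adj_of_ne n02.symm n12.symm
  have v0 : adj v x0 = x0 := adj_of_ne (by rw [hvu]; exact n01) n02
  have v1 : adj v x1 = x2 := by rw [← hvu]; exact adj_castSucc v
  have v2 : adj v x2 = x1 := by rw [← hvu]; exact adj_succ v
  have su : s u = a x0 x1 * r u := by rw [ha u, mul_assoc, H.r2, mul_one]
  have sv : s v = a x1 x2 * r v := by rw [← hvu, ha v, mul_assoc, H.r2, mul_one]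
  have c1 : r v * a x0 x1 = a x0 x2 * r v := by rw [← hsec, hp _ _ _ n01, v0, v1]
  have c2 : r u * a x1 x2 = a x0 x2 * r u := by rw [← hsec, hp _ _ _ n12, u1, u2]
  have c3 : r u * a x0 x2 = a x1 x2 * r u := by rw [← hsec, hp _ _ _ n02, u0, u2]
  have c4 : r v * a x0 x2 = a x0 x1 * r v := by rw [← hsec, hp _ _ _ n02, v0, v2]
  have b1 : a x1 x2 * a x0 x2 = a x0 x2 * a x1 x2 := by
    have h := H.ssr u v huv
    rw [su, sv] at h
    have hl : a x1 x2 * r v * (a x0 x1 * r u) * r v = a x1 x2 * a x0 x2 * (r u * r v * r u) := by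
      rw [H.rrr u v huv]
      calc _ = a x1 x2 * (r v * a x0 x1) * r u * r v := by group
        _ = _ := by rw [c1]; group
    have hr : r u * (a x1 x2 * r v) * (a x0 x1 * r u) = a x0 x2 * a x1 x2 * (r u * r v * r u) := by
      calc _ = (r u * a x1 x2) * (r v * a x0 x1) * r u := by group
        _ = a x0 x2 * (r u * a x0 x2) * r v * r u := by rw [c1, c2]; group
        _ = _ := by rw [c3]; group
    rw [hl, hr] at h
    exact mul_right_cancel h
  have b2 : a x0 x1 * a x0 x2 * a x1 x2 = a x1 x2 * a x0 x2 * a x0 x1 := by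
    have h := H.sss u v huv
    rw [su, sv] at h
    have hl : a x0 x1 * r u * (a x1 x2 * r v) * (a x0 x1 * r u) =
        a x0 x1 * a x0 x2 * a x1 x2 * (r u * r v * r u) := by
      calc _ = a x0 x1 * (r u * a x1 x2) * (r v * a x0 x1) * r u := by group
        _ = a x0 x1 * a x0 x2 * (r u * a x0 x2) * r v * r u := by rw [c1, c2]; group
        _ = _ := by rw [c3]; group
    have hr : a x1 x2 * r v * (a x0 x1 * r u) * (a x1 x2 * r v) =
        a x1 x2 * a x0 x2 * a x0 x1 * (r u * r v * r u) := by
      rw [H.rrr u v huv]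
      calc _ = a x1 x2 * (r v * a x0 x1) * (r u * a x1 x2) * r v := by group
        _ = a x1 x2 * a x0 x2 * (r v * a x0 x2) * r u * r v := by rw [c1, c2]; group
        _ = _ := by rw [c4]; group
    rw [hl, hr] at h
    exact mul_right_cancel h
  have d1 : Commute (a x0 x2) (a x1 x2) := b1.symm
  have d2 : Commute (a x0 x2 * a x1 x2) (a x0 x1) := by
    change _ * _ = _ * _
    rw [← mul_assoc, b2, b1]
  have key : ∀ x y, x ≠ y → a (p x) (p y) = sec p * a x y * (sec p)⁻¹ := by
    intro x y hxy; rw [hp p _ _ hxy]; group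
  have k02 := key _ _ n02
  have k12 := key _ _ n12
  have k01 := key _ _ n01
  rw [p0, p2] at k02
  rw [p1, p2] at k12
  rw [p0, p1] at k01
  rw [k02, k12, k01]
  refine ⟨(Commute.conj_iff _).2 d1, ?_⟩
  have : sec p * a x0 x2 * (sec p)⁻¹ * (sec p * a x1 x2 * (sec p)⁻¹) =
      sec p * (a x0 x2 * a x1 x2) * (sec p)⁻¹ := by group
  rw [this]
  exact (Commute.conj_iff _).2 d2

end McCool

/-! ### Conjugates of letters in a free group -/

section Words

open FreeGroup

variable {α : Type*} [DecidableEq α]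

omit [DecidableEq α] in
lemma isReduced_factor {L w : List (α × Bool)} (h : IsReduced L)
    (hw : ∃ p q, p ++ w ++ q = L) : IsReduced w := by
  obtain ⟨p, q, rfl⟩ := hw
  exact (List.isChain_append.1 (List.isChain_append.1 h).1).2.1

/-- The inverse letter. -/
def bar (d : α × Bool) : α × Bool := (d.1, !d.2)

/-- The letter `d` raised to the power `1` (for `true`) or `-1` (for `false`). -/
def pw (d : α × Bool) (b : Bool) : α × Bool := if b then d else bar d

/-- The conjugate `x⁻¹ c x` of the letter `c`. -/
def cj (c : α × Bool) (x : FreeGroup α) : FreeGroup α := x⁻¹ * mk [c] * x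

/-- The word `w` is reduced and does not begin with a power of the generator `x`; these are the
normal forms of the elements conjugating `x`. -/
def Good (x : α) (w : List (α × Bool)) : Prop := IsReduced w ∧ ∀ h ∈ w.head?, h.1 ≠ x

omit [DecidableEq α] in
lemma bar_bar (d : α × Bool) : bar (bar d) = d := by simp [bar]

omit [DecidableEq α] in
lemma pw_fst (d : α × Bool) (b : Bool) : (pw d b).1 = d.1 := by
  cases b <;> simp [pw, bar]

omit [DecidableEq α] in
lemma invRev_single (d : α × Bool) : invRev [d] = [bar d] := rfl

omit [DecidableEq α] in
lemma invRev_concat (a : List (α × Bool)) (x : α × Bool) :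
    invRev (a ++ [x]) = bar x :: invRev a := by
  rw [invRev_append, invRev_single]; rfl

omit [DecidableEq α] in
lemma mk_bar (d : α × Bool) : mk [bar d] = (mk [d])⁻¹ := by
  rw [inv_mk, invRev_single]

omit [DecidableEq α] in
lemma mk_app (a b : List (α × Bool)) : mk (a ++ b) = mk a * mk b := mul_mk.symm

omit [DecidableEq α] in
lemma mk_cons (d : α × Bool) (b : List (α × Bool)) : mk (d :: b) = mk [d] * mk b :=
  mk_app [d] b

omit [DecidableEq α] in
lemma cj_mk (c : α × Bool) (w : List (α × Bool)) : cj c (mk w) = mk (invRev w ++ c :: w) := by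
  rw [mk_app, mk_cons, cj, inv_mk, mul_assoc]

omit [DecidableEq α] in
lemma cj_inv (c : α × Bool) (x : FreeGroup α) : (cj c x)⁻¹ = cj (bar c) x := by
  simp only [cj, mk_bar]; group

omit [DecidableEq α] in
lemma cj_mul (c : α × Bool) (x y : FreeGroup α) : cj c (x * y) = y⁻¹ * cj c x * y := by
  simp only [cj]; group

lemma isReduced_invRev {w : List (α × Bool)} (h : IsReduced w) : IsReduced (invRev w) := by
  rw [isReduced_iff_reduce_eq] at *
  rw [reduce_invRev, h]

omit [DecidableEq α] in
/-- Two letters may be adjacent in a reduced word exactly when they are not mutually inverse. -/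
lemma compat_iff {x y : α × Bool} : (x.1 = y.1 → x.2 = y.2) ↔ x ≠ bar y := by
  obtain ⟨x, e⟩ := x
  obtain ⟨y, f⟩ := y
  cases e <;> cases f <;> simp [bar]

/-- The reduced form of a conjugate of a letter. -/
lemma isReduced_cj {c : α × Bool} {w : List (α × Bool)} (h : Good c.1 w) :
    IsReduced (invRev w ++ c :: w) := by
  obtain ⟨h1, h2⟩ := h
  have hcw : IsReduced (c :: w) := by
    refine List.isChain_cons.2 ⟨fun y hy hcy => absurd hcy.symm (h2 y hy), h1⟩
  refine List.isChain_append.2 ⟨isReduced_invRev h1, hcw, ?_⟩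
  rintro x hx y hy
  simp only [List.head?_cons, Option.mem_def, Option.some.injEq] at hy
  subst hy
  cases w with
  | nil => simp at hx
  | cons z w =>
    rw [invRev_cons, invRev_single] at hx
    simp only [List.getLast?_append, List.getLast?_singleton, Option.some_or, Option.mem_def,
      Option.some.injEq] at hx
    subst hx
    intro h
    exact absurd h (h2 z (by simp))

lemma norm_cj {c : α × Bool} {w : List (α × Bool)} (h : Good c.1 w) :
    FreeGroup.norm (cj c (mk w)) = 2 * w.length + 1 := by
  rw [cj_mk, FreeGroup.norm, toWord_mk, (isReduced_cj h).reduce_eq]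
  simp; ring

lemma norm_cj_le (c : α × Bool) (w : List (α × Bool)) :
    FreeGroup.norm (cj c (mk w)) ≤ 2 * w.length + 1 := by
  rw [cj_mk]
  refine norm_mk_le.trans ?_
  simp; omega

/-- Stripping the powers of `c` with which a conjugating word begins. -/
lemma good_dropWhile (c : α × Bool) {w : List (α × Bool)} (h : IsReduced w) :
    Good c.1 (w.dropWhile fun l => l.1 = c.1) ∧
      cj c (mk (w.dropWhile fun l => l.1 = c.1)) = cj c (mk w) := by
  induction w with
  | nil => simp [Good]
  | cons z w ih =>
    by_cases hz : z.1 = c.1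
    · obtain ⟨g, e⟩ := ih (isReduced_factor h ⟨[z], [], by simp⟩)
      rw [List.dropWhile_cons_of_pos (by simpa using hz)]
      refine ⟨g, e.trans ?_⟩
      have hcz : z = c ∨ z = bar c := by
        by_cases h2 : z.2 = c.2
        · exact Or.inl (Prod.ext hz h2)
        · exact Or.inr (Prod.ext hz (Bool.eq_not_of_ne h2))
      rw [mk_cons]
      rcases hcz with rfl | rfl
      · simp only [cj]; group
      · simp only [cj, mk_bar]; group
    · rw [List.dropWhile_cons_of_neg (by simpa using hz)]
      exact ⟨⟨h, by simpa using hz⟩, rfl⟩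

/-- Every conjugate of a letter is a conjugate by a word in normal form. -/
lemma exists_good (c : α × Bool) (x : FreeGroup α) :
    ∃ w, Good c.1 w ∧ cj c (mk w) = cj c x := by
  obtain ⟨h, e⟩ := good_dropWhile c (isReduced_toWord (x := x))
  exact ⟨_, h, by rw [e, mk_toWord]⟩

omit [DecidableEq α] in
/-- Splitting off the longest common suffix of two words. -/
lemma exists_common_suffix (w v : List (α × Bool)) :
    ∃ a b s, w = a ++ s ∧ v = b ++ s ∧ ∀ a' b' x, a = a' ++ [x] → b ≠ b' ++ [x] := by
  induction w using List.reverseRecOn generalizing v with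
  | nil => exact ⟨[], v, [], rfl, by simp, by simp⟩
  | append_singleton w x ih =>
    rcases List.eq_nil_or_concat v with rfl | ⟨v, y, rfl⟩
    · exact ⟨w ++ [x], [], [], by simp, rfl, by simp⟩
    · by_cases h : x = y
      · subst h
        obtain ⟨a, b, s, rfl, rfl, h⟩ := ih v
        exact ⟨a, b, s ++ [x], by simp, by simp, h⟩
      · refine ⟨w ++ [x], v ++ [y], [], by simp, by simp, ?_⟩
        intro a' b' z h1 h2
        have h1 := List.append_inj' h1 rfl
        have h2 := List.append_inj' h2 rfl
        simp_all

omit [DecidableEq α] in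
lemma isReduced_join {X R a b : List (α × Bool)} {q : α × Bool}
    (h1 : IsReduced (X ++ a)) (h2 : IsReduced (invRev b ++ q :: R))
    (hd : ∀ a' b' x, a = a' ++ [x] → b ≠ b' ++ [x])
    (ha : ∀ a', b = [] → a ≠ a' ++ [bar q])
    (hX : ∀ X' p, X = X' ++ [p] → a = [] → (∀ b', b ≠ b' ++ [p]) ∧ (b = [] → p ≠ bar q)) :
    IsReduced (X ++ a ++ (invRev b ++ q :: R)) := by
  refine List.isChain_append.2 ⟨h1, h2, ?_⟩
  intro x hx y hy
  rw [compat_iff]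
  rintro rfl
  rcases List.eq_nil_or_concat b with rfl | ⟨b, z, rfl⟩
  · simp only [invRev_empty, List.nil_append, List.head?_cons, Option.mem_def,
      Option.some.injEq] at hy
    subst hy
    rcases List.eq_nil_or_concat a with rfl | ⟨a, u, rfl⟩
    · rcases List.eq_nil_or_concat X with rfl | ⟨X, u, rfl⟩
      · simp at hx
      · simp at hx
        exact (hX X u (by simp) rfl).2 rfl hx
    · simp [← List.append_assoc] at hx
      exact ha a rfl (by simp [hx])
  · rw [List.concat_eq_append, invRev_concat] at hy
    simp only [List.cons_append, List.head?_cons, Option.mem_def, Option.some.injEq] at hy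
    subst hy
    rw [bar_bar] at hx
    rcases List.eq_nil_or_concat a with rfl | ⟨a, u, rfl⟩
    · rcases List.eq_nil_or_concat X with rfl | ⟨X, u, rfl⟩
      · simp at hx
      · simp at hx
        exact (hX X u (by simp) rfl).1 b (by simp [hx])
    · simp [← List.append_assoc] at hx
      exact hd a b z (by simp [hx]) (by simp)

omit [DecidableEq α] in
/-- Multiplying the conjugator by a conjugate of another letter shortens it when the letter
cancels. -/
lemma cj_reducing {c d : α × Bool} (a v : List (α × Bool)) :
    cj c (mk (a ++ bar d :: v) * cj d (mk v)) = cj c (mk (a ++ v)) := by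
  congr 1
  rw [mk_app, mk_cons, mk_app, mk_bar, cj]; group

lemma norm_reducing {c d : α × Bool} {w a v : List (α × Bool)} (hw : Good c.1 w)
    (h : w = a ++ bar d :: v) :
    FreeGroup.norm (cj c (mk w * cj d (mk v))) < FreeGroup.norm (cj c (mk w)) := by
  rw [norm_cj hw]
  subst h
  rw [cj_reducing]
  refine (norm_cj_le _ _).trans_lt ?_
  simp

/-- Multiplying the conjugator by a conjugate of another letter makes the conjugate longer when the
letter does not cancel. -/
lemma norm_increasing {c d : α × Bool} {w v : List (α × Bool)} (hcd : c.1 ≠ d.1)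
    (hw : Good c.1 w) (hv : Good d.1 v) (h : ¬ ∃ a, w = a ++ bar d :: v) :
    FreeGroup.norm (cj c (mk w)) < FreeGroup.norm (cj c (mk w * cj d (mk v))) := by
  obtain ⟨a, b, s, rfl, rfl, hab⟩ := exists_common_suffix w v
  have hred : IsReduced ([] ++ a ++ (invRev b ++ d :: (b ++ s))) := by
    refine isReduced_join ?_ ?_ hab ?_ (by simp)
    · exact isReduced_factor hw.1 ⟨[], s, by simp⟩
    · refine isReduced_factor (isReduced_cj hv) ⟨invRev s, [], ?_⟩
      simp [invRev_append]
    · rintro a' rfl rfl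
      exact h ⟨a', by simp⟩
  rw [List.nil_append] at hred
  obtain ⟨hg, he⟩ := good_dropWhile c hred
  have e1 : mk (a ++ s) * cj d (mk (b ++ s)) = mk (a ++ (invRev b ++ d :: (b ++ s))) := by
    rw [mk_app, mk_app, mk_app, mk_app (invRev b), mk_cons, mk_app, cj, ← inv_mk]; group
  rw [e1, ← he, norm_cj hg, norm_cj hw]
  have hlen : (a ++ s).length <
      ((a ++ (invRev b ++ d :: (b ++ s))).dropWhile fun l => l.1 = c.1).length := by
    cases a with
    | nil =>
      rw [List.nil_append]
      have : ∀ (X Y : List (α × Bool)), (d :: Y).length ≤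
          ((X ++ d :: Y).dropWhile fun l => l.1 = c.1).length := by
        intro X Y
        induction X with
        | nil => rw [List.nil_append, List.dropWhile_cons_of_neg (by simpa using hcd.symm)]
        | cons z X ih =>
          rw [List.cons_append, List.dropWhile_cons]
          split
          · exact ih
          · simp; omega
      refine lt_of_lt_of_le ?_ (this _ _)
      simp
    | cons z a =>
      rw [List.cons_append, List.cons_append,
        List.dropWhile_cons_of_neg (by simpa using hw.2 z (by simp))]
      simp; omega
  omega

/-- If no conjugate in a tuple can be shortened by another, then the product of a reduced word in
the tuple begins with the full left half of its first factor and the letter after it. -/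
lemma lift_reduced {c : α → α × Bool} {w : α → List (α × Bool)} {u : α → FreeGroup α}
    (hu : ∀ i, u i = cj (c i) (mk (w i))) (hw : ∀ i, Good (c i).1 (w i))
    (hc : Function.Injective fun i => (c i).1)
    (hn : ∀ i j b a, i ≠ j → w i ≠ a ++ bar (pw (c j) b) :: w j)
    (L : List (α × Bool)) (l : α × Bool) (hL : IsReduced (l :: L)) :
    ∃ R, lift u (mk (l :: L)) = mk (invRev (w l.1) ++ pw (c l.1) l.2 :: R) ∧
      IsReduced (invRev (w l.1) ++ pw (c l.1) l.2 :: R) := by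
  have hn' : ∀ i j b a, w i ≠ a ++ bar (pw (c j) b) :: w j := by
    intro i j b a h
    by_cases hij : i = j
    · subst hij
      have := congrArg List.length h
      simp at this
      omega
    · exact hn i j b a hij h
  have h1 : ∀ l : α × Bool, lift u (mk [l]) = mk (invRev (w l.1) ++ pw (c l.1) l.2 :: w l.1) := by
    rintro ⟨i, b⟩
    rw [← cj_mk]
    cases b
    · simp [hu, cj_inv, pw]
    · simp [hu, pw]
  have hg : ∀ l : α × Bool, IsReduced (invRev (w l.1) ++ pw (c l.1) l.2 :: w l.1) :=
    fun l => isReduced_cj (by rw [pw_fst]; exact hw _)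
  induction L generalizing l with
  | nil => exact ⟨_, h1 l, hg l⟩
  | cons l' L ih =>
    obtain ⟨hll, hL'⟩ := isReduced_cons_cons.1 hL
    obtain ⟨R, hR, hRr⟩ := ih l' hL'
    obtain ⟨a, b, s, ha, hb, hab⟩ := exists_common_suffix (w l.1) (w l'.1)
    refine ⟨a ++ (invRev b ++ pw (c l'.1) l'.2 :: R), ?_, ?_⟩
    · rw [mk_cons, _root_.map_mul, hR, h1]
      nth_rewrite 2 [ha]
      rw [hb]
      rw [mk_app, mk_cons, mk_app, mk_app, mk_cons _ R, mk_app, mk_cons _ (a ++ _), mk_app a,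
        mk_app _ (_ :: R), mk_cons _ R, ← inv_mk, ← inv_mk, ← inv_mk, mk_app]; group
    · have := isReduced_join (X := invRev (w l.1) ++ [pw (c l.1) l.2]) (a := a) (b := b)
        (q := pw (c l'.1) l'.2) (R := R) ?_ ?_ hab ?_ ?_
      · simpa using this
      · refine isReduced_factor (hg l) ⟨[], s, ?_⟩
        simp only [List.append_assoc, List.cons_append, List.nil_append, ← ha]
      · refine isReduced_factor hRr ⟨invRev s, [], ?_⟩
        simp only [List.append_nil]; rw [hb, invRev_append]; simp
      · rintro a' rfl rfl
        refine hn' l.1 l'.1 l'.2 a' ?_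
        rw [ha, hb]; simp
      · rintro X' p hp rfl
        have hp := (List.append_inj' hp rfl).2
        simp only [List.cons.injEq, and_true] at hp
        subst hp
        constructor
        · rintro b' rfl
          refine hn' l'.1 l.1 (!l.2) b' ?_
          have : bar (pw (c l.1) !l.2) = pw (c l.1) l.2 := by
            cases l.2 <;> simp [pw, bar]
          rw [this, ha, hb]; simp
        · rintro rfl h
          have h2 : l.1 = l'.1 := hc (by simpa [bar, pw_fst] using congrArg Prod.fst h)
          rw [h2, hll h2] at h
          simp [bar, Prod.ext_iff] at h

/-- A tuple of conjugates of letters that generates the free group and in which no conjugate can be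
shortened by another consists of letters. -/
lemma eq_nil_of_not_reducing {c : α → α × Bool} {w : α → List (α × Bool)} {u : α → FreeGroup α}
    (hu : ∀ i, u i = cj (c i) (mk (w i))) (hw : ∀ i, Good (c i).1 (w i))
    (hc : Function.Injective fun i => (c i).1)
    (hn : ∀ i j b a, i ≠ j → w i ≠ a ++ bar (pw (c j) b) :: w j)
    (hgen : Function.Surjective (lift u)) (i : α) : w i = [] := by
  obtain ⟨y, hy⟩ := hgen (of (c i).1)
  have hyr := isReduced_toWord (x := y)
  rw [← mk_toWord (x := y)] at hy
  cases hl : y.toWord with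
  | nil =>
    rw [hl] at hy
    exact absurd hy (one_ne_of _)
  | cons l L =>
    rw [hl] at hy hyr
    obtain ⟨R, h1, h2⟩ := lift_reduced hu hw hc hn L l hyr
    have h3 : invRev (w l.1) ++ pw (c l.1) l.2 :: R = [((c i).1, true)] := by
      rw [← h2.reduce_eq, ← toWord_mk, ← h1, hy, toWord_of]
    have h4 : w l.1 = [] := by
      have := congrArg List.length h3
      simp at this
      exact List.length_eq_zero_iff.1 (by omega)
    rw [h4] at h3
    simp only [invRev_empty, List.nil_append, List.cons.injEq] at h3
    have h5 : l.1 = i := hc (by simpa [pw_fst] using congrArg Prod.fst h3.1)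
    rw [← h5, h4]

end Words

/-! ### Automorphisms permuting the generators up to conjugation and inversion -/

section PureConj

open FreeGroup

variable {α : Type*}

/-- The automorphisms sending each generator to a conjugate of a generator or of its inverse,
according to a permutation of the generators. -/
def pcStar (α : Type*) : Subgroup (MulAut (FreeGroup α)) where
  carrier := {f | ∃ π : Equiv.Perm α, ∀ i, ∃ e x, f (of i) = cj (π i, e) x}
  one_mem' := ⟨1, fun i => ⟨true, 1, by simp [cj, of]⟩⟩
  mul_mem' := by
    rintro f g ⟨π, hf⟩ ⟨π', hg⟩
    refine ⟨π * π', fun i => ?_⟩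
    obtain ⟨e, x, hx⟩ := hg i
    obtain ⟨e', y, hy⟩ := hf (π' i)
    rw [MulAut.mul_apply, hx]
    cases e
    · refine ⟨!e', y * f x, ?_⟩
      have h1 : mk [(π' i, false)] = (of (π' i))⁻¹ := mk_bar (π' i, true)
      have h2 : mk [((π * π') i, !e')] = (mk [(π (π' i), e')])⁻¹ := mk_bar (π (π' i), e')
      rw [cj, cj, h1, h2, _root_.map_mul, _root_.map_mul, _root_.map_inv, _root_.map_inv, hy, cj]
      group
    · refine ⟨e', y * f x, ?_⟩
      have h1 : mk [(π' i, true)] = of (π' i) := rfl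
      rw [cj_mul, cj, h1, _root_.map_mul, _root_.map_mul, _root_.map_inv, hy]
      rfl
  inv_mem' := by
    rintro f ⟨π, hf⟩
    refine ⟨π⁻¹, fun i => ?_⟩
    obtain ⟨e, x, hx⟩ := hf (π⁻¹ i)
    rw [← Equiv.Perm.mul_apply, mul_inv_cancel] at hx
    simp only [Equiv.Perm.one_apply] at hx
    refine ⟨e, f⁻¹ x⁻¹, ?_⟩
    apply f.injective
    rw [MulAut.apply_inv_self]
    cases e
    · have h1 : mk [(π⁻¹ i, false)] = (of (π⁻¹ i))⁻¹ := mk_bar (π⁻¹ i, true)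
      have h2 : mk [(i, false)] = (of i)⁻¹ := mk_bar (i, true)
      simp only [cj, h1, _root_.map_mul, _root_.map_inv, hx, MulAut.apply_inv_self, h2]
      group
    · have h1 : mk [(π⁻¹ i, true)] = of (π⁻¹ i) := rfl
      have h2 : mk [(i, true)] = of i := rfl
      rw [cj, h1, _root_.map_mul, _root_.map_mul, _root_.map_inv, hx, cj,
        MulAut.apply_inv_self, h2]
      group

/-- The power `x ^ (±1)`. -/
def ipow {G : Type*} [Group G] (x : G) (b : Bool) : G := if b then x else x⁻¹

/-- The `i`-th entry of a tuple conjugated by the `j`-th entry, or by its inverse. -/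
def tr (u : α → FreeGroup α) (i j : α) (b : Bool) : FreeGroup α :=
  (ipow (u j) b)⁻¹ * u i * ipow (u j) b

variable [DecidableEq α]

/-- `NF u c w`: the tuple `u` consists of the conjugates of the letters `c k` by the words `w k`,
which are in normal form, and the underlying generators of the letters are distinct. -/
structure NF (u : α → FreeGroup α) (c : α → α × Bool) (w : α → List (α × Bool)) : Prop where
  eq : ∀ i, u i = cj (c i) (mk (w i))
  good : ∀ i, Good (c i).1 (w i)
  inj : Function.Injective fun i => (c i).1

lemma exists_nf {f : MulAut (FreeGroup α)} (hf : f ∈ pcStar α) :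
    ∃ c w, NF (fun k => f (of k)) c w := by
  obtain ⟨π, h⟩ := hf
  choose e x hx using h
  choose w hw hw' using fun i => exists_good (π i, e i) (x i)
  exact ⟨fun i => (π i, e i), w, fun i => by rw [hw', hx], hw, π.injective⟩

variable {u : α → FreeGroup α} {c : α → α × Bool} {w : α → List (α × Bool)}

omit [DecidableEq α] in
lemma NF.ipow_eq (h : NF u c w) (j : α) (b : Bool) :
    ipow (u j) b = cj (pw (c j) b) (FreeGroup.mk (w j)) := by
  cases b
  · simp [ipow, pw, h.eq, cj_inv]
  · simp [ipow, pw, h.eq]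

omit [DecidableEq α] in
lemma NF.tr_eq (h : NF u c w) (i j : α) (b : Bool) :
    tr u i j b = cj (c i) (FreeGroup.mk (w i) * cj (pw (c j) b) (FreeGroup.mk (w j))) := by
  rw [tr, h.ipow_eq, h.eq i, ← cj_mul]

lemma NF.increasing (h : NF u c w) {i j : α} (hij : i ≠ j) (b : Bool)
    (hn : ¬ ∃ a, w i = a ++ bar (pw (c j) b) :: w j) :
    FreeGroup.norm (u i) < FreeGroup.norm (tr u i j b) := by
  rw [h.tr_eq, h.eq i]
  refine norm_increasing ?_ (h.good i) (by rw [pw_fst]; exact h.good j) hn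
  rw [pw_fst]
  exact fun e => hij (h.inj e)

/-- Conjugating by another entry shortens an entry exactly when its conjugating word ends in the
cancelling letter followed by the conjugating word of the other entry. -/
lemma NF.lt_iff (h : NF u c w) {i j : α} (hij : i ≠ j) (b : Bool) :
    FreeGroup.norm (tr u i j b) < FreeGroup.norm (u i) ↔
      ∃ a, w i = a ++ bar (pw (c j) b) :: w j := by
  constructor
  · intro hlt
    by_contra hn
    exact absurd (h.increasing hij b hn) hlt.not_gt
  · rintro ⟨a, ha⟩
    rw [h.tr_eq, h.eq i]
    exact norm_reducing (h.good i) ha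

lemma NF.ne (h : NF u c w) {i j : α} (hij : i ≠ j) (b : Bool) :
    FreeGroup.norm (tr u i j b) ≠ FreeGroup.norm (u i) := by
  by_cases hn : ∃ a, w i = a ++ bar (pw (c j) b) :: w j
  · exact ((h.lt_iff hij b).2 hn).ne
  · exact (h.increasing hij b hn).ne'

/-- If the `i`-th conjugating word ends in the `j`-th and the `j`-th in the `l`-th, then two
successive cancellations shorten the `i`-th entry. -/
lemma NF.twice (h : NF u c w) {i j l : α} {b e : Bool} {a a' : List (α × Bool)}
    (h1 : w i = a ++ bar (pw (c j) b) :: w j) (h2 : w j = a' ++ bar (pw (c l) e) :: w l) :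
    FreeGroup.norm ((ipow (u l) e)⁻¹ * tr u i j b * ipow (u l) e) < FreeGroup.norm (u i) := by
  have e1 : (ipow (u l) e)⁻¹ * tr u i j b * ipow (u l) e = cj (c i) (FreeGroup.mk (a ++ a' ++ w l)) := by
    rw [h.tr_eq, h1, cj_reducing, h.ipow_eq, ← cj_mul, h2, ← List.append_assoc, cj_reducing]
  rw [e1, h.eq i, norm_cj (h.good i)]
  refine (norm_cj_le _ _).trans_lt ?_
  rw [h1, h2]
  simp

/-- Either some entry of the tuple of images of the generators can be shortened by another, or all
of them are letters. -/
lemma reducing_or_letters {f : MulAut (FreeGroup α)} (hf : f ∈ pcStar α) :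
    (∃ i j b, i ≠ j ∧
      FreeGroup.norm (tr (fun k => f (of k)) i j b) < FreeGroup.norm (f (of i))) ∨
    ∃ c : α → α × Bool, Function.Injective (fun i => (c i).1) ∧ ∀ i, f (of i) = mk [c i] := by
  obtain ⟨c, w, h⟩ := exists_nf hf
  by_cases hr : ∃ i j b, i ≠ j ∧
      FreeGroup.norm (tr (fun k => f (of k)) i j b) < FreeGroup.norm (f (of i))
  · exact Or.inl hr
  · right
    have hlift : lift (fun k => f (of k)) = f.toMonoidHom := by ext; simp
    have hw : ∀ i, w i = [] := by
      refine eq_nil_of_not_reducing h.eq h.good h.inj ?_ (by rw [hlift]; exact f.surjective)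
      intro i j b a hij hw
      exact hr ⟨i, j, b, hij, (h.lt_iff hij b).2 ⟨a, hw⟩⟩
    refine ⟨c, h.inj, fun i => ?_⟩
    have := h.eq i
    rw [hw i] at this
    rw [this, cj_mk]
    rfl

/-- The total length of a tuple of elements of a free group. -/
def nu [Fintype α] (u : α → FreeGroup α) : ℕ := ∑ k, FreeGroup.norm (u k)

lemma nu_update [Fintype α] (u : α → FreeGroup α) (i : α) (y : FreeGroup α) :
    nu (Function.update u i y) + FreeGroup.norm (u i) = nu u + FreeGroup.norm y := by
  have h1 : (fun k => FreeGroup.norm (Function.update u i y k)) =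
      Function.update (fun k => FreeGroup.norm (u k)) i (FreeGroup.norm y) := by
    funext k
    by_cases hk : k = i
    · subst hk; simp
    · simp [hk]
  unfold nu
  rw [h1, Finset.sum_update_of_mem (Finset.mem_univ i),
    ← Finset.add_sum_erase Finset.univ (fun k => FreeGroup.norm (u k)) (Finset.mem_univ i),
    Finset.sdiff_singleton_eq_erase]
  ring

end PureConj

/-! ### Peak reduction for the extended welded braid group -/

section Action

open FreeGroup

variable {ι G : Type*} [DecidableEq ι] [Group G]

/-- Elements of a group `G` lifting the permutations (`sec p`), the inversions of a generator
(`t i`) and the partial conjugations (`a i j`, conjugating `x_i` by `x_j`) along a homomorphism `φ`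
to the automorphisms of the free group, and satisfying enough of their relations. It is not part of
the definition that these elements generate `G`. -/
structure WeldedAction (sec : Equiv.Perm ι →* G) (t : ι → G) (a : ι → ι → G)
    (φ : G →* MulAut (FreeGroup ι)) : Prop where
  sec_t : ∀ p c, sec p * t c = t (p c) * sec p
  sec_a : ∀ p i j, i ≠ j → sec p * a i j = a (p i) (p j) * sec p
  tt : ∀ c d, c ≠ d → t c * t d = t d * t c
  t2 : ∀ c, t c * t c = 1
  t_a : ∀ c i j, i ≠ j → t c * a i j = (if c = j then (a i j)⁻¹ else a i j) * t c
  comm : ∀ i j k l, i ≠ j → i ≠ k → i ≠ l → j ≠ k → j ≠ l → k ≠ l → Commute (a i j) (a k l)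
  comm' : ∀ i j k, i ≠ j → i ≠ k → j ≠ k → Commute (a i j) (a k j)
  tri : ∀ i j k, i ≠ j → i ≠ k → j ≠ k → Commute (a i j * a k j) (a i k)
  φ_sec : ∀ p i, φ (sec p) (of i) = of (p i)
  φ_t : ∀ c i, φ (t c) (of i) = if i = c then (of i)⁻¹ else of i
  φ_a : ∀ i j k, i ≠ j → φ (a i j) (of k) = if k = i then (of j)⁻¹ * of i * of j else of k

/-- The set of all partial conjugations and their inverses. -/
def moves (a : ι → ι → G) : Set G := {x | ∃ i j b, i ≠ j ∧ x = ipow (a i j) b}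

/-- The subgroup of signed permutations. -/
def signed (sec : Equiv.Perm ι →* G) (t : ι → G) : Subgroup G :=
  Subgroup.closure (Set.range sec ∪ Set.range t)

lemma commute_ipow {x y : G} (h : Commute x y) (b : Bool) : Commute x (ipow y b) := by
  cases b
  · exact h.inv_right
  · exact h

variable {sec : Equiv.Perm ι →* G} {t : ι → G} {a : ι → ι → G} {φ : G →* MulAut (FreeGroup ι)}

namespace WeldedAction

variable (W : WeldedAction sec t a φ)
include W

/-- A partial conjugation replaces one entry of a tuple of images of the generators. -/
lemma tuple_mul (f : MulAut (FreeGroup ι)) {i j : ι} (hij : i ≠ j) (b : Bool) :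
    (fun k => (f * φ (ipow (a i j) b)) (of k)) =
      Function.update (fun k => f (of k)) i (tr (fun k => f (of k)) i j b) := by
  funext k
  rw [MulAut.mul_apply]
  have hj : φ (a i j) (of j) = of j := by rw [W.φ_a i j j hij, if_neg hij.symm]
  have hinv : ∀ x y, φ (a i j) x = y → φ (a i j)⁻¹ y = x := by
    rintro x y rfl
    rw [_root_.map_inv, MulAut.inv_apply_self]
  by_cases hk : k = i
  · subst hk
    rw [Function.update_self, tr]
    cases b
    · have h : φ (a k j)⁻¹ (of k) = of j * of k * (of j)⁻¹ := by
        apply hinv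
        simp only [_root_.map_mul, _root_.map_inv, hj, W.φ_a k j k hij, if_true]
        group
      simp only [ipow, Bool.false_eq_true, if_false]
      rw [h]
      simp only [_root_.map_mul, _root_.map_inv, inv_inv]
    · simp only [ipow, if_true, W.φ_a k j k hij, _root_.map_mul, _root_.map_inv]
  · rw [Function.update_of_ne hk]
    have h : φ (a i j) (of k) = of k := by rw [W.φ_a i j k hij, if_neg hk]
    cases b
    · simp only [ipow, Bool.false_eq_true, if_false, hinv _ _ h]
    · simp only [ipow, if_true, h]

/-! #### Signed permutations -/

lemma t_inv (c : ι) : (t c)⁻¹ = t c := inv_eq_of_mul_eq_one_left (W.t2 c)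

lemma t_commute (c d : ι) : Commute (t c) (t d) := by
  by_cases h : c = d
  · subst h; exact Commute.refl _
  · exact W.tt c d h

/-- The simultaneous inversion of the generators with index in `S`. -/
def tS (S : Finset ι) : G := S.noncommProd t fun c _ d _ _ => W.t_commute c d

lemma tS_insert {S : Finset ι} {c : ι} (h : c ∉ S) : W.tS (insert c S) = t c * W.tS S :=
  Finset.noncommProd_insert_of_notMem _ _ _ _ h

lemma tS_empty : W.tS ∅ = 1 := Finset.noncommProd_empty _ _

lemma exists_mul_tS (c : ι) (S : Finset ι) : ∃ S', t c * W.tS S = W.tS S' := by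
  by_cases h : c ∈ S
  · refine ⟨S.erase c, ?_⟩
    rw [← Finset.insert_erase h, W.tS_insert (Finset.notMem_erase c S), ← mul_assoc, W.t2, one_mul,
      Finset.erase_insert (Finset.notMem_erase c S)]
  · exact ⟨insert c S, (W.tS_insert h).symm⟩

lemma signed_form {b : G} (hb : b ∈ signed sec t) : ∃ p S, b = sec p * W.tS S := by
  have hs : ∀ x ∈ Set.range sec ∪ Set.range t, ∀ y, (∃ p S, y = sec p * W.tS S) →
      ∃ p S, x * y = sec p * W.tS S := by
    rintro x (⟨q, rfl⟩ | ⟨c, rfl⟩) y ⟨p, S, rfl⟩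
    · exact ⟨q * p, S, by rw [_root_.map_mul, mul_assoc]⟩
    · obtain ⟨S', hS'⟩ := W.exists_mul_tS (p⁻¹ c) S
      refine ⟨p, S', ?_⟩
      have := W.sec_t p (p⁻¹ c)
      rw [← hS', ← mul_assoc, ← mul_assoc, this]
      simp
  induction hb using Subgroup.closure_induction_left with
  | one => exact ⟨1, ∅, by rw [W.tS_empty, _root_.map_one, mul_one]⟩
  | mul_left x hx y hy ih => exact hs x hx y ih
  | inv_mul_cancel x hx y hy ih =>
    refine hs x⁻¹ ?_ y ih
    rcases hx with ⟨q, rfl⟩ | ⟨c, rfl⟩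
    · exact Or.inl ⟨q⁻¹, map_inv _ _⟩
    · exact Or.inr ⟨c, (W.t_inv c).symm⟩

lemma tS_mem (S : Finset ι) : W.tS S ∈ signed sec t :=
  Subgroup.noncommProd_mem _ _ fun c _ => Subgroup.subset_closure (Or.inr ⟨c, rfl⟩)

omit [DecidableEq ι] W in
lemma sec_mem (p : Equiv.Perm ι) : sec p ∈ signed sec t :=
  Subgroup.subset_closure (Or.inl ⟨p, rfl⟩)

lemma φ_tS (S : Finset ι) (i : ι) : φ (W.tS S) (of i) = if i ∈ S then (of i)⁻¹ else of i := by
  induction S using Finset.induction with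
  | empty => simp [W.tS_empty]
  | insert c S hc ih =>
    rw [W.tS_insert hc, _root_.map_mul, MulAut.mul_apply, ih]
    by_cases hic : i = c
    · subst hic
      simp [hc, W.φ_t]
    · by_cases hi : i ∈ S <;> simp [hi, hic, W.φ_t]

lemma φ_signed (p : Equiv.Perm ι) (S : Finset ι) (i : ι) :
    φ (sec p * W.tS S) (of i) = if i ∈ S then (of (p i))⁻¹ else of (p i) := by
  rw [_root_.map_mul, MulAut.mul_apply, φ_tS]
  split
  · rw [_root_.map_inv, W.φ_sec]
  · rw [W.φ_sec]

lemma signed_inj {b : G} (hb : b ∈ signed sec t) (h : φ b = 1) : b = 1 := by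
  obtain ⟨p, S, rfl⟩ := W.signed_form hb
  have hi : ∀ i, i ∉ S ∧ p i = i := by
    intro i
    have h1 := W.φ_signed p S i
    rw [h, MulAut.one_apply] at h1
    have h2 := congrArg toWord h1
    split at h2
    · rw [toWord_inv, toWord_of, toWord_of, invRev_single] at h2
      simp [bar] at h2
    · rw [toWord_of, toWord_of] at h2
      simp at h2
      exact ⟨by assumption, h2.symm⟩
  have hp : p = 1 := by ext i; exact (hi i).2
  have hS : S = ∅ := Finset.eq_empty_of_forall_notMem fun i => (hi i).1
  rw [hp, hS, W.tS_empty, _root_.map_one, mul_one]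

lemma conj_moves {b : G} (hb : b ∈ signed sec t) : ∀ m ∈ moves a, b⁻¹ * m * b ∈ moves a := by
  obtain ⟨p, S, rfl⟩ := W.signed_form hb
  have h1 : ∀ m ∈ moves a, (sec p)⁻¹ * m * sec p ∈ moves a := by
    rintro _ ⟨i, j, b, hij, rfl⟩
    have hij' : p⁻¹ i ≠ p⁻¹ j := fun h => hij ((p⁻¹).injective h)
    refine ⟨p⁻¹ i, p⁻¹ j, b, hij', ?_⟩
    have := W.sec_a p _ _ hij'
    rw [← Equiv.Perm.mul_apply, ← Equiv.Perm.mul_apply, mul_inv_cancel, Equiv.Perm.one_apply,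
      Equiv.Perm.one_apply] at this
    have h2 : a i j = sec p * a (p⁻¹ i) (p⁻¹ j) * (sec p)⁻¹ := by rw [this]; group
    rw [h2]
    cases b <;> simp only [ipow, Bool.false_eq_true, if_false, if_true] <;> group
  have h2 : ∀ c, ∀ m ∈ moves a, (t c)⁻¹ * m * t c ∈ moves a := by
    rintro c _ ⟨i, j, b, hij, rfl⟩
    have h := W.t_a c i j hij
    have h3 : (t c)⁻¹ * a i j * t c = if c = j then (a i j)⁻¹ else a i j := by
      rw [W.t_inv c, h, mul_assoc, W.t2, mul_one]
    have h4 : (t c)⁻¹ * (a i j)⁻¹ * t c = ((t c)⁻¹ * a i j * t c)⁻¹ := by group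
    by_cases hc : c = j
    · rw [if_pos hc] at h3
      refine ⟨i, j, !b, hij, ?_⟩
      cases b <;> simp [ipow, h4, h3]
    · rw [if_neg hc] at h3
      refine ⟨i, j, b, hij, ?_⟩
      cases b <;> simp [ipow, h4, h3]
  have h3 : ∀ m ∈ moves a, (W.tS S)⁻¹ * m * W.tS S ∈ moves a := by
    induction S using Finset.induction with
    | empty => intro m hm; simpa [W.tS_empty] using hm
    | insert c S hc ih =>
      intro m hm
      have := ih (mul_mem (sec_mem p) (W.tS_mem S)) _ (h2 c m hm)
      rw [W.tS_insert hc]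
      convert this using 1; group
  intro m hm
  have := h3 _ (h1 m hm)
  convert this using 1; group

/-! #### The peak reduction diagrams -/

/-- The moves available from an element of `G`, seen on the images of the generators. -/
lemma low_step {N : ℕ} {g : G} {u : ι → FreeGroup ι} [Fintype ι]
    (hu : (fun k => φ g (of k)) = u) {i j : ι} (hij : i ≠ j) (b : Bool)
    (h1 : nu u < N) (h2 : nu (Function.update u i (tr u i j b)) < N) :
    LowStep φ (fun f => nu fun k => f (of k)) (moves a) N g (g * ipow (a i j) b) := by
  refine ⟨_, ⟨i, j, b, hij, rfl⟩, rfl, ?_, ?_⟩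
  · simpa only [hu] using h1
  · simp only [_root_.map_mul, W.tuple_mul _ hij, hu]
    exact h2

lemma tuple_mul' {g : G} {u : ι → FreeGroup ι} (hu : (fun k => φ g (of k)) = u) {i j : ι}
    (hij : i ≠ j) (b : Bool) :
    (fun k => φ (g * ipow (a i j) b) (of k)) = Function.update u i (tr u i j b) := by
  rw [_root_.map_mul, W.tuple_mul _ hij, hu]

/-- Two shortenings of different entries, neither using the other entry, commute. -/
lemma diamond [Fintype ι] {g : G} {i j k l : ι} {b e : Bool} (hij : i ≠ j) (hkl : k ≠ l)
    (hik : i ≠ k) (hil : i ≠ l) (hkj : k ≠ j) {u : ι → FreeGroup ι}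
    (hu : (fun k => φ g (of k)) = u)
    (h1 : FreeGroup.norm (tr u i j b) < FreeGroup.norm (u i))
    (h2 : FreeGroup.norm (tr u k l e) < FreeGroup.norm (u k)) :
    ∃ z, Relation.ReflTransGen (LowStep φ (fun f => nu fun k => f (of k)) (moves a) (nu u))
        (g * ipow (a i j) b) z ∧
      Relation.ReflTransGen (LowStep φ (fun f => nu fun k => f (of k)) (moves a) (nu u))
        (g * ipow (a k l) e) z := by
  have hc : Commute (ipow (a i j) b) (ipow (a k l) e) := by
    have : Commute (a i j) (a k l) := by
      by_cases hjl : j = l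
      · subst hjl; exact W.comm' i j k hij hik hkj.symm
      · exact W.comm i j k l hij hik hil hkj.symm hjl hkl
    exact (commute_ipow (commute_ipow this e).symm b).symm
  have n1 := nu_update u i (tr u i j b)
  have n2 := nu_update u k (tr u k l e)
  have n3 := nu_update (Function.update u i (tr u i j b)) k (tr u k l e)
  have n4 := nu_update (Function.update u k (tr u k l e)) i (tr u i j b)
  rw [Function.update_of_ne hik.symm] at n3
  rw [Function.update_of_ne hik] at n4
  have e3 : tr (Function.update u i (tr u i j b)) k l e = tr u k l e := by
    simp only [tr, Function.update_of_ne hik.symm, Function.update_of_ne hil.symm]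
  have e4 : tr (Function.update u k (tr u k l e)) i j b = tr u i j b := by
    simp only [tr, Function.update_of_ne hik, Function.update_of_ne hkj.symm]
  refine ⟨g * ipow (a i j) b * ipow (a k l) e, Relation.ReflTransGen.single ?_, ?_⟩
  · exact W.low_step (W.tuple_mul' hu hij b) hkl e (by omega) (by rw [e3]; omega)
  · rw [mul_assoc, hc.eq, ← mul_assoc]
    refine Relation.ReflTransGen.single ?_
    exact W.low_step (W.tuple_mul' hu hkl e) hij b (by omega) (by rw [e4]; omega)

/-- If the `i`-th entry can be shortened by the `j`-th and the `j`-th by the `l`-th, then the three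
moves `(i, j)`, `(j, l)` and `(i, l)` can all be completed below the peak to the same product. -/
lemma triangle [Fintype ι] {g : G} {i j l : ι} {b e : Bool} (hij : i ≠ j) (hil : i ≠ l)
    (hjl : j ≠ l) {u : ι → FreeGroup ι} {c : ι → ι × Bool} {w : ι → List (ι × Bool)}
    {v v' : List (ι × Bool)}
    (hu : (fun k => φ g (of k)) = u) (h : NF u c w)
    (h1 : w i = v ++ bar (pw (c j) b) :: w j) (h2 : w j = v' ++ bar (pw (c l) e) :: w l) :
    ∃ z, Relation.ReflTransGen (LowStep φ (fun f => nu fun k => f (of k)) (moves a) (nu u))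
        (g * ipow (a i j) b) z ∧
      Relation.ReflTransGen (LowStep φ (fun f => nu fun k => f (of k)) (moves a) (nu u))
        (g * ipow (a j l) e) z ∧
      Relation.ReflTransGen (LowStep φ (fun f => nu fun k => f (of k)) (moves a) (nu u))
        (g * ipow (a i l) e) z := by
  have m1 := (h.lt_iff hij b).2 ⟨v, h1⟩
  have m2 := (h.lt_iff hjl e).2 ⟨v', h2⟩
  have m3 := (h.lt_iff hil e).2 ⟨v ++ bar (pw (c j) b) :: v', by rw [h1, h2]; simp⟩
  have m4 := h.twice h1 h2
  set A := ipow (a i j) b with hA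
  set B := ipow (a j l) e with hB
  set C := ipow (a i l) e with hC
  have cBC : Commute B C := by
    have := W.comm' j l i hjl hij.symm hil.symm
    exact (commute_ipow (commute_ipow this e).symm e).symm
  have cA : Commute A (B * C) := by
    have h3 := W.tri i l j hil hij hjl.symm
    have h4 : B * C = ipow (a i l * a j l) e := by
      have := W.comm' i l j hil hij hjl.symm
      cases e
      · simp [hB, hC, ipow]
      · simp [hB, hC, ipow, this.eq]
    rw [h4]
    exact commute_ipow (commute_ipow h3 b).symm e
  -- the tuples after one and two moves
  have tA := W.tuple_mul' hu hij b
  have tB := W.tuple_mul' hu hjl e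
  have tC := W.tuple_mul' hu hil e
  have tAB := W.tuple_mul' tA hjl e
  have tBC := W.tuple_mul' tB hil e
  have eB : tr (Function.update u i (tr u i j b)) j l e = tr u j l e := by
    simp only [tr, Function.update_of_ne hij.symm, Function.update_of_ne hil.symm]
  have eC : tr (Function.update u j (tr u j l e)) i l e = tr u i l e := by
    simp only [tr, Function.update_of_ne hij, Function.update_of_ne hjl.symm]
  have eB' : tr (Function.update u i (tr u i l e)) j l e = tr u j l e := by
    simp only [tr, Function.update_of_ne hij.symm, Function.update_of_ne hil.symm]
  rw [eB] at tAB
  rw [eC] at tBC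
  have eABC : tr (Function.update (Function.update u i (tr u i j b)) j (tr u j l e)) i l e =
      (ipow (u l) e)⁻¹ * tr u i j b * ipow (u l) e := by
    rw [tr, Function.update_of_ne hij, Function.update_self, Function.update_of_ne hjl.symm,
      Function.update_of_ne hil.symm]
  have tABC := W.tuple_mul' tAB hil e
  rw [eABC] at tABC
  have tBCA := W.tuple_mul' tBC hij b
  have eq1 : g * B * C * A = g * A * B * C := by
    rw [mul_assoc g A B, mul_assoc g (A * B) C, mul_assoc A B C, cA.eq]
    simp only [mul_assoc]
  have eq2 : g * C * B = g * B * C := by rw [mul_assoc, ← cBC.eq, mul_assoc]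
  have n1 := nu_update u i (tr u i j b)
  have n2 := nu_update u j (tr u j l e)
  have n3 := nu_update u i (tr u i l e)
  have n4 := nu_update (Function.update u i (tr u i j b)) j (tr u j l e)
  have n5 := nu_update (Function.update u j (tr u j l e)) i (tr u i l e)
  have n6 := nu_update (Function.update (Function.update u i (tr u i j b)) j (tr u j l e)) i
    ((ipow (u l) e)⁻¹ * tr u i j b * ipow (u l) e)
  have n7 := nu_update (Function.update u i (tr u i l e)) j (tr u j l e)
  rw [Function.update_of_ne hij.symm] at n4 n7
  rw [Function.update_of_ne hij] at n5
  rw [Function.update_of_ne hij, Function.update_self] at n6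
  have last : LowStep φ (fun f => nu fun k => f (of k)) (moves a) (nu u) (g * B * C)
      (g * B * C * A) := by
    refine W.low_step tBC hij b (by omega) ?_
    rw [← tBCA, eq1, tABC]
    omega
  refine ⟨g * A * B * C, ?_, ?_, ?_⟩
  · exact (Relation.ReflTransGen.single (W.low_step tA hjl e (by omega) (by rw [eB]; omega))).tail
      (W.low_step tAB hil e (by omega) (by rw [eABC]; omega))
  · rw [← eq1]
    exact (Relation.ReflTransGen.single
      (W.low_step tB hil e (by omega) (by rw [eC]; omega))).tail last
  · rw [← eq1]
    refine (Relation.ReflTransGen.single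
      (W.low_step tC hjl e (by omega) (by rw [eB']; omega))).tail ?_
    rw [← hB, ← hC, eq2]
    exact last

/-- Any two moves that shorten the tuple of images of the generators can be joined below it. -/
lemma join [Fintype ι] {g : G} (hg : φ g ∈ pcStar ι) {i j k l : ι} {b e : Bool}
    (hij : i ≠ j) (hkl : k ≠ l) {u : ι → FreeGroup ι} (hu : (fun k => φ g (of k)) = u)
    (h1 : FreeGroup.norm (tr u i j b) < FreeGroup.norm (u i))
    (h2 : FreeGroup.norm (tr u k l e) < FreeGroup.norm (u k)) :
    ∃ z, Relation.ReflTransGen (LowStep φ (fun f => nu fun k => f (of k)) (moves a) (nu u))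
        (g * ipow (a i j) b) z ∧
      Relation.ReflTransGen (LowStep φ (fun f => nu fun k => f (of k)) (moves a) (nu u))
        (g * ipow (a k l) e) z := by
  obtain ⟨c, w, h⟩ := exists_nf hg
  rw [hu] at h
  obtain ⟨v, hv⟩ := (h.lt_iff hij b).1 h1
  obtain ⟨v', hv'⟩ := (h.lt_iff hkl e).1 h2
  by_cases hik : i = k
  · subst hik
    by_cases hjl : j = l
    · subst hjl
      have hbe : b = e := by
        rw [hv] at hv'
        have := (List.append_inj' hv' (by simp)).2
        simp only [List.cons.injEq, and_true] at this
        have := congrArg Prod.snd this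
        clear hv hv' h1 h2
        cases b <;> cases e <;> simp [pw, bar] at this ⊢
      subst hbe
      exact ⟨_, .refl, .refl⟩
    · -- the shorter of the two conjugating words is a suffix of the longer
      have key : ∀ j l b e v v', j ≠ l → w i = v ++ bar (pw (c j) b) :: w j →
          w i = v' ++ bar (pw (c l) e) :: w l → (w l).length ≤ (w j).length →
          ∃ v'', w j = v'' ++ bar (pw (c l) e) :: w l := by
        intro j l b e v v' hjl hv hv' hlen
        have hs : bar (pw (c l) e) :: w l <:+ bar (pw (c j) b) :: w j :=
          List.suffix_of_suffix_length_le ⟨v', hv'.symm⟩ ⟨v, hv.symm⟩ (by simpa using hlen)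
        rcases List.suffix_cons_iff.1 hs with heq | ⟨v'', h''⟩
        · simp only [List.cons.injEq] at heq
          exact absurd (h.inj (by simpa [bar, pw_fst] using congrArg Prod.fst heq.1)).symm hjl
        · exact ⟨v'', h''.symm⟩
      rcases le_total (w l).length (w j).length with hlen | hlen
      · obtain ⟨v'', h''⟩ := key j l b e v v' hjl hv hv' hlen
        obtain ⟨z, z1, -, z3⟩ := W.triangle hij hkl hjl hu h hv h''
        exact ⟨z, z1, z3⟩
      · obtain ⟨v'', h''⟩ := key l j e b v' v (Ne.symm hjl) hv' hv hlen
        obtain ⟨z, z1, -, z3⟩ := W.triangle hkl hij (Ne.symm hjl) hu h hv' h''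
        exact ⟨z, z3, z1⟩
  · by_cases hjk : j = k
    · subst hjk
      by_cases hil : i = l
      · subst hil
        have l1 := congrArg List.length hv
        have l2 := congrArg List.length hv'
        simp at l1 l2
        omega
      · obtain ⟨z, z1, z2, -⟩ := W.triangle hij hil hkl hu h hv hv'
        exact ⟨z, z1, z2⟩
    · by_cases hil : i = l
      · subst hil
        obtain ⟨z, z1, z2, -⟩ := W.triangle hkl (Ne.symm hjk) hij hu h hv' hv
        exact ⟨z, z2, z1⟩
      · exact W.diamond hij hkl hik hil (Ne.symm hjk) hu h1 h2

lemma nu_lt_iff [Fintype ι] (f : MulAut (FreeGroup ι)) {i j : ι} (hij : i ≠ j) (b : Bool) :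
    (nu fun k => (f * φ (ipow (a i j) b)) (of k)) < (nu fun k => f (of k)) ↔
      FreeGroup.norm (tr (fun k => f (of k)) i j b) < FreeGroup.norm (f (of i)) := by
  have := nu_update (fun k => f (of k)) i (tr (fun k => f (of k)) i j b)
  rw [W.tuple_mul f hij b]
  omega

/-- An automorphism sending the generators to letters, no two of them equal or mutually inverse,
comes from a signed permutation. -/
lemma exists_signed [Fintype ι] {f : MulAut (FreeGroup ι)} {c : ι → ι × Bool}
    (hc : Function.Injective fun i => (c i).1) (hf : ∀ i, f (of i) = FreeGroup.mk [c i]) :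
    ∃ b ∈ signed sec t, f = φ b := by
  let p : Equiv.Perm ι := Equiv.ofBijective _ (Finite.injective_iff_bijective.1 hc)
  let S : Finset ι := Finset.univ.filter fun i => (c i).2 = false
  refine ⟨sec p * W.tS S, mul_mem (sec_mem p) (W.tS_mem S), ?_⟩
  have : f.toMonoidHom = (φ (sec p * W.tS S)).toMonoidHom := by
    ext i
    change f (of i) = φ (sec p * W.tS S) (of i)
    rw [hf, W.φ_signed]
    have hp : p i = (c i).1 := rfl
    have hS : i ∈ S ↔ (c i).2 = false := by simp [S]
    rw [hp]
    cases h : (c i).2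
    · rw [if_pos (hS.2 h)]
      have : c i = bar ((c i).1, true) := Prod.ext rfl (by simp [bar, h])
      rw [this, mk_bar]; rfl
    · rw [if_neg (by rw [hS, h]; simp)]
      have : c i = ((c i).1, true) := Prod.ext rfl (by simp [h])
      rw [this]; rfl
  exact MulEquiv.ext fun x => DFunLike.congr_fun this x

/-- The action is faithful on the subgroup generated by the partial conjugations and the signed
permutations. -/
theorem faithful [Fintype ι] (hpc : ∀ g, φ g ∈ pcStar ι) :
    ∀ g ∈ Subgroup.closure (moves a ∪ signed sec t), φ g = 1 → g = 1 := by
  have hμB : ∀ g, ∀ b ∈ signed sec t, ((nu fun k => φ (g * b) (of k)) = nu fun k => φ g (of k)) := by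
    intro g b hb
    obtain ⟨p, S, rfl⟩ := W.signed_form hb
    have : ∀ k, FreeGroup.norm (φ (g * (sec p * W.tS S)) (of k)) =
        FreeGroup.norm (φ g (of (p k))) := by
      intro k
      rw [_root_.map_mul, MulAut.mul_apply, W.φ_signed]
      split
      · rw [_root_.map_inv, norm_inv_eq]
      · rfl
    simp only [nu, this]
    exact Equiv.sum_comp p fun k => FreeGroup.norm (φ g (of k))
  refine peak_reduction φ (fun f => nu fun k => f (of k)) (moves a) (signed sec t)
    ?_ ?_ ?_ hμB ?_ ?_ ?_ ?_
  · rintro _ ⟨i, j, b, hij, rfl⟩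
    exact ⟨i, j, !b, hij, by cases b <;> simp [ipow]⟩
  · rintro g _ ⟨i, j, b, hij, rfl⟩
    obtain ⟨c, w, h⟩ := exists_nf (hpc g)
    have h1 := h.ne hij b
    have := nu_update (fun k => φ g (of k)) i (tr (fun k => φ g (of k)) i j b)
    simp only [_root_.map_mul, W.tuple_mul (φ g) hij b]
    omega
  · intro b hb
    exact W.conj_moves hb
  · intro g
    rcases reducing_or_letters (hpc g) with ⟨i, j, b, hij, h⟩ | ⟨c, hc, hf⟩
    · left
      refine ⟨_, ⟨i, j, b, hij, rfl⟩, ?_⟩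
      simp only [_root_.map_mul]
      exact (W.nu_lt_iff _ hij b).2 h
    · exact Or.inr (W.exists_signed hc hf)
  · rintro b hb _ ⟨i, j, e, hij, rfl⟩ hlt
    simp only [_root_.map_mul] at hlt
    rw [W.nu_lt_iff _ hij e] at hlt
    obtain ⟨p, S, rfl⟩ := W.signed_form hb
    have h1 : FreeGroup.norm (φ (sec p * W.tS S) (of i)) = 1 := by
      rw [W.φ_signed]; split <;> simp
    have h2 : tr (fun k => φ (sec p * W.tS S) (of k)) i j e = 1 := by
      rw [h1] at hlt
      exact norm_eq_zero.1 (by omega)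
    have h3 : φ (sec p * W.tS S) (of i) = 1 := by
      rw [tr, mul_assoc, inv_mul_eq_one] at h2
      simpa using h2.symm
    rw [h3, FreeGroup.norm_one] at h1
    omega
  · rintro g _ ⟨i, j, b, hij, rfl⟩ _ ⟨k, l, e, hkl, rfl⟩ h1 h2
    simp only [_root_.map_mul] at h1 h2
    rw [W.nu_lt_iff _ hij b] at h1
    rw [W.nu_lt_iff _ hkl e] at h2
    exact W.join (hpc g) hij hkl rfl h1 h2
  · intro b hb
    exact W.signed_inj hb

/-- Every automorphism in `pcStar` lies in the image of the action. -/
theorem surjective [Fintype ι] (hpc : ∀ g, φ g ∈ pcStar ι) (f : MulAut (FreeGroup ι))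
    (hf : f ∈ pcStar ι) : ∃ g, φ g = f := by
  induction hN : (nu fun k => f (of k)) using Nat.strong_induction_on generalizing f with
  | _ N ih =>
    rcases reducing_or_letters hf with ⟨i, j, b, hij, h⟩ | ⟨c, hc, h⟩
    · subst hN
      obtain ⟨g, hg⟩ := ih _ ((W.nu_lt_iff f hij b).2 h) _ (mul_mem hf (hpc _)) rfl
      exact ⟨g * (ipow (a i j) b)⁻¹, by rw [_root_.map_mul, hg, _root_.map_inv]; group⟩
    · obtain ⟨b, -, h⟩ := W.exists_signed hc h
      exact ⟨b, h.symm⟩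

end WeldedAction
end Action

/-! ### The generators of the presentation acting on the free group -/

section Final

open FreeGroup

variable {m : ℕ}

lemma xg_val (i : Fin (m + 1)) : xg (m + 1) i = of i := by simp [xg, Nat.lt_succ_iff.1 i.2]

lemma aut_ext {f g : MulAut (FreeGroup (Fin (m + 1)))}
    (h : ∀ v, f (xg (m + 1) v) = g (xg (m + 1) v)) : f = g := by
  have : f.toMonoidHom = g.toMonoidHom := by
    ext i
    have := h i
    rwa [xg_val] at this
  exact MulEquiv.ext fun x => DFunLike.congr_fun this x

lemma sigma_apply {k : ℕ} {f : MulAut (FreeGroup (Fin (m + 1)))} (h : IsSigma (m + 1) k f) (v : ℕ) :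
    f (xg (m + 1) v) = if v = k then xg (m + 1) (k + 1) else if v = k + 1 then
      (xg (m + 1) (k + 1))⁻¹ * xg (m + 1) k * xg (m + 1) (k + 1) else xg (m + 1) v := by
  obtain ⟨h1, h2, h3⟩ := h
  split_ifs with hv hv'
  · rw [hv, h1]
  · rw [hv', h2]
  · by_cases hm : v < m + 1
    · exact h3 v hm hv hv'
    · simp [xg, hm]

lemma rho_apply {k : ℕ} {f : MulAut (FreeGroup (Fin (m + 1)))} (h : IsRho (m + 1) k f) (v : ℕ) :
    f (xg (m + 1) v) = if v = k then xg (m + 1) (k + 1) else if v = k + 1 then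
      xg (m + 1) k else xg (m + 1) v := by
  obtain ⟨h1, h2, h3⟩ := h
  split_ifs with hv hv'
  · rw [hv, h1]
  · rw [hv', h2]
  · by_cases hm : v < m + 1
    · exact h3 v hm hv hv'
    · simp [xg, hm]

lemma tau_apply {k : ℕ} {f : MulAut (FreeGroup (Fin (m + 1)))} (h : IsTau (m + 1) k f) (v : ℕ) :
    f (xg (m + 1) v) = if v = k then (xg (m + 1) k)⁻¹ else xg (m + 1) v := by
  obtain ⟨h1, h3⟩ := h
  split_ifs with hv
  · rw [hv, h1]
  · by_cases hm : v < m + 1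
    · exact h3 v hm hv
    · simp [xg, hm]

/-- The automorphisms `σ_i`, `ρ_i`, `τ_i` satisfy the relations of the presentation. -/
lemma rels_aut {σ ρ τ : ℕ → MulAut (FreeGroup (Fin (m + 1)))}
    (hσ : ∀ i, i + 1 < m + 1 → IsSigma (m + 1) i (σ i))
    (hρ : ∀ i, i + 1 < m + 1 → IsRho (m + 1) i (ρ i))
    (hτ : ∀ i, i < m + 1 → IsTau (m + 1) i (τ i)) :
    Rels (fun i : Fin m => σ i) (fun i : Fin m => ρ i) (fun i : Fin (m + 1) => τ i) := by
  have s (k : Fin m) := sigma_apply (hσ k (by omega))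
  have r (k : Fin m) := rho_apply (hρ k (by omega))
  have t (k : Fin (m + 1)) := tau_apply (hτ k (by omega))
  have far : ∀ (i j : Fin m) (v : ℕ), ((i : ℕ) + 1 < j ∨ (j : ℕ) + 1 < i) →
      ((i : ℕ) ≠ j ∧ (i : ℕ) ≠ j + 1 ∧ (i : ℕ) + 1 ≠ j ∧ (j : ℕ) ≠ i ∧ (j : ℕ) ≠ i + 1 ∧
        (j : ℕ) + 1 ≠ i) ∧ (v = i ∨ v = i + 1 ∨ v = j ∨ v = j + 1 ∨
          (v ≠ i ∧ v ≠ i + 1 ∧ v ≠ j ∧ v ≠ j + 1)) := by omega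
  have far' : ∀ (i : Fin m) (j : Fin (m + 1)) (v : ℕ), ((i : ℕ) + 1 < j ∨ (j : ℕ) + 1 < i) →
      ((i : ℕ) ≠ j ∧ (i : ℕ) + 1 ≠ j ∧ (j : ℕ) ≠ i ∧ (j : ℕ) ≠ i + 1) ∧
        (v = i ∨ v = i + 1 ∨ v = j ∨ (v ≠ i ∧ v ≠ i + 1 ∧ v ≠ j)) := by omega
  have near : ∀ i v : ℕ, v = i ∨ v = i + 1 ∨ v = i + 1 + 1 ∨
      (v ≠ i ∧ v ≠ i + 1 ∧ v ≠ i + 1 + 1) := by omega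
  have e1 : ∀ i : ℕ, i + 1 + 1 ≠ i := by omega
  have e2 : ∀ i : ℕ, i ≠ i + 1 + 1 := by omega
  have near' : ∀ i v : ℕ, v = i ∨ v = i + 1 ∨ (v ≠ i ∧ v ≠ i + 1) := by omega
  constructor
  · intro i j h
    refine aut_ext fun v => ?_
    simp only [MulAut.mul_apply, s]
    obtain ⟨⟨h1, h2, h3, h4, h5, h6⟩, rfl | rfl | rfl | rfl | ⟨v1, v2, v3, v4⟩⟩ := far i j v h <;>
      simp [*]
  · intro i j h
    refine aut_ext fun v => ?_
    have sj := s j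
    rw [h] at sj
    simp only [MulAut.mul_apply, h]
    rcases near i v with rfl | rfl | rfl | ⟨v1, v2, v3⟩ <;>
      simp [*, mul_assoc]
  · intro i j h
    refine aut_ext fun v => ?_
    simp only [MulAut.mul_apply, r]
    obtain ⟨⟨h1, h2, h3, h4, h5, h6⟩, rfl | rfl | rfl | rfl | ⟨v1, v2, v3, v4⟩⟩ := far i j v h <;>
      simp [*]
  · intro i j h
    refine aut_ext fun v => ?_
    have rj := r j
    rw [h] at rj
    simp only [MulAut.mul_apply, h]
    rcases near i v with rfl | rfl | rfl | ⟨v1, v2, v3⟩ <;>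
      simp [*]
  · intro i
    refine aut_ext fun v => ?_
    simp only [MulAut.mul_apply, r]
    rcases near' i v with rfl | rfl | ⟨v1, v2⟩ <;> simp [*]
  · intro i j h
    refine aut_ext fun v => ?_
    simp only [MulAut.mul_apply, r, s]
    obtain ⟨⟨h1, h2, h3, h4, h5, h6⟩, rfl | rfl | rfl | rfl | ⟨v1, v2, v3, v4⟩⟩ := far i j v h <;>
      simp [*]
  · intro i j h
    refine aut_ext fun v => ?_
    have rj := r j
    have sj := s j
    rw [h] at rj sj
    simp only [MulAut.mul_apply, h]
    rcases near i v with rfl | rfl | rfl | ⟨v1, v2, v3⟩ <;>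
      simp [*, mul_assoc]
  · intro i j h
    refine aut_ext fun v => ?_
    have rj := r j
    have sj := s j
    rw [h] at rj sj
    simp only [MulAut.mul_apply, h]
    rcases near i v with rfl | rfl | rfl | ⟨v1, v2, v3⟩ <;>
      simp [*, mul_assoc]
  · intro a b h
    refine aut_ext fun v => ?_
    have h1 : (a : ℕ) ≠ b := fun e => h (Fin.ext e)
    simp only [MulAut.mul_apply, t]
    by_cases v1 : v = a
    · simp [t, v1, h1]
    · by_cases v2 : v = b <;> simp [t, v1, v2, h1.symm]
  · intro a
    refine aut_ext fun v => ?_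
    simp only [MulAut.mul_apply, t]
    by_cases v1 : v = a <;> simp [t, v1]
  · intro i a h
    refine aut_ext fun v => ?_
    simp only [MulAut.mul_apply, s, t]
    obtain ⟨⟨h1, h2, h3, h4⟩, rfl | rfl | rfl | ⟨v1, v2, v3⟩⟩ := far' i a v h <;> simp [*]
  · intro i a h
    refine aut_ext fun v => ?_
    simp only [MulAut.mul_apply, r, t]
    obtain ⟨⟨h1, h2, h3, h4⟩, rfl | rfl | rfl | ⟨v1, v2, v3⟩⟩ := far' i a v h <;> simp [*]
  all_goals
    intro i
    refine aut_ext fun v => ?_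
    have t1 := t i.castSucc
    have t2 := t i.succ
    simp only [Fin.val_castSucc, Fin.val_succ] at t1 t2
    simp only [MulAut.mul_apply, s, r, t1, t2, Fin.val_castSucc, Fin.val_succ]
    rcases near' i v with rfl | rfl | ⟨v1, v2⟩ <;> simp [*, mul_assoc]

section Presentation

variable {H : Type*} [Group H]

/-- The values on the generators of a homomorphism from the presented group. -/
def genMap (s r : Fin m → H) (t : Fin (m + 1) → H) :
    Fin (m + 1 - 1) ⊕ Fin (m + 1 - 1) ⊕ Fin (m + 1) → H :=
  Sum.elim s (Sum.elim r t)

/-- The universal property of the presented group. -/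
lemma Rels.lift_eq_one {s r : Fin m → H} {t : Fin (m + 1) → H} (R : Rels s r t) :
    ∀ z ∈ extWeldedRels (m + 1), lift (genMap s r t) z = 1 := by
  have hs (i) : lift (genMap s r t) (eS (m + 1) i) = s i := lift_apply_of
  have hr (i) : lift (genMap s r t) (eR (m + 1) i) = r i := lift_apply_of
  have ht (i) : lift (genMap s r t) (eT (m + 1) i) = t i := lift_apply_of
  rintro z (⟨i, j, h, rfl⟩ | ⟨i, j, h, rfl⟩ | ⟨i, j, h, rfl⟩ | ⟨i, j, h, rfl⟩ | ⟨i, rfl⟩ |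
    ⟨i, j, h, rfl⟩ | ⟨i, j, h, rfl⟩ | ⟨i, j, h, rfl⟩ | ⟨i, j, h, rfl⟩ | ⟨i, rfl⟩ | ⟨i, j, h, rfl⟩ |
    ⟨i, j, h, rfl⟩ | ⟨i, a, b, ha, hb, rfl⟩ | ⟨i, a, b, ha, hb, rfl⟩ | ⟨i, a, b, ha, hb, rfl⟩) <;>
    simp only [_root_.map_mul, _root_.map_inv, hs, hr, ht]
  · exact mul_inv_eq_one.2 (R.ss i j h)
  · exact mul_inv_eq_one.2 (R.sss i j h)
  · exact mul_inv_eq_one.2 (R.rr i j h)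
  · exact mul_inv_eq_one.2 (R.rrr i j h)
  · exact R.r2 i
  · exact mul_inv_eq_one.2 (R.rs i j h)
  · exact mul_inv_eq_one.2 (R.rrs i j h)
  · exact mul_inv_eq_one.2 (R.ssr i j h)
  · exact mul_inv_eq_one.2 (R.tt i j h)
  · exact R.t2 i
  · exact mul_inv_eq_one.2 (R.st i j h)
  · exact mul_inv_eq_one.2 (R.rt i j h)
  all_goals
    obtain rfl : a = Fin.castSucc (n := m) i := Fin.ext ha
    obtain rfl : b = Fin.succ (n := m) i := Fin.ext hb
    refine mul_inv_eq_one.2 ?_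
  · exact R.tr i
  · exact R.ts i
  · have h1 := R.tsr i
    have h2 := R.r2 i
    have h3 : t (Fin.succ (n := m) i) * s i = (s i * r i)⁻¹ * (r i * t (Fin.castSucc (n := m) i)) := by
      rw [← h1]; group
    have h4 : (r i)⁻¹ = r i := inv_eq_of_mul_eq_one_left h2
    rw [h3, mul_inv_rev, h4]; group

end Presentation

/-- The generators of the presented group satisfy the relations. -/
lemma rels_presented : Rels (m := m) (G := PresentedGroup (extWeldedRels (m + 1)))
    (fun i => PresentedGroup.of (Sum.inl i)) (fun i => PresentedGroup.of (Sum.inr (Sum.inl i)))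
    (fun i => PresentedGroup.of (Sum.inr (Sum.inr i))) := by
  have key : ∀ x y : FreeGroup _, x * y⁻¹ ∈ extWeldedRels (m + 1) →
      PresentedGroup.mk (extWeldedRels (m + 1)) x = PresentedGroup.mk (extWeldedRels (m + 1)) y :=
    fun x y h => PresentedGroup.mk_eq_mk_of_mul_inv_mem h
  have one : ∀ x : FreeGroup _, x ∈ extWeldedRels (m + 1) →
      PresentedGroup.mk (extWeldedRels (m + 1)) x = 1 :=
    fun x h => PresentedGroup.one_of_mem h
  have r2 : ∀ i : Fin m, PresentedGroup.of (rels := extWeldedRels (m + 1)) (Sum.inr (Sum.inl i)) *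
      PresentedGroup.of (Sum.inr (Sum.inl i)) = 1 := fun i =>
    one _ (by right; right; right; right; left; exact ⟨i, rfl⟩)
  constructor
  · exact fun i j h => key _ _ (Or.inl ⟨i, j, h, rfl⟩)
  · exact fun i j h => key _ _ (by right; left; exact ⟨i, j, h, rfl⟩)
  · exact fun i j h => key _ _ (by right; right; left; exact ⟨i, j, h, rfl⟩)
  · exact fun i j h => key _ _ (by right; right; right; left; exact ⟨i, j, h, rfl⟩)
  · exact r2
  · exact fun i j h => key _ _ (by iterate 5 right
                                   left; exact ⟨i, j, h, rfl⟩)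
  · exact fun i j h => key _ _ (by iterate 6 right
                                   left; exact ⟨i, j, h, rfl⟩)
  · exact fun i j h => key _ _ (by iterate 7 right
                                   left; exact ⟨i, j, h, rfl⟩)
  · exact fun i j h => key _ _ (by iterate 8 right
                                   left; exact ⟨i, j, h, rfl⟩)
  · exact fun i => one _ (by iterate 9 right
                             left; exact ⟨i, rfl⟩)
  · exact fun i j h => key _ _ (by iterate 10 right
                                   left; exact ⟨i, j, h, rfl⟩)
  · exact fun i j h => key _ _ (by iterate 11 right
                                   left; exact ⟨i, j, h, rfl⟩)
  · exact fun i => key _ _ (by iterate 12 right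
                               left; exact ⟨i, i.castSucc, i.succ, rfl, rfl, rfl⟩)
  · exact fun i => key _ _ (by iterate 13 right
                               left; exact ⟨i, i.castSucc, i.succ, rfl, rfl, rfl⟩)
  · intro i
    have h : PresentedGroup.of (rels := extWeldedRels (m + 1)) (Sum.inr (Sum.inr i.succ)) *
        PresentedGroup.of (Sum.inl i) = PresentedGroup.of (Sum.inr (Sum.inl i)) *
        (PresentedGroup.of (Sum.inl i))⁻¹ * PresentedGroup.of (Sum.inr (Sum.inl i)) *
        PresentedGroup.of (Sum.inr (Sum.inr i.castSucc)) :=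
      key (eT (m + 1) i.succ * eS (m + 1) i)
        (eR (m + 1) i * (eS (m + 1) i)⁻¹ * eR (m + 1) i * eT (m + 1) i.castSucc)
        (by iterate 14 right
            exact ⟨i, i.castSucc, i.succ, rfl, rfl, rfl⟩)
    have h4 := inv_eq_of_mul_eq_one_left (r2 i)
    rw [mul_assoc, h]
    nth_rewrite 2 [← h4]
    group

end Final

/-! ### The presented group and its image -/

section Assembly

open FreeGroup

variable {m : ℕ}

/-- The symmetric group inside a group satisfying the relations, the `t_i`, and the partial
conjugations obtained from the `s_k r_k`, form a `WeldedAction`. -/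
lemma weldedAction {G : Type*} [Group G] {s r : Fin m → G} {t : Fin (m + 1) → G} (R : Rels s r t)
    {σ ρ τ : ℕ → MulAut (FreeGroup (Fin (m + 1)))}
    (hσ : ∀ i, i + 1 < m + 1 → IsSigma (m + 1) i (σ i))
    (hρ : ∀ i, i + 1 < m + 1 → IsRho (m + 1) i (ρ i))
    (hτ : ∀ i, i < m + 1 → IsTau (m + 1) i (τ i))
    {φ : G →* MulAut (FreeGroup (Fin (m + 1)))}
    (φs : ∀ i : Fin m, φ (s i) = σ i) (φr : ∀ i : Fin m, φ (r i) = ρ i)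
    (φt : ∀ i : Fin (m + 1), φ (t i) = τ i)
    {sec : Equiv.Perm (Fin (m + 1)) →* G} (hsec : ∀ k, sec (adj k) = r k)
    {a : Fin (m + 1) → Fin (m + 1) → G} (ha : ∀ k : Fin m, a k.castSucc k.succ = s k * r k)
    (hp : ∀ p i j, i ≠ j → sec p * a i j = a (p i) (p j) * sec p) :
    WeldedAction sec t a φ := by
  have φ_r : ∀ (k : Fin m) i, φ (r k) (of i) = of (adj k i) := by
    intro k i
    rw [φr, ← xg_val, ← xg_val, rho_apply (hρ k (by omega)), adj_val]
    split_ifs <;> rfl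
  have φ_sec : ∀ p i, φ (sec p) (of i) = of (p i) := by
    intro p
    induction p using perm_induction with
    | one => simp
    | mul k p ih =>
      intro i
      rw [_root_.map_mul, _root_.map_mul, MulAut.mul_apply, ih, hsec, φ_r]; rfl
  have φ_adj : ∀ (k : Fin m) v, φ (a k.castSucc k.succ) (of v) =
      if v = k.castSucc then (of k.succ)⁻¹ * of k.castSucc * of k.succ else of v := by
    intro k v
    have hs := sigma_apply (hσ k (by omega))
    rw [ha, _root_.map_mul, MulAut.mul_apply, φ_r, φs, ← xg_val, hs, adj_val]
    simp only [← xg_val, Fin.val_castSucc, Fin.val_succ, Fin.ext_iff]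
    split_ifs <;> first | rfl | omega | (congr 1; omega)
  refine ⟨R.sec_t hsec, hp, R.tt, R.t2, fun c i j h => R.t_a hsec ha hp c i j h,
    fun i j k l h1 h2 h3 h4 h5 h6 => R.a_comm ha hp i j k l h1 h2 h3 h4 h5 h6,
    fun i j k h1 h2 h3 => (R.a_comm' hsec ha hp i j k h1 h2 h3).1,
    fun i j k h1 h2 h3 => (R.a_comm' hsec ha hp i j k h1 h2 h3).2, φ_sec, ?_, ?_⟩
  · intro c i
    rw [φt, ← xg_val, tau_apply (hτ c c.2)]
    simp only [Fin.ext_iff]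
    split_ifs with h
    · rw [h]
    · rfl
  · intro i j v hij
    obtain ⟨hd, p, hpe⟩ := exists_perm_extending (m := m) ![i, j] (by
      intro x y h
      fin_cases x <;> fin_cases y <;> simp_all)
    obtain ⟨k, hk⟩ : ∃ k : Fin m, (k : ℕ) = 0 := ⟨⟨0, by omega⟩, rfl⟩
    have h0 : p k.castSucc = i := by
      rw [show k.castSucc = ⟨((0 : Fin 2) : ℕ), by simp⟩ from Fin.ext (by simp [hk])]
      exact hpe 0 (by simp)
    have h1 : p k.succ = j := by
      rw [show k.succ = ⟨((1 : Fin 2) : ℕ), by simp; omega⟩ from Fin.ext (by simp [hk])]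
      exact hpe 1 (by simp; omega)
    have e := hp p k.castSucc k.succ (by simp [Fin.ext_iff])
    rw [h0, h1] at e
    -- transport the formula for adjacent indices along `p`
    obtain ⟨v, rfl⟩ := p.surjective v
    have e2 := congrArg (fun g => φ g (of v)) e
    simp only [_root_.map_mul, MulAut.mul_apply, φ_sec, φ_adj] at e2
    rw [← e2, ← h0]
    simp only [p.injective.eq_iff]
    split_ifs <;> simp [φ_sec, h1]

lemma mem_pcStar_of {f : MulAut (FreeGroup (Fin (m + 1)))} (π : Equiv.Perm (Fin (m + 1)))
    (h : ∀ i, ∃ e x, f (of i) = cj (π i, e) x) : f ∈ pcStar (Fin (m + 1)) := ⟨π, h⟩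

lemma sigma_mem {σ : MulAut (FreeGroup (Fin (m + 1)))} {k : Fin m} (h : IsSigma (m + 1) k σ) :
    σ ∈ pcStar (Fin (m + 1)) := by
  refine mem_pcStar_of (adj k) fun i => ?_
  refine ⟨true, if i = k.succ then of k.succ else 1, ?_⟩
  rw [← xg_val, sigma_apply h, cj]
  change _ = _ * of (adj k i) * _
  simp only [← xg_val, adj_val, Fin.ext_iff, Fin.val_succ]
  split_ifs <;> simp

lemma rho_mem {ρ : MulAut (FreeGroup (Fin (m + 1)))} {k : Fin m} (h : IsRho (m + 1) k ρ) :
    ρ ∈ pcStar (Fin (m + 1)) := by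
  refine mem_pcStar_of (adj k) fun i => ⟨true, 1, ?_⟩
  rw [← xg_val, rho_apply h, cj]
  change _ = _ * of (adj k i) * _
  rw [← xg_val, adj_val]
  split_ifs <;> simp

lemma tau_mem {τ : MulAut (FreeGroup (Fin (m + 1)))} {k : Fin (m + 1)} (h : IsTau (m + 1) k τ) :
    τ ∈ pcStar (Fin (m + 1)) := by
  refine mem_pcStar_of 1 fun i => ?_
  rw [← xg_val, tau_apply h]
  split_ifs with hi
  · refine ⟨false, 1, ?_⟩
    rw [← Fin.ext hi, xg_val, cj]
    simp [of, inv_mk, invRev]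
  · refine ⟨true, 1, ?_⟩
    rw [xg_val, cj]
    simp [of]

lemma mem_PCStarSet {f : MulAut (FreeGroup (Fin (m + 1)))} :
    f ∈ PCStarSet (m + 1) ↔ f ∈ pcStar (Fin (m + 1)) := by
  have pos : ∀ (c : Fin (m + 1)) x, cj (c, true) x = x⁻¹ * of c ^ (1 : ℤ) * x := by
    intro c x; rw [zpow_one]; rfl
  have neg : ∀ (c : Fin (m + 1)) x, cj (c, false) x = x⁻¹ * of c ^ (-1 : ℤ) * x := by
    intro c x; rw [zpow_neg_one]; rfl
  constructor
  · rintro ⟨π, ε, w, hε, h⟩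
    refine mem_pcStar_of π fun i => ?_
    rcases hε i with e | e
    · exact ⟨true, w i, by rw [h, e, pos]⟩
    · exact ⟨false, w i, by rw [h, e, neg]⟩
  · rintro ⟨π, h⟩
    choose e x h using h
    refine ⟨π, fun i => if e i then 1 else -1, x, fun i => by cases e i <;> simp, fun i => ?_⟩
    rw [h]
    change _ = (x i)⁻¹ * of (π i) ^ (if e i then (1 : ℤ) else -1) * x i
    cases e i
    · exact neg _ _
    · exact pos _ _

end Assembly

/-- For `n ≥ 1`, there is a group isomorphism from the presented group
`⟨s_i, r_i, t_i ∣ extended welded relations⟩` onto the subgroup `PC*_n` of `Aut(F_n)`,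
sending `s_i ↦ σ_i`, `r_i ↦ ρ_i` and `t_i ↦ τ_i` (stated as: an injective homomorphism
to `Aut(F_n)` whose range is `PC*_n`). -/
theorem presentedGroup_iso_pcStar (n : ℕ) (hn : 1 ≤ n)
    (σ ρ τ : ℕ → MulAut (FreeGroup (Fin n)))
    (hσ : ∀ i, i + 1 < n → IsSigma n i (σ i))
    (hρ : ∀ i, i + 1 < n → IsRho n i (ρ i))
    (hτ : ∀ i, i < n → IsTau n i (τ i)) :
    ∃ φ : PresentedGroup (extWeldedRels n) →* MulAut (FreeGroup (Fin n)),
      Function.Injective φ ∧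
      Set.range ⇑φ = PCStarSet n ∧
      (∀ i : Fin (n - 1), φ (PresentedGroup.of (Sum.inl i)) = σ (i : ℕ)) ∧
      (∀ i : Fin (n - 1), φ (PresentedGroup.of (Sum.inr (Sum.inl i))) = ρ (i : ℕ)) ∧
      (∀ i : Fin n, φ (PresentedGroup.of (Sum.inr (Sum.inr i))) = τ (i : ℕ)) := by
  obtain ⟨m, rfl⟩ : ∃ m, n = m + 1 := ⟨n - 1, by omega⟩
  have R := rels_presented (m := m)
  let P := PresentedGroup.toGroup (rels_perm m).lift_eq_one
  obtain ⟨sec, hsec⟩ := exists_sec R P fun k => PresentedGroup.toGroup.of _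
  obtain ⟨a, ha, hp⟩ := R.exists_a hsec
  let φ := PresentedGroup.toGroup (rels_aut hσ hρ hτ).lift_eq_one
  have φs : ∀ i : Fin m, φ (PresentedGroup.of (Sum.inl i)) = σ i :=
    fun i => PresentedGroup.toGroup.of _
  have φr : ∀ i : Fin m, φ (PresentedGroup.of (Sum.inr (Sum.inl i))) = ρ i :=
    fun i => PresentedGroup.toGroup.of _
  have φt : ∀ i : Fin (m + 1), φ (PresentedGroup.of (Sum.inr (Sum.inr i))) = τ i :=
    fun i => PresentedGroup.toGroup.of _
  have W := weldedAction R hσ hρ hτ φs φr φt hsec ha hp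
  have hpc : ∀ g, φ g ∈ pcStar (Fin (m + 1)) := by
    have h : (⊤ : Subgroup (PresentedGroup (extWeldedRels (m + 1)))) ≤
        (pcStar (Fin (m + 1))).comap φ := by
      rw [← PresentedGroup.closure_range_of, Subgroup.closure_le]
      rintro _ ⟨i | i | i, rfl⟩ <;> rw [SetLike.mem_coe, Subgroup.mem_comap]
      · exact (φs i).symm ▸ sigma_mem (k := i) (hσ i (by omega))
      · exact (φr i).symm ▸ rho_mem (k := i) (hρ i (by omega))
      · exact (φt i).symm ▸ tau_mem (k := i) (hτ i i.2)
    exact fun g => h (Subgroup.mem_top g)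
  have top : ∀ g, g ∈ Subgroup.closure
      (moves a ∪ signed sec fun i => PresentedGroup.of (Sum.inr (Sum.inr i))) := by
    have hB : ∀ x ∈ signed sec (fun i => PresentedGroup.of (rels := extWeldedRels (m + 1))
        (Sum.inr (Sum.inr i))), x ∈ Subgroup.closure
        (moves a ∪ signed sec fun i => PresentedGroup.of (Sum.inr (Sum.inr i))) :=
      fun x hx => Subgroup.subset_closure (Or.inr hx)
    have hr : ∀ i : Fin m, PresentedGroup.of (rels := extWeldedRels (m + 1)) (Sum.inr (Sum.inl i)) ∈
        Subgroup.closure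
        (moves a ∪ signed sec fun i => PresentedGroup.of (Sum.inr (Sum.inr i))) := fun i =>
      hB _ (Subgroup.subset_closure (Or.inl ⟨adj i, hsec i⟩))
    have h : (⊤ : Subgroup (PresentedGroup (extWeldedRels (m + 1)))) ≤ Subgroup.closure
        (moves a ∪ signed sec fun i => PresentedGroup.of (Sum.inr (Sum.inr i))) := by
      rw [← PresentedGroup.closure_range_of, Subgroup.closure_le]
      rintro _ ⟨i | i | i, rfl⟩
      · rw [SetLike.mem_coe, ← Subgroup.mul_mem_cancel_right _ (hr i)]
        refine Subgroup.subset_closure (Or.inl ⟨Fin.castSucc (n := m) i, Fin.succ (n := m) i, true,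
          by simp [Fin.ext_iff], (ha i).symm⟩)
      · exact hr i
      · exact hB _ (Subgroup.subset_closure (Or.inr ⟨i, rfl⟩))
    exact fun g => h (Subgroup.mem_top g)
  refine ⟨φ, (injective_iff_map_eq_one φ).2 fun g => W.faithful hpc g (top g), ?_, φs, φr, φt⟩
  ext f
  rw [mem_PCStarSet]
  constructor
  · rintro ⟨g, rfl⟩
    exact hpc g
  · exact W.surjective hpc f

end LoopBraidGroups
end

section
/- For every integer n ≥ 1, there is a group isomorphism from the presented group with generators a_{ij} for 1 ≤ i ≠ j ≤ n and relations: a_{ij} a_{kl} = a_{kl} a_{ij} for pairwise distinct i, j, k, l; a_{ik} a_{jk} = a_{jk} a_{ik} for pairwise distinct i, j, k; a_{ij} (a_{ik} a_{jk}) = (a_{ik} a_{jk}) a_{ij} for pairwise distinct i, j, k, onto the subgroup PConj_n of Aut(F_n) consisting of all automorphisms α such that α(x_i) = w_i⁻¹ x_i w_i for all i, for some words w_i ∈ F_n; this isomorphism sends a_{ij} to α_{ij}. -/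
/-!
Every basis-conjugating automorphism `α` determines reduced words `w_i`, not starting with
`x_i^{±1}`, such that `α(x_i) = w_i⁻¹ x_i w_i`; the complexity `len α` is the sum of their lengths.
Passing from `α` to `α ∘ α_{ij}^ε` replaces only `w_i`, by `w_i · w_j⁻¹ x_j^ε w_j`. The key fact
(`suffix_dichotomy`, `reduces_or`) is that such a move never preserves the complexity: it lowers
it exactly when `x_j^{-ε} w_j` is a suffix of `w_i`, and otherwise the inverse move lowers it.

*Generation.* If no move lowers the complexity, then no middle letter cancels in a product of the
`α(x_i)^{±1}`, so surjectivity of `α` forces all `w_i` to be empty (`eq_one_of_not_reduces`).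
Induction on the complexity shows that the `α_{ij}` generate.

*Relations.* Consider the Cayley graph of the presented group, graded by the complexity of the
image automorphisms. Two complexity-lowering moves `(i, j, ε)` and `(k, l, δ)` at the same vertex
either are equal, or commute by one of the first two families of relations, or form part of a
triangle. A triangle arises when `x_j^{-ε} w_j` is a suffix of `w_i` and `x_l^{-δ} w_l` is a suffix
of `w_j`; then all of `a_{ij}^ε`, `a_{jl}^δ`, `a_{il}^δ` lower the complexity and the third family
of relations gives `a_{ij}^ε a_{jl}^δ a_{il}^δ = a_{jl}^δ a_{il}^δ a_{ij}^ε`. In every case the two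
resulting vertices are joined by a path that stays strictly below the starting one
(`conn_of_reduces`). As in Newman's lemma, every `g` therefore descends to a unique element of the
kernel (`desc_unique`), this element does not change along edges, and so it is `1` for all `g`
(`desc_one`). A kernel element descends to itself, hence the kernel is trivial.
-/

namespace LoopBraidGroups

/-- `IsAlpha n i j a` : `a` is the automorphism `α_{ij}` of the free group of rank `n`,
sending `x_i ↦ x_j⁻¹ x_i x_j` and fixing the other generators. -/
def IsAlpha (n i j : ℕ) (a : MulAut (FreeGroup (Fin n))) : Prop :=
  a (xg n i) = (xg n j)⁻¹ * xg n i * xg n j ∧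
    ∀ k, k < n → k ≠ i → a (xg n k) = xg n k

/-- The set `PConj_n` of basis-conjugating automorphisms. -/
def PConjSet (n : ℕ) : Set (MulAut (FreeGroup (Fin n))) :=
  {α | ∃ w : Fin n → FreeGroup (Fin n),
      ∀ i : Fin n, α (FreeGroup.of i) = (w i)⁻¹ * FreeGroup.of i * w i}

/-- The abstract generator `a_{ij}` (for `i ≠ j`) of the McCool presentation. -/
def mA {n : ℕ} {i j : Fin n} (h : i ≠ j) : FreeGroup {p : Fin n × Fin n // p.1 ≠ p.2} :=
  FreeGroup.of ⟨(i, j), h⟩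

/-- The relators of the McCool presentation of the basis-conjugating automorphism group
(relators written as `LHS * RHS⁻¹`). -/
def mcCoolRels (n : ℕ) : Set (FreeGroup {p : Fin n × Fin n // p.1 ≠ p.2}) :=
  {z | (∃ (i j k l : Fin n) (h₁ : i ≠ j) (h₂ : k ≠ l),
          i ≠ k ∧ i ≠ l ∧ j ≠ k ∧ j ≠ l ∧
          z = mA h₁ * mA h₂ * (mA h₂ * mA h₁)⁻¹) ∨
       (∃ (i j k : Fin n) (h₁ : i ≠ k) (h₂ : j ≠ k), i ≠ j ∧
          z = mA h₁ * mA h₂ * (mA h₂ * mA h₁)⁻¹) ∨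
       (∃ (i j k : Fin n) (h₁ : i ≠ j) (h₂ : i ≠ k) (h₃ : j ≠ k),
          z = mA h₁ * (mA h₂ * mA h₃) * ((mA h₂ * mA h₃) * mA h₁)⁻¹)}

/-! ### Reduced words and conjugates of basis elements -/

section words
variable {ι : Type*}

/-- The letter `x_j` (for `true`) or `x_j⁻¹` (for `false`). -/
def letter (j : ι) (ε : Bool) : FreeGroup ι := FreeGroup.mk [(j, ε)]

theorem letter_inv (j : ι) (ε : Bool) : (letter j ε)⁻¹ = letter j (!ε) := by
  simp [letter, FreeGroup.inv_mk, FreeGroup.invRev]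

theorem letter_true (j : ι) : letter j true = FreeGroup.of j := rfl

theorem letter_false (j : ι) : letter j false = (FreeGroup.of j)⁻¹ := by
  rw [← letter_true, letter_inv]; rfl

theorem letter_mul_mk (j : ι) (ε : Bool) (l : List (ι × Bool)) :
    letter j ε * FreeGroup.mk l = FreeGroup.mk ((j, ε) :: l) := by
  simp [letter, FreeGroup.mul_mk]

variable [DecidableEq ι]

/-- The shortest representative of the coset `⟨x_i⟩ z`, obtained by stripping the leading
letters `x_i^{±1}` from the reduced word of `z`. -/
def nf (i : ι) (z : FreeGroup ι) : List (ι × Bool) :=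
  z.toWord.dropWhile (fun a => decide (a.1 = i))

/-- The part of the reduced word of `u` strictly to the right of its middle letter; if `u` is
a conjugate of `x_i` it is the reduced word `w`, not starting with `x_i^{±1}`, for which
`u = w⁻¹ x_i w`. -/
def core (u : FreeGroup ι) : List (ι × Bool) := u.toWord.drop ((u.toWord.length + 1) / 2)

theorem nf_length_le (i : ι) (z : FreeGroup ι) : (nf i z).length ≤ z.norm :=
  (List.dropWhile_suffix _).length_le

theorem nf_reduced_cons (i : ι) (z : FreeGroup ι) (ε : Bool) :
    FreeGroup.IsReduced ((i, ε) :: nf i z) := by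
  have h1 : FreeGroup.IsReduced (nf i z) := by
    obtain ⟨t, ht⟩ : nf i z <:+ z.toWord := List.dropWhile_suffix _
    have h0 : FreeGroup.IsReduced z.toWord := FreeGroup.isReduced_toWord
    rw [← ht] at h0
    exact List.IsChain.right_of_append h0
  have h2 := List.head?_dropWhile_not (fun a : ι × Bool => decide (a.1 = i)) z.toWord
  rw [← nf] at h2
  cases hl : nf i z with
  | nil => exact FreeGroup.IsReduced.singleton
  | cons a t =>
    rw [hl] at h1 h2
    refine List.IsChain.cons_cons (fun h => ?_) h1
    simp at h2
    exact absurd h.symm h2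

theorem exists_zpow_mul_nf (i : ι) (z : FreeGroup ι) :
    ∃ m : ℤ, z = FreeGroup.of i ^ m * FreeGroup.mk (nf i z) := by
  have key : ∀ l : List (ι × Bool), ∃ m : ℤ, FreeGroup.mk l =
      FreeGroup.of i ^ m * FreeGroup.mk (l.dropWhile (fun a => decide (a.1 = i))) := by
    intro l
    induction l with
    | nil => exact ⟨0, by simp⟩
    | cons a t ih =>
      obtain ⟨j, ε⟩ := a
      by_cases h : j = i
      · subst h
        obtain ⟨m, hm⟩ := ih
        refine ⟨(if ε then 1 else -1) + m, ?_⟩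
        rw [← letter_mul_mk, hm, List.dropWhile_cons_of_pos (by simp), zpow_add, mul_assoc]
        cases ε <;> simp [letter_true, letter_false]
      · exact ⟨0, by rw [List.dropWhile_cons_of_neg (by simpa using h)]; simp⟩
  obtain ⟨m, hm⟩ := key z.toWord
  exact ⟨m, by rwa [FreeGroup.mk_toWord] at hm⟩

theorem toWord_mk_of_reduced {l : List (ι × Bool)} (h : FreeGroup.IsReduced l) :
    (FreeGroup.mk l).toWord = l := by
  rw [FreeGroup.toWord_mk, h.reduce_eq]

theorem IsReduced_invRev {l : List (ι × Bool)} (h : FreeGroup.IsReduced l) :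
    FreeGroup.IsReduced (FreeGroup.invRev l) := by
  rw [FreeGroup.isReduced_iff_reduce_eq, FreeGroup.reduce_invRev, h.reduce_eq]

theorem conj_eq_conj_nf (i : ι) (z : FreeGroup ι) :
    z⁻¹ * FreeGroup.of i * z =
      (FreeGroup.mk (nf i z))⁻¹ * FreeGroup.of i * FreeGroup.mk (nf i z) := by
  obtain ⟨m, hm⟩ := exists_zpow_mul_nf i z
  generalize FreeGroup.mk (nf i z) = y at hm
  subst hm
  have : (FreeGroup.of i ^ m)⁻¹ * FreeGroup.of i * FreeGroup.of i ^ m = FreeGroup.of i := by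
    group
  calc _ = y⁻¹ * ((FreeGroup.of i ^ m)⁻¹ * FreeGroup.of i * FreeGroup.of i ^ m) * y := by group
    _ = _ := by rw [this]

theorem core_conj (i : ι) (z : FreeGroup ι) : core (z⁻¹ * FreeGroup.of i * z) = nf i z := by
  have h : (z⁻¹ * FreeGroup.of i * z).toWord =
      FreeGroup.invRev (nf i z) ++ [(i, true)] ++ nf i z := by
    rw [conj_eq_conj_nf, FreeGroup.inv_mk, ← letter_true, letter, FreeGroup.mul_mk, FreeGroup.mul_mk]
    refine toWord_mk_of_reduced (FreeGroup.IsReduced.append_overlap ?_ ?_ (by simp))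
    · have := IsReduced_invRev (nf_reduced_cons i z false)
      rw [FreeGroup.invRev_cons] at this
      simpa [FreeGroup.invRev] using this
    · exact nf_reduced_cons i z true
  rw [core, h]
  refine List.drop_left' ?_
  simp
  omega

/-- The cancellation lemma behind everything else. If `b` is reduced and does not start with
`x_j^{±1}`, then either `x_j^{-ε} b` is a suffix of the reduced word of `a`, or the reduced word
of `a · b⁻¹ x_j^ε b` ends in `x_j^ε b`. The two cases are distinguished by whether the reduced
word of `a b⁻¹` ends in `x_j^{-ε}`. -/
theorem suffix_dichotomy (j : ι) (ε : Bool) (a : FreeGroup ι) (b : List (ι × Bool))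
    (hb : ∀ δ, FreeGroup.IsReduced ((j, δ) :: b)) :
    (j, !ε) :: b <:+ a.toWord ∨
      (j, ε) :: b <:+ (a * (FreeGroup.mk b)⁻¹ * letter j ε * FreeGroup.mk b).toWord := by
  set c := a * (FreeGroup.mk b)⁻¹ with hc
  have hcr : FreeGroup.IsReduced c.toWord := FreeGroup.isReduced_toWord
  rcases List.eq_nil_or_concat c.toWord with h0 | ⟨d, ⟨k, δ⟩, hd⟩
  · right
    have : c = 1 := FreeGroup.toWord_eq_nil_iff.1 h0
    rw [this, one_mul, letter_mul_mk, toWord_mk_of_reduced (hb ε)]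
  · rw [List.concat_eq_append] at hd
    by_cases hk : k = j ∧ δ = !ε
    · left
      obtain ⟨rfl, rfl⟩ := hk
      have ha : a = FreeGroup.mk (d ++ [(k, !ε)] ++ b) := by
        rw [← FreeGroup.mul_mk, ← hd, FreeGroup.mk_toWord, hc, inv_mul_cancel_right]
      rw [ha, toWord_mk_of_reduced]
      · exact ⟨d, by simp⟩
      · rw [hd] at hcr
        exact FreeGroup.IsReduced.append_overlap hcr (hb _) (by simp)
    · right
      have : c * letter j ε * FreeGroup.mk b = FreeGroup.mk (d ++ [(k, δ)] ++ [(j, ε)] ++ b) := by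
        rw [← FreeGroup.mul_mk, ← FreeGroup.mul_mk, ← hd, FreeGroup.mk_toWord, letter]
      rw [this, toWord_mk_of_reduced]
      · exact ⟨d ++ [(k, δ)], by simp⟩
      · refine FreeGroup.IsReduced.append_overlap ?_ (hb _) (by simp)
        rw [hd] at hcr
        refine FreeGroup.IsReduced.append_overlap hcr ?_ (by simp)
        refine List.IsChain.cons_cons (fun h => ?_) FreeGroup.IsReduced.singleton
        by_contra h'
        exact hk ⟨h, by revert h'; cases δ <;> cases ε <;> simp⟩

theorem suffix_nf {i j : ι} (hij : j ≠ i) {ε : Bool} {b : List (ι × Bool)} {z : FreeGroup ι}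
    (h : (j, ε) :: b <:+ z.toWord) : (j, ε) :: b <:+ nf i z := by
  obtain ⟨t, ht⟩ := h
  rw [nf, ← ht, List.dropWhile_append]
  split_ifs
  · rw [List.dropWhile_cons_of_neg (by simpa using hij)]
  · exact List.suffix_append _ _

end words

/-! ### Basis-conjugating automorphisms and their complexity -/

section automorphisms
variable {ι : Type*}

/-- `α` sends every basis element to a conjugate of itself. -/
def IsConj (α : MulAut (FreeGroup ι)) : Prop :=
  ∀ i, ∃ z, α (FreeGroup.of i) = z⁻¹ * FreeGroup.of i * z

/-- `σ` is `α_{ij}` (for `ε = true`) or its inverse (for `ε = false`). -/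
def IsMove (σ : MulAut (FreeGroup ι)) (i j : ι) (ε : Bool) : Prop :=
  σ (FreeGroup.of i) = (letter j ε)⁻¹ * FreeGroup.of i * letter j ε ∧
    ∀ k, k ≠ i → σ (FreeGroup.of k) = FreeGroup.of k

theorem aut_ext_s5 {α β : MulAut (FreeGroup ι)}
    (h : ∀ k, α (FreeGroup.of k) = β (FreeGroup.of k)) : α = β := by
  have : α.toMonoidHom = β.toMonoidHom := FreeGroup.ext_hom _ _ h
  exact MulEquiv.ext fun x => DFunLike.congr_fun this x

theorem apply_letter {α : MulAut (FreeGroup ι)} {j : ι} {y : FreeGroup ι}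
    (h : α (FreeGroup.of j) = y⁻¹ * FreeGroup.of j * y) (ε : Bool) :
    α (letter j ε) = y⁻¹ * letter j ε * y := by
  cases ε
  · rw [letter_false, map_inv, h]; group
  · exact h

theorem move_apply {α σ : MulAut (FreeGroup ι)} {i j : ι} {ε : Bool} (hσ : IsMove σ i j ε)
    {z y : FreeGroup ι} (hz : α (FreeGroup.of i) = z⁻¹ * FreeGroup.of i * z)
    (hy : α (FreeGroup.of j) = y⁻¹ * FreeGroup.of j * y) :
    (α * σ) (FreeGroup.of i) =
      (z * y⁻¹ * letter j ε * y)⁻¹ * FreeGroup.of i * (z * y⁻¹ * letter j ε * y) := by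
  rw [MulAut.mul_apply, hσ.1, map_mul, map_mul, map_inv, apply_letter hy, hz]
  group

theorem move_apply_ne {α σ : MulAut (FreeGroup ι)} {i j k : ι} {ε : Bool} (hσ : IsMove σ i j ε)
    (hk : k ≠ i) : (α * σ) (FreeGroup.of k) = α (FreeGroup.of k) := by
  rw [MulAut.mul_apply, hσ.2 k hk]

theorem IsConj.mul_move {α σ : MulAut (FreeGroup ι)} {i j : ι} {ε : Bool} (hα : IsConj α)
    (hσ : IsMove σ i j ε) : IsConj (α * σ) := by
  intro k
  by_cases hk : k = i
  · subst hk
    obtain ⟨z, hz⟩ := hα k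
    obtain ⟨y, hy⟩ := hα j
    exact ⟨_, move_apply hσ hz hy⟩
  · rw [move_apply_ne hσ hk]
    exact hα k

theorem IsMove.inv {σ : MulAut (FreeGroup ι)} {i j : ι} {ε : Bool} (hij : i ≠ j)
    (h : IsMove σ i j ε) : IsMove σ⁻¹ i j (!ε) := by
  have h1 : ∀ k, k ≠ i → σ⁻¹ (FreeGroup.of k) = FreeGroup.of k := fun k hk => by
    rw [MulAut.inv_apply, MulEquiv.symm_apply_eq, h.2 k hk]
  refine ⟨?_, h1⟩
  rw [MulAut.inv_apply, MulEquiv.symm_apply_eq]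
  have hj : ∀ δ, σ (letter j δ) = letter j δ := fun δ => by
    have := apply_letter (α := σ) (j := j) (y := 1) (by simpa using h.2 j hij.symm) δ
    simpa using this
  rw [map_mul, map_mul, map_inv, h.1, hj, ← letter_inv]
  group

variable [DecidableEq ι]

/-- The reduced word `w_i`, not starting with `x_i^{±1}`, with `α(x_i) = w_i⁻¹ x_i w_i`. -/
def W (α : MulAut (FreeGroup ι)) (i : ι) : List (ι × Bool) := core (α (FreeGroup.of i))

theorem W_eq {α : MulAut (FreeGroup ι)} {i : ι} {z : FreeGroup ι}
    (h : α (FreeGroup.of i) = z⁻¹ * FreeGroup.of i * z) : W α i = nf i z := by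
  rw [W, h, core_conj]

theorem W_spec {α : MulAut (FreeGroup ι)} (hα : IsConj α) (i : ι) : α (FreeGroup.of i) =
    (FreeGroup.mk (W α i))⁻¹ * FreeGroup.of i * FreeGroup.mk (W α i) := by
  obtain ⟨z, hz⟩ := hα i
  rw [W_eq hz, hz, conj_eq_conj_nf]

theorem W_reduced {α : MulAut (FreeGroup ι)} (hα : IsConj α) (i : ι) (δ : Bool) :
    FreeGroup.IsReduced ((i, δ) :: W α i) := by
  obtain ⟨z, hz⟩ := hα i
  rw [W_eq hz]
  exact nf_reduced_cons i z δ

theorem toWord_mk_W {α : MulAut (FreeGroup ι)} (hα : IsConj α) (i : ι) :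
    (FreeGroup.mk (W α i)).toWord = W α i :=
  toWord_mk_of_reduced (List.IsChain.tail (W_reduced hα i true))

theorem W_move_ne {α σ : MulAut (FreeGroup ι)} {i j k : ι} {ε : Bool} (hσ : IsMove σ i j ε)
    (hk : k ≠ i) : W (α * σ) k = W α k := by
  rw [W, move_apply_ne hσ hk, W]

/-- The move `α ↦ α ∘ α_{ij}^ε` is reducing: `x_j^{-ε} w_j` is a suffix of `w_i`. -/
def Reduces (α : MulAut (FreeGroup ι)) (i j : ι) (ε : Bool) : Prop :=
  (j, !ε) :: W α j <:+ W α i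

theorem Reduces.length_lt {α : MulAut (FreeGroup ι)} {i j : ι} {ε : Bool}
    (h : Reduces α i j ε) : (W α j).length < (W α i).length := by
  have := List.IsSuffix.length_le h
  simp at this
  omega

theorem norm_mk_append_le (p q : List (ι × Bool)) :
    (FreeGroup.mk p * FreeGroup.mk q).norm ≤ p.length + q.length := by
  rw [FreeGroup.mul_mk]
  exact FreeGroup.norm_mk_le.trans (by simp)

/-- A reducing move turns `w_i = p x_j^{-ε} w_j` into `p w_j`, up to reduction and powers of
`x_i` on the left. -/
theorem Reduces.move_apply {α σ : MulAut (FreeGroup ι)} {i j : ι} {ε : Bool} (hα : IsConj α)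
    (hσ : IsMove σ i j ε) {p : List (ι × Bool)} (hp : p ++ (j, !ε) :: W α j = W α i) :
    (α * σ) (FreeGroup.of i) = (FreeGroup.mk p * FreeGroup.mk (W α j))⁻¹ * FreeGroup.of i *
      (FreeGroup.mk p * FreeGroup.mk (W α j)) := by
  rw [LoopBraidGroups.move_apply hσ (W_spec hα i) (W_spec hα j), ← hp, ← FreeGroup.mul_mk,
    ← letter_mul_mk, ← letter_inv]
  group

theorem Reduces.W_lt {α σ : MulAut (FreeGroup ι)} {i j : ι} {ε : Bool} (hα : IsConj α)
    (hσ : IsMove σ i j ε) (h : Reduces α i j ε) : (W (α * σ) i).length < (W α i).length := by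
  obtain ⟨p, hp⟩ := h
  rw [W_eq (Reduces.move_apply hα hσ hp), ← hp]
  refine (nf_length_le _ _).trans_lt ((norm_mk_append_le _ _).trans_lt ?_)
  simp

/-- A move that is not reducing is undone by a reducing one. -/
theorem reduces_or {α σ : MulAut (FreeGroup ι)} {i j : ι} {ε : Bool} (hij : i ≠ j)
    (hα : IsConj α) (hσ : IsMove σ i j ε) : Reduces α i j ε ∨ Reduces (α * σ) i j (!ε) := by
  rcases suffix_dichotomy j ε (FreeGroup.mk (W α i)) (W α j) (W_reduced hα j) with h | h
  · left
    rwa [toWord_mk_W hα] at h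
  · right
    rw [Reduces, W_eq (move_apply hσ (W_spec hα i) (W_spec hα j)), W_move_ne hσ hij.symm,
      Bool.not_not]
    exact suffix_nf hij.symm h

/-- Without reducing moves, the image of a reduced word ending in `x_j^ε` ends in
`x_j^ε w_j`. -/
theorem suffix_of_not_reduces {α : MulAut (FreeGroup ι)} (hα : IsConj α)
    (h : ∀ i j ε, i ≠ j → ¬ Reduces α i j ε) (l : List (ι × Bool)) (j : ι) (ε : Bool)
    (hl : FreeGroup.IsReduced (l ++ [(j, ε)])) :
    (j, ε) :: W α j <:+ (α (FreeGroup.mk (l ++ [(j, ε)]))).toWord := by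
  induction l using List.reverseRecOn generalizing j ε with
  | nil =>
    rw [List.nil_append, ← letter, apply_letter (W_spec hα j)]
    rcases suffix_dichotomy j ε 1 (W α j) (W_reduced hα j) with h | h
    · simp at h
    · simpa using h
  | append_singleton l a ih =>
    obtain ⟨k, δ⟩ := a
    have hkl : FreeGroup.IsReduced (l ++ [(k, δ)]) :=
      List.IsChain.left_of_append hl
    have hjk : k = j → δ = ε := by
      have h2 : FreeGroup.IsReduced [(k, δ), (j, ε)] := by
        rw [List.append_assoc] at hl
        exact List.IsChain.right_of_append hl
      simpa [FreeGroup.IsReduced] using h2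
    have ih' := ih k δ hkl
    rw [← FreeGroup.mul_mk, ← letter, map_mul, apply_letter (W_spec hα j), ← mul_assoc,
      ← mul_assoc]
    refine (suffix_dichotomy j ε _ (W α j) (W_reduced hα j)).resolve_left fun hs => ?_
    rcases lt_trichotomy (W α j).length (W α k).length with hlt | heq | hlt
    · have h3 := List.suffix_of_suffix_length_le hs ih' (by simpa using hlt.le)
      rcases List.suffix_cons_iff.1 h3 with h4 | h4
      · have := congrArg List.length h4
        simp at this
        omega
      · exact h k j ε (by rintro rfl; omega) h4
    · have h3 := (List.suffix_of_suffix_length_le hs ih' (by simpa using heq.le)).eq_of_length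
        (by simpa using heq)
      simp only [List.cons.injEq, Prod.mk.injEq] at h3
      have := hjk h3.1.1.symm
      rw [← h3.1.2] at this
      simp at this
    · have h3 := List.suffix_of_suffix_length_le ih' hs (by simpa using hlt.le)
      rcases List.suffix_cons_iff.1 h3 with h4 | h4
      · have := congrArg List.length h4
        simp at this
        omega
      · exact h j k (!δ) (by rintro rfl; omega) (by simpa [Reduces] using h4)

/-- A basis-conjugating automorphism without reducing moves is the identity. -/
theorem eq_one_of_not_reduces {α : MulAut (FreeGroup ι)} (hα : IsConj α)
    (h : ∀ i j ε, i ≠ j → ¬ Reduces α i j ε) : α = 1 := by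
  have hW : ∀ k, W α k = [] := by
    intro k
    -- Surjectivity of `α` enters here: `x_k` is the image of some reduced word.
    obtain ⟨y, hy⟩ := α.surjective (FreeGroup.of k)
    rcases List.eq_nil_or_concat y.toWord with h0 | ⟨l, ⟨j, ε⟩, hl⟩
    · rw [FreeGroup.toWord_eq_nil_iff.1 h0, map_one] at hy
      exact absurd hy (FreeGroup.one_ne_of k)
    · rw [List.concat_eq_append] at hl
      have h1 := suffix_of_not_reduces hα h l j ε (hl ▸ FreeGroup.isReduced_toWord)
      rw [← hl, FreeGroup.mk_toWord, hy, FreeGroup.toWord_of] at h1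
      have h2 := h1.eq_of_length_le (by simp)
      simp only [List.cons.injEq, Prod.mk.injEq] at h2
      exact h2.1.1 ▸ h2.2
  refine aut_ext_s5 fun k => ?_
  have := W_spec hα k
  rw [hW k] at this
  simpa [← FreeGroup.one_eq_mk] using this

variable [Fintype ι]

/-- The complexity of a basis-conjugating automorphism. -/
def len (α : MulAut (FreeGroup ι)) : ℕ := ∑ i, (W α i).length

theorem Reduces.len_lt {α σ : MulAut (FreeGroup ι)} {i j : ι} {ε : Bool} (hα : IsConj α)
    (hσ : IsMove σ i j ε) (h : Reduces α i j ε) : len (α * σ) < len α := by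
  refine Finset.sum_lt_sum (fun k _ => ?_) ⟨i, Finset.mem_univ _, h.W_lt hα hσ⟩
  by_cases hk : k = i
  · subst hk
    exact (h.W_lt hα hσ).le
  · rw [W_move_ne hσ hk]

theorem len_lt_or {α σ : MulAut (FreeGroup ι)} {i j : ι} {ε : Bool} (hij : i ≠ j)
    (hα : IsConj α) (hσ : IsMove σ i j ε) :
    (Reduces α i j ε ∧ len (α * σ) < len α) ∨ len α < len (α * σ) := by
  rcases reduces_or hij hα hσ with h | h
  · exact Or.inl ⟨h, h.len_lt hα hσ⟩
  · right
    simpa using h.len_lt (hα.mul_move hσ) (hσ.inv hij)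

/-- The far corner of the configuration `w_j = q x_l^{-δ} w_l`, `w_i = p x_j^{-ε} w_j`: after
the three moves, `w_j` becomes `q w_l` and `w_i` becomes `p q w_l`, up to reduction and powers
of `x_j`, `x_i` on the left. -/
theorem len_triangle {α σ τ ρ : MulAut (FreeGroup ι)} {i j l : ι} {ε δ : Bool} (hij : i ≠ j)
    (hil : i ≠ l) (hjl : j ≠ l) (hα : IsConj α) (hσ : IsMove σ i j ε) (hτ : IsMove τ j l δ)
    (hρ : IsMove ρ i l δ) (h1 : Reduces α i j ε) (h2 : Reduces α j l δ) :
    len (α * σ * τ * ρ) < len α := by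
  obtain ⟨p, hp⟩ := h1
  have h2' := h2
  obtain ⟨q, hq⟩ := h2
  have hασ := hα.mul_move hσ
  have hi : (W (α * σ * τ * ρ) i).length < (W α i).length := by
    have e1 := (move_apply_ne (α := α * σ) hτ hij).trans (Reduces.move_apply hα hσ hp)
    have e2 : (α * σ * τ) (FreeGroup.of l) = _ :=
      (move_apply_ne hτ hjl.symm).trans ((move_apply_ne hσ hil.symm).trans (W_spec hα l))
    have e3 := move_apply hρ e1 e2
    have e4 : FreeGroup.mk p * FreeGroup.mk (W α j) * (FreeGroup.mk (W α l))⁻¹ * letter l δ *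
        FreeGroup.mk (W α l) = FreeGroup.mk (p ++ q) * FreeGroup.mk (W α l) := by
      rw [← hq, ← FreeGroup.mul_mk, ← letter_mul_mk, ← letter_inv, ← FreeGroup.mul_mk]
      group
    rw [e4] at e3
    rw [W_eq e3, ← hp, ← hq]
    refine (nf_length_le _ _).trans_lt ((norm_mk_append_le _ _).trans_lt ?_)
    simp
    omega
  refine Finset.sum_lt_sum (fun k _ => ?_) ⟨i, Finset.mem_univ _, hi⟩
  by_cases hk : k = i
  · subst hk
    exact hi.le
  · rw [W_move_ne hρ hk]
    by_cases hk' : k = j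
    · subst hk'
      have h3 : Reduces (α * σ) k l δ := by
        rwa [Reduces, W_move_ne hσ hk, W_move_ne hσ hil.symm]
      have := h3.W_lt hασ hτ
      rw [W_move_ne hσ hk] at this
      exact this.le
    · rw [W_move_ne hτ hk', W_move_ne hσ hk]

end automorphisms

/-! ### The presented group -/

section presentation
variable {n : ℕ}

/-- The group of the McCool presentation. -/
abbrev McCool (n : ℕ) : Type := PresentedGroup (mcCoolRels n)

/-- The element `a_{ij}` (for `true`) or its inverse (for `false`) of the presented group. -/
def gen {i j : Fin n} (h : i ≠ j) (ε : Bool) : McCool n :=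
  if ε then PresentedGroup.of ⟨(i, j), h⟩ else (PresentedGroup.of ⟨(i, j), h⟩)⁻¹

theorem gen_inv {i j : Fin n} (h : i ≠ j) (ε : Bool) : (gen h ε)⁻¹ = gen h (!ε) := by
  cases ε <;> simp [gen]

theorem commute_of_rel {x y : FreeGroup {p : Fin n × Fin n // p.1 ≠ p.2}}
    (h : x * y * (y * x)⁻¹ ∈ mcCoolRels n) :
    Commute (PresentedGroup.mk (mcCoolRels n) x) (PresentedGroup.mk (mcCoolRels n) y) := by
  have := PresentedGroup.mk_eq_mk_of_mul_inv_mem h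
  rwa [map_mul, map_mul] at this

theorem gen_comm_disjoint {i j k l : Fin n} (h₁ : i ≠ j) (h₂ : k ≠ l) (hik : i ≠ k)
    (hil : i ≠ l) (hjk : j ≠ k) (hjl : j ≠ l) (ε δ : Bool) :
    Commute (gen h₁ ε) (gen h₂ δ) := by
  have : Commute (gen h₁ true) (gen h₂ true) :=
    commute_of_rel (Or.inl ⟨i, j, k, l, h₁, h₂, hik, hil, hjk, hjl, rfl⟩)
  cases ε <;> cases δ <;> simpa [gen] using this

theorem gen_comm_same {i j k : Fin n} (h₁ : i ≠ k) (h₂ : j ≠ k) (hij : i ≠ j) (ε δ : Bool) :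
    Commute (gen h₁ ε) (gen h₂ δ) := by
  have : Commute (gen h₁ true) (gen h₂ true) :=
    commute_of_rel (Or.inr (Or.inl ⟨i, j, k, h₁, h₂, hij, rfl⟩))
  cases ε <;> cases δ <;> simpa [gen] using this

theorem gen_comm_triangle {i j k : Fin n} (h₁ : i ≠ j) (h₂ : i ≠ k) (h₃ : j ≠ k)
    (ε δ : Bool) : Commute (gen h₁ ε) (gen h₂ δ * gen h₃ δ) := by
  have h : Commute (gen h₁ true) (gen h₂ true * gen h₃ true) := by
    have := commute_of_rel (n := n) (Or.inr (Or.inr ⟨i, j, k, h₁, h₂, h₃, rfl⟩))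
    rwa [map_mul] at this
  have h' : gen h₂ false * gen h₃ false = (gen h₂ true * gen h₃ true)⁻¹ := by
    rw [(gen_comm_same h₂ h₃ h₁ true true).eq, mul_inv_rev, gen_inv, gen_inv]; rfl
  have h'' : gen h₁ false = (gen h₁ true)⁻¹ := by rw [gen_inv]; rfl
  cases ε <;> cases δ
  · rw [h', h'']; exact h.inv_inv
  · rw [h'']; exact h.inv_left
  · rw [h']; exact h.inv_right
  · exact h

theorem gen_induction {C : McCool n → Prop} (h1 : C 1)
    (hmul : ∀ g (i j : Fin n) (h : i ≠ j) ε, C g → C (g * gen h ε)) (g : McCool n) : C g := by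
  have hg : g ∈ Subgroup.closure
      (Set.range (PresentedGroup.of : _ → PresentedGroup (mcCoolRels n))) := by
    rw [PresentedGroup.closure_range_of]; trivial
  induction hg using Subgroup.closure_induction_right with
  | one => exact h1
  | mul_right x hx y hy ih =>
    obtain ⟨⟨⟨i, j⟩, h⟩, rfl⟩ := hy
    exact hmul x i j h true ih
  | mul_inv_cancel x hx y hy ih =>
    obtain ⟨⟨⟨i, j⟩, h⟩, rfl⟩ := hy
    exact hmul x i j h false ih

/-- `φ` sends `a_{ij}` to `α_{ij}`. -/
def IsRep (φ : McCool n →* MulAut (FreeGroup (Fin n))) : Prop :=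
  ∀ (i j : Fin n) (h : i ≠ j), IsMove (φ (PresentedGroup.of ⟨(i, j), h⟩)) i j true

variable {φ : McCool n →* MulAut (FreeGroup (Fin n))}

theorem IsRep.isMove (hφ : IsRep φ) {i j : Fin n} (h : i ≠ j) (ε : Bool) :
    IsMove (φ (gen h ε)) i j ε := by
  cases ε
  · have := (hφ i j h).inv h
    rwa [← map_inv] at this
  · exact hφ i j h

theorem IsRep.isConj (hφ : IsRep φ) (g : McCool n) : IsConj (φ g) := by
  induction g using gen_induction with
  | h1 => exact fun i => ⟨1, by simp⟩
  | hmul g i j h ε ih => rw [map_mul]; exact ih.mul_move (hφ.isMove h ε)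

/-- The `α_{ij}` generate the basis-conjugating automorphisms. -/
theorem exists_apply_eq (hφ : IsRep φ) {α : MulAut (FreeGroup (Fin n))} (hα : IsConj α) :
    ∃ g, φ g = α := by
  induction hN : len α using Nat.strong_induction_on generalizing α with
  | _ N ih =>
    by_cases h : ∀ i j ε, i ≠ j → ¬ Reduces α i j ε
    · exact ⟨1, by rw [map_one, eq_one_of_not_reduces hα h]⟩
    · push Not at h
      obtain ⟨i, j, ε, hij, h⟩ := h
      obtain ⟨g, hg⟩ := ih _ (hN ▸ h.len_lt hα (hφ.isMove hij ε))
        (hα.mul_move (hφ.isMove hij ε)) rfl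
      exact ⟨g * (gen hij ε)⁻¹, by rw [map_mul, hg, map_inv, mul_inv_cancel_right]⟩

/-- An edge of the Cayley graph of the presented group both of whose ends have complexity
less than `N`. -/
def Edge (φ : McCool n →* MulAut (FreeGroup (Fin n))) (N : ℕ) (x y : McCool n) : Prop :=
  len (φ x) < N ∧ len (φ y) < N ∧ ∃ (i j : Fin n) (h : i ≠ j) (ε : Bool), y = x * gen h ε

/-- Being joined by a path of the Cayley graph that stays below complexity `N`. -/
def Conn (φ : McCool n →* MulAut (FreeGroup (Fin n))) (N : ℕ) : McCool n → McCool n → Prop :=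
  Relation.ReflTransGen (Edge φ N)

theorem Edge.symm {N : ℕ} {x y : McCool n} (h : Edge φ N x y) : Edge φ N y x := by
  obtain ⟨h1, h2, i, j, h, ε, rfl⟩ := h
  exact ⟨h2, h1, i, j, h, !ε, by rw [← gen_inv, mul_inv_cancel_right]⟩

theorem Conn.symm {N : ℕ} {x y : McCool n} (h : Conn φ N x y) : Conn φ N y x := by
  induction h with
  | refl => exact Relation.ReflTransGen.refl
  | tail _ he ih => exact ih.head he.symm

theorem edge_mul {N : ℕ} {x : McCool n} {i j : Fin n} (h : i ≠ j) (ε : Bool)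
    (h1 : len (φ x) < N) (h2 : len (φ (x * gen h ε)) < N) : Edge φ N x (x * gen h ε) :=
  ⟨h1, h2, i, j, h, ε, rfl⟩

theorem len_mul_gen_lt (hφ : IsRep φ) {g : McCool n} {i j : Fin n} (h : i ≠ j) {ε : Bool}
    (hr : Reduces (φ g) i j ε) : len (φ (g * gen h ε)) < len (φ g) := by
  rw [map_mul]
  exact hr.len_lt (hφ.isConj g) (hφ.isMove h ε)

theorem reduces_mul_gen (hφ : IsRep φ) {g : McCool n} {i j k l : Fin n} (h : i ≠ j) {ε δ : Bool}
    (hki : k ≠ i) (hli : l ≠ i) (hr : Reduces (φ g) k l δ) :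
    Reduces (φ (g * gen h ε)) k l δ := by
  rwa [map_mul, Reduces, W_move_ne (hφ.isMove h ε) hki, W_move_ne (hφ.isMove h ε) hli]

/-- Two independent reducing moves that commute are joined by the commuting square. -/
theorem conn_of_commute (hφ : IsRep φ) {g : McCool n} {i j k l : Fin n} (h : i ≠ j)
    (h' : k ≠ l) {ε δ : Bool} (hki : k ≠ i) (hli : l ≠ i)
    (hc : Commute (gen h ε) (gen h' δ)) (h1 : Reduces (φ g) i j ε) (h2 : Reduces (φ g) k l δ) :
    Conn φ (len (φ g)) (g * gen h ε) (g * gen h' δ) := by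
  have l1 := len_mul_gen_lt hφ h h1
  have l2 := len_mul_gen_lt hφ h' h2
  have l3 := (len_mul_gen_lt hφ h' (reduces_mul_gen hφ h hki hli h2 (ε := ε))).trans l1
  have e : g * gen h ε * gen h' δ = g * gen h' δ * gen h ε := by
    rw [mul_assoc, hc.eq, mul_assoc]
  refine (Relation.ReflTransGen.single (edge_mul h' δ l1 l3)).trans
    (Relation.ReflTransGen.single ?_)
  rw [e] at l3 ⊢
  exact (edge_mul h ε l2 l3).symm

/-- The three reducing moves of a chain of proper suffixes `w_l`, `w_j` of `w_i` are joined below the complexity of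
`g`, through `g a_{ij} a_{jl} a_{il} = g a_{jl} a_{il} a_{ij}`. -/
theorem conn_triangle (hφ : IsRep φ) {g : McCool n} {i j l : Fin n} (hij : i ≠ j)
    (hil : i ≠ l) (hjl : j ≠ l) {ε δ : Bool} (h1 : Reduces (φ g) i j ε)
    (h2 : Reduces (φ g) j l δ) :
    Conn φ (len (φ g)) (g * gen hij ε) (g * gen hjl δ) ∧
      Conn φ (len (φ g)) (g * gen hjl δ) (g * gen hil δ) := by
  have h3 : Reduces (φ g) i l δ := h2.trans ((List.suffix_cons _ _).trans h1)
  have l1 := len_mul_gen_lt hφ hij h1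
  have l2 := len_mul_gen_lt hφ hjl h2
  have l12 := (len_mul_gen_lt hφ hjl
    (reduces_mul_gen hφ hij hij.symm hil.symm h2 (ε := ε))).trans l1
  have l32 := (len_mul_gen_lt hφ hjl
    (reduces_mul_gen hφ hil hij.symm hil.symm h2 (ε := δ))).trans (len_mul_gen_lt hφ hil h3)
  have hcomm := gen_comm_same hil hjl hij δ δ
  have e23 : g * gen hjl δ * gen hil δ = g * gen hil δ * gen hjl δ := by
    rw [mul_assoc, ← hcomm.eq, mul_assoc]
  have lz : len (φ (g * gen hij ε * gen hjl δ * gen hil δ)) < len (φ g) := by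
    simp only [map_mul]
    exact len_triangle hij hil hjl (hφ.isConj g) (hφ.isMove hij ε) (hφ.isMove hjl δ)
      (hφ.isMove hil δ) h1 h2
  have ez : g * gen hij ε * gen hjl δ * gen hil δ = g * gen hjl δ * gen hil δ * gen hij ε := by
    have := (gen_comm_triangle hij hil hjl ε δ).eq
    rw [hcomm.eq] at this
    simp only [mul_assoc] at this ⊢
    rw [this]
  have c23 : Edge φ (len (φ g)) (g * gen hjl δ) (g * gen hjl δ * gen hil δ) :=
    edge_mul hil δ l2 (e23 ▸ l32)
  refine ⟨?_, (Relation.ReflTransGen.single c23).trans (Relation.ReflTransGen.single ?_)⟩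
  · refine Relation.ReflTransGen.trans (b := g * gen hij ε * gen hjl δ * gen hil δ) ?_ ?_
    · exact (Relation.ReflTransGen.single (edge_mul hjl δ l1 l12)).trans
        (Relation.ReflTransGen.single (edge_mul hil δ l12 lz))
    · rw [ez] at lz ⊢
      exact (Relation.ReflTransGen.single (edge_mul hij ε (e23 ▸ l32) lz).symm).trans
        (Relation.ReflTransGen.single c23.symm)
  · rw [e23]
    exact (edge_mul hjl δ (len_mul_gen_lt hφ hil h3) l32).symm

/-- Local confluence: any two reducing moves at `g` lead to elements joined by a path below
the complexity of `g`. -/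
theorem conn_of_reduces (hφ : IsRep φ) {g : McCool n} {i j k l : Fin n} (h : i ≠ j)
    (h' : k ≠ l) {ε δ : Bool} (h1 : Reduces (φ g) i j ε) (h2 : Reduces (φ g) k l δ) :
    Conn φ (len (φ g)) (g * gen h ε) (g * gen h' δ) := by
  by_cases hil : i = l
  · subst hil
    have hkj : k ≠ j := by
      rintro rfl
      exact lt_asymm h1.length_lt h2.length_lt
    exact (conn_triangle hφ h' hkj h h2 h1).1.symm
  by_cases hjk : j = k
  · subst hjk
    exact (conn_triangle hφ h hil h' h1 h2).1
  by_cases hik : i = k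
  · subst hik
    -- Both `x_j^{-ε} w_j` and `x_l^{-δ} w_l` are suffixes of `w_i`, so they are nested.
    rcases lt_trichotomy (W (φ g) j).length (W (φ g) l).length with hlt | heq | hlt
    · have h3 : Reduces (φ g) l j ε := by
        rcases List.suffix_cons_iff.1
          (List.suffix_of_suffix_length_le h1 h2 (by simpa using hlt.le)) with h4 | h4
        · have := congrArg List.length h4
          simp at this
          omega
        · exact h4
      have hlj : l ≠ j := by rintro rfl; omega
      exact (conn_triangle hφ h' h hlj h2 h3).2.symm.trans
        (conn_triangle hφ h' h hlj h2 h3).1.symm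
    · have h3 := (List.suffix_of_suffix_length_le h1 h2 (by simpa using heq.le)).eq_of_length
        (by simpa using heq)
      simp only [List.cons.injEq, Prod.mk.injEq, Bool.not_inj_iff] at h3
      obtain ⟨⟨rfl, rfl⟩, -⟩ := h3
      exact Relation.ReflTransGen.refl
    · have h3 : Reduces (φ g) j l δ := by
        rcases List.suffix_cons_iff.1
          (List.suffix_of_suffix_length_le h2 h1 (by simpa using hlt.le)) with h4 | h4
        · have := congrArg List.length h4
          simp at this
          omega
        · exact h4
      have hjl : j ≠ l := by rintro rfl; omega
      exact (conn_triangle hφ h h' hjl h1 h3).1.trans (conn_triangle hφ h h' hjl h1 h3).2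
  refine conn_of_commute hφ h h' (Ne.symm hik) (Ne.symm hil) ?_ h1 h2
  by_cases hjl : j = l
  · subst hjl
    exact gen_comm_same h h' hik ε δ
  · exact gen_comm_disjoint h h' hik hil hjk hjl ε δ

/-- `h` is obtained from `g` by a reducing move. -/
def Step (φ : McCool n →* MulAut (FreeGroup (Fin n))) (g h : McCool n) : Prop :=
  ∃ (i j : Fin n) (hij : i ≠ j) (ε : Bool), Reduces (φ g) i j ε ∧ h = g * gen hij ε

/-- `k` is an element of the kernel of `φ` to which `g` descends by reducing moves. -/
def Desc_s5 (φ : McCool n →* MulAut (FreeGroup (Fin n))) (g k : McCool n) : Prop :=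
  Relation.ReflTransGen (Step φ) g k ∧ φ k = 1

theorem Step.len_lt (hφ : IsRep φ) {g h : McCool n} (hs : Step φ g h) :
    len (φ h) < len (φ g) := by
  obtain ⟨i, j, hij, ε, hr, rfl⟩ := hs
  exact len_mul_gen_lt hφ hij hr

theorem exists_desc (hφ : IsRep φ) (g : McCool n) : ∃ k, Desc_s5 φ g k := by
  induction hN : len (φ g) using Nat.strong_induction_on generalizing g with
  | _ N ih =>
    by_cases h : ∀ i j ε, i ≠ j → ¬ Reduces (φ g) i j ε
    · exact ⟨g, Relation.ReflTransGen.refl, eq_one_of_not_reduces (hφ.isConj g) h⟩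
    · push Not at h
      obtain ⟨i, j, ε, hij, h⟩ := h
      obtain ⟨k, hk, hk1⟩ := ih _ (hN ▸ len_mul_gen_lt hφ hij h) _ rfl
      exact ⟨k, hk.head ⟨i, j, hij, ε, h, rfl⟩, hk1⟩

theorem step_or_step (hφ : IsRep φ) (g : McCool n) {i j : Fin n} (h : i ≠ j) (ε : Bool) :
    Step φ g (g * gen h ε) ∨ Step φ (g * gen h ε) g := by
  rcases reduces_or h (hφ.isConj g) (hφ.isMove h ε) with hr | hr
  · exact Or.inl ⟨i, j, h, ε, hr, rfl⟩
  · rw [← map_mul] at hr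
    exact Or.inr ⟨i, j, h, !ε, hr, by rw [← gen_inv, mul_inv_cancel_right]⟩

theorem Desc_s5.step {g h k : McCool n} (hs : Step φ g h) (hk : Desc_s5 φ h k) : Desc_s5 φ g k :=
  ⟨hk.1.head hs, hk.2⟩

theorem W_one (i : Fin n) : W (1 : MulAut (FreeGroup (Fin n))) i = [] := by
  rw [W_eq (z := 1) (by simp)]
  simp [nf]

theorem not_step_of_apply_eq_one {g h : McCool n} (hg : φ g = 1) : ¬ Step φ g h := by
  rintro ⟨i, j, hij, ε, hr, -⟩
  have := hr.length_lt
  simp [hg, W_one] at this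

/-- The kernel element to which `g` descends is unique. This is Newman's lemma, with local
confluence replaced by the existence of a path below the complexity of `g`. -/
theorem desc_unique (hφ : IsRep φ) {g k k' : McCool n} (hk : Desc_s5 φ g k) (hk' : Desc_s5 φ g k') :
    k = k' := by
  induction hN : len (φ g) using Nat.strong_induction_on generalizing g k k' with
  | _ N ih =>
    -- Along a path below `N`, the kernel elements below the vertices agree.
    have hconn : ∀ x y, Conn φ N x y → ∀ u, Desc_s5 φ x u → Desc_s5 φ y u := by
      intro x y hxy
      induction hxy with
      | refl => exact fun u hu => hu
      | tail _ he ih2 =>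
        obtain ⟨hb, hc, i, j, h, ε, rfl⟩ := he
        intro u hu
        rcases step_or_step hφ _ h ε with hs | hs
        · obtain ⟨v, hv⟩ := exists_desc hφ _
          rwa [ih _ hb (ih2 u hu) (hv.step hs) rfl]
        · exact (ih2 u hu).step hs
    rcases Relation.ReflTransGen.cases_head hk.1 with rfl | ⟨h, hs, hr⟩
    · rcases Relation.ReflTransGen.cases_head hk'.1 with h0 | ⟨h, hs, -⟩
      · exact h0
      · exact absurd hs (not_step_of_apply_eq_one hk.2)
    · rcases Relation.ReflTransGen.cases_head hk'.1 with rfl | ⟨h', hs', hr'⟩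
      · exact absurd hs (not_step_of_apply_eq_one hk'.2)
      · have hlt := hN ▸ hs'.len_lt hφ
        have hc : Conn φ N h h' := by
          obtain ⟨i, j, hij, ε, hred, rfl⟩ := hs
          obtain ⟨i', j', hij', ε', hred', rfl⟩ := hs'
          exact hN ▸ conn_of_reduces hφ hij hij' hred hred'
        have hd : Desc_s5 φ h' k' := ⟨hr', hk'.2⟩
        exact ih _ hlt (hconn _ _ hc k ⟨hr, hk.2⟩) hd rfl

/-- The kernel element below `g` does not change along an edge of the Cayley graph, as one end of
the edge descends to the other; hence it is the one of `g = 1`. -/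
theorem desc_one (hφ : IsRep φ) (g : McCool n) : Desc_s5 φ g 1 := by
  induction g using gen_induction with
  | h1 => exact ⟨Relation.ReflTransGen.refl, map_one _⟩
  | hmul g i j h ε ih =>
    rcases step_or_step hφ g h ε with hs | hs
    · obtain ⟨v, hv⟩ := exists_desc hφ (g * gen h ε)
      rwa [desc_unique hφ ih (hv.step hs)]
    · exact ih.step hs

theorem IsRep.injective (hφ : IsRep φ) : Function.Injective φ := by
  rw [injective_iff_map_eq_one]
  exact fun g hg => desc_unique hφ ⟨Relation.ReflTransGen.refl, hg⟩ (desc_one hφ g)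

/-- The relators hold among the `α_{ij}`. -/
theorem lift_rel_eq_one (A : {p : Fin n × Fin n // p.1 ≠ p.2} → MulAut (FreeGroup (Fin n)))
    (hA : ∀ p, IsMove (A p) p.1.1 p.1.2 true) :
    ∀ r ∈ mcCoolRels n, FreeGroup.lift A r = 1 := by
  have h1 : ∀ {i j : Fin n} (h : i ≠ j), A ⟨(i, j), h⟩ (FreeGroup.of i) =
      (FreeGroup.of j)⁻¹ * FreeGroup.of i * FreeGroup.of j := fun h => (hA ⟨_, h⟩).1
  have h2 : ∀ {i j k : Fin n} (h : i ≠ j), k ≠ i →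
      A ⟨(i, j), h⟩ (FreeGroup.of k) = FreeGroup.of k := fun h hk => (hA ⟨_, h⟩).2 _ hk
  rintro r (⟨i, j, k, l, hij, hkl, hik, hil, hjk, hjl, rfl⟩ | ⟨i, j, k, hik, hjk, hij, rfl⟩ |
    ⟨i, j, k, hij, hik, hjk, rfl⟩) <;>
  rw [map_mul, map_inv, mul_inv_eq_one] <;>
  simp only [map_mul, mA, FreeGroup.lift_apply_of] <;>
  refine aut_ext_s5 fun m => ?_ <;>
  simp only [MulAut.mul_apply]
  · by_cases hmi : m = i
    · subst hmi
      simp [h1, h2, hik, hjk]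
    · by_cases hmk : m = k
      · subst hmk
        simp [h1, h2, hik.symm, hil.symm]
      · simp [h2, hmi, hmk]
  · by_cases hmi : m = i
    · subst hmi
      simp [h1, h2, hij, hjk.symm]
    · by_cases hmj : m = j
      · subst hmj
        simp [h1, h2, hij.symm, hik.symm]
      · simp [h2, hmi, hmj]
  · by_cases hmi : m = i
    · subst hmi
      simp [h1, h2, hij, hij.symm, hik.symm, mul_assoc]
    · by_cases hmj : m = j
      · subst hmj
        simp [h1, h2, hij.symm, hik.symm]
      · simp [h2, hmi, hmj]

end presentation

/-- For `n ≥ 1`, there is a group isomorphism from the presented group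
`⟨a_{ij} ∣ McCool relations⟩` onto the subgroup `PConj_n` of `Aut(F_n)` of
basis-conjugating automorphisms, sending `a_{ij} ↦ α_{ij}` (stated as: an injective
homomorphism to `Aut(F_n)` whose range is `PConj_n`). -/
theorem presentedGroup_iso_pconj (n : ℕ) (hn : 1 ≤ n)
    (a : ℕ → ℕ → MulAut (FreeGroup (Fin n)))
    (ha : ∀ i j, i < n → j < n → i ≠ j → IsAlpha n i j (a i j)) :
    ∃ φ : PresentedGroup (mcCoolRels n) →* MulAut (FreeGroup (Fin n)),
      Function.Injective φ ∧
      Set.range ⇑φ = PConjSet n ∧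
      (∀ (i j : Fin n) (h : i ≠ j),
        φ (PresentedGroup.of ⟨(i, j), h⟩) = a (i : ℕ) (j : ℕ)) := by
  have hx : ∀ i : Fin n, xg n i = FreeGroup.of i := fun i => by simp [xg]
  have hA : ∀ p : {p : Fin n × Fin n // p.1 ≠ p.2},
      IsMove (a (p.1.1 : ℕ) (p.1.2 : ℕ)) p.1.1 p.1.2 true := by
    rintro ⟨⟨i, j⟩, h⟩
    obtain ⟨h1, h2⟩ := ha i j i.2 j.2 (fun e => h (Fin.ext e))
    refine ⟨by simpa only [hx, letter_true] using h1, fun k hk => ?_⟩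
    simpa only [hx] using h2 k k.2 (fun e => hk (Fin.ext e))
  refine ⟨PresentedGroup.toGroup (lift_rel_eq_one _ hA), ?_⟩
  have hφ : IsRep (PresentedGroup.toGroup (lift_rel_eq_one _ hA)) := fun i j h => by
    rw [PresentedGroup.toGroup.of]
    exact hA ⟨(i, j), h⟩
  refine ⟨hφ.injective, ?_, fun i j h => PresentedGroup.toGroup.of _⟩
  ext α
  constructor
  · rintro ⟨g, rfl⟩
    choose w hw using hφ.isConj g
    exact ⟨w, hw⟩
  · rintro ⟨w, hw⟩
    exact exists_apply_eq hφ fun i => ⟨w i, hw i⟩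

end LoopBraidGroups
end
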